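/- If G is either a series-parallel graph, a chordless graph, or a planar graph of girth at least 7, then χ'_trans(G) ≤ 4. -/

import Mathlib

/-!
Any two proper `t`-edge-colorings of such a graph are linked by steps changing at most four color
classes, whatever `t` is. For `t ≤ 4` one step is enough (`eqv_of_le_four`), so let `t ≥ 5`. An edge
meeting fewer than `t` other edges always has a free color, so it may be deleted and a recoloring
sequence of the remaining edges lifts (`eqv_of_few_conflicts`). What is left is the case in which
every edge meets at least `t` others.

**Series-parallel and chordless graphs.** A graph without vertices of degree one or two contains
both a `K₄` minor and a cycle with a chord, as one sees from a longest path, so the graphs in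
question are 2-degenerate (`twoDeg_of_seriesParallel_or_chordless`). The induction on the number of
edges takes place among 2-degenerate multigraphs (`eqv_of_twoDeg`). If every edge meets at least `t`
others, then some vertex `v` of degree `t` has `t - 2` neighbors `w i` of degree two
(`exists_config`); let `o i` be the edge at `w i` other than `i`. The `t - 2` edges `I` from `v` to
the `w i` are deleted and two of the resulting pendant vertices are identified. This keeps the
multigraph 2-degenerate, and forces different colors on the two edges `o i0`, `o i1` at the new
vertex; by a Kempe exchange the two given colorings may be assumed to satisfy this as well
(`Config.exists_nonconstant`). Because the colors of the `o i` are not all equal, Hall's theorem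
extends the colorings of a step to `I` with no further color class changing (`Config.lift`), and
colorings agreeing off `I` are linked by transpositions and 3-cycles of colors on `I`
(`Config.eqv_of_agree`).

**Planar graphs of girth at least seven.** Planarity means here that there is no `K₅` and no `K₃,₃`
minor, and the one fact needed is an edge bound: `n ≥ 4` vertices spanning `m` edges and `t`
triangles satisfy `2 m + 8 ≤ 4 n + t` (`numD_le_of_planarIn`). In a minimal counterexample no
triangle and no four-cycle separates (`shortNonSep_of_minimal`), since the bound for the two sides
would add up to the bound for the whole. Contracting an edge `xy` shows that `xy` lies in at least
three pages, that is, triangles and chordless four-cycles; three pages that do not separate yield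
a forbidden minor (`ShortNonSep.not_three_pages`, `ShortNonSep.not_k23`). In particular a
triangle-free planar graph has `m ≤ 2 n - 4` and so a vertex of degree at most three. If every edge `ab` meets at least `t ≥ 5` others, then
`d(a) + d(b) ≥ t + 2 ≥ 7`, and each vertex of degree at most three can be contracted into a
neighbor of degree at least four; with girth at least seven the result is a triangle-free planar
graph of minimum degree at least four, which is impossible (`not_planar_of_heavy`). So there is
always an edge to delete (`eqv_of_planar`).
-/


open SimpleGraph Set

namespace EdgeTrans

universe u v

variable {V : Type*} {W : Type*}

/-- The degree of a vertex. -/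
noncomputable def deg (G : SimpleGraph V) (x : V) : ℕ :=
  (G.neighborSet x).ncard

/-- The maximum degree `Δ(G)`. -/
noncomputable def maxDeg (G : SimpleGraph V) : ℕ :=
  ⨆ x, deg G x

/-- A proper `t`-edge-coloring of `G`, using the colors `1, …, t`. -/
def IsProperEdgeColoring (G : SimpleGraph V) (t : ℕ) (f : Sym2 V → ℕ) : Prop :=
  (∀ e ∈ G.edgeSet, f e ∈ Finset.Icc 1 t) ∧
  ∀ e₁ ∈ G.edgeSet, ∀ e₂ ∈ G.edgeSet, e₁ ≠ e₂ → (∃ x, x ∈ e₁ ∧ x ∈ e₂) → f e₁ ≠ f e₂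

/-- The color class `M(f, j)`: the set of edges of `G` colored `j` by `f`. -/
def colorClass (G : SimpleGraph V) (f : Sym2 V → ℕ) (j : ℕ) : Set (Sym2 V) :=
  {e | e ∈ G.edgeSet ∧ f e = j}

/-- `f` and `g` differ by at most `n` color classes. -/
def DifferAtMost (G : SimpleGraph V) (n : ℕ) (f g : Sym2 V → ℕ) : Prop :=
  {j : ℕ | colorClass G f j ≠ colorClass G g j}.ncard ≤ n

/-- `f` and `g` are `n`-equivalent proper `t`-edge-colorings: one can be transformed into the
other by a sequence of proper `t`-edge-colorings in which consecutive colorings differ by at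
most `n` color classes. -/
def NEquiv (G : SimpleGraph V) (t n : ℕ) (f g : Sym2 V → ℕ) : Prop :=
  ∃ (k : ℕ) (F : ℕ → Sym2 V → ℕ), 1 ≤ k ∧ F 0 = f ∧ F k = g ∧
    (∀ i ≤ k, IsProperEdgeColoring G t (F i)) ∧
    ∀ i < k, DifferAtMost G n (F i) (F (i + 1))

/-- The chromatic index `χ'(G)`. -/
noncomputable def chromIdx (G : SimpleGraph V) : ℕ :=
  sInf {t | ∃ f, IsProperEdgeColoring G t f}

/-- The edge chromatic transformation index `χ'_trans(G)`: the minimum `n ≥ 2` such that any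
two proper `χ'(G)`-edge-colorings of `G` are `n`-equivalent. -/
noncomputable def transIdx (G : SimpleGraph V) : ℕ :=
  sInf {n | 2 ≤ n ∧ ∀ f g, IsProperEdgeColoring G (chromIdx G) f →
      IsProperEdgeColoring G (chromIdx G) g → NEquiv G (chromIdx G) n f g}

/-- `v` is a cutvertex of `G`: some two other vertices are connected in `G`, but every walk
between them passes through `v`. -/
def IsCutVertex (G : SimpleGraph V) (x : V) : Prop :=
  ∃ a b : V, a ≠ x ∧ b ≠ x ∧ G.Reachable a b ∧ ∀ p : G.Walk a b, x ∈ p.support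

/-- A block of `G`: a maximal connected subgraph without a cutvertex of the subgraph. -/
def IsBlock (G : SimpleGraph V) (B : G.Subgraph) : Prop :=
  B.coe.Connected ∧ (∀ x, ¬ IsCutVertex B.coe x) ∧
    ∀ B' : G.Subgraph, B ≤ B' → B'.coe.Connected →
      (∀ x, ¬ IsCutVertex B'.coe x) → B' = B

/-- Membership in the class `𝒜(q)`: every subgraph `H` of `G` with `Δ(H) ≤ q` has a proper
`q`-edge-coloring. -/
def MemA (q : ℕ) (G : SimpleGraph V) : Prop :=
  ∀ H : SimpleGraph V, H ≤ G → maxDeg H ≤ q → ∃ f, IsProperEdgeColoring H q f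

/-- `G` is `k`-degenerate: every (nonempty) subgraph of `G` contains a vertex of degree
at most `k` in the subgraph. -/
def Degenerate (k : ℕ) (G : SimpleGraph V) : Prop :=
  ∀ H : G.Subgraph, H.verts.Nonempty → ∃ x ∈ H.verts, (H.neighborSet x).ncard ≤ k

/-- `G` has `H` as a minor (via branch sets). -/
def HasMinor (G : SimpleGraph V) (H : SimpleGraph W) : Prop :=
  ∃ F : W → Set V,
    (∀ w, (G.induce (F w)).Connected) ∧
    (∀ w₁ w₂, w₁ ≠ w₂ → Disjoint (F w₁) (F w₂)) ∧
    (∀ w₁ w₂, H.Adj w₁ w₂ → ∃ v₁ ∈ F w₁, ∃ v₂ ∈ F w₂, G.Adj v₁ v₂)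

/-- Planarity, via Wagner's characterization: no `K₅` minor and no `K₃,₃` minor. -/
def Planar (G : SimpleGraph V) : Prop :=
  ¬ HasMinor G (completeGraph (Fin 5)) ∧
  ¬ HasMinor G (completeBipartiteGraph (Fin 3) (Fin 3))

/-- Series-parallel: no `K₄` minor. -/
def SeriesParallel (G : SimpleGraph V) : Prop :=
  ¬ HasMinor G (completeGraph (Fin 4))

/-- `G` is chordless: in every cycle, any two nonconsecutive vertices are non-adjacent,
i.e. every edge of `G` joining two vertices of a cycle is an edge of the cycle. -/
def Chordless (G : SimpleGraph V) : Prop :=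
  ∀ (x : V) (c : G.Walk x x), c.IsCycle →
    ∀ a ∈ c.support, ∀ b ∈ c.support, G.Adj a b → s(a, b) ∈ c.edges

/-- The wheel graph with hub `none` and cycle `ZMod n`. -/
def wheelGraph (n : ℕ) : SimpleGraph (Option (ZMod n)) :=
  SimpleGraph.fromRel (fun a b =>
    a = none ∨ ∃ i : ZMod n, a = some i ∧ b = some (i + 1))

/-- `G` is a wheel graph. -/
def IsWheel (G : SimpleGraph V) : Prop :=
  ∃ n : ℕ, 3 ≤ n ∧ Nonempty (G ≃g wheelGraph n)

/-- `G` is a Halin graph: `G` is planar and is the edge-disjoint union of a spanning tree `T`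
on at least four vertices having no vertex of degree two, and a cycle through exactly the
leaves of `T`. -/
def IsHalin (G : SimpleGraph V) : Prop :=
  Planar G ∧ 4 ≤ Nat.card V ∧
  ∃ T : SimpleGraph V, T ≤ G ∧ T.IsTree ∧ (∀ x : V, deg T x ≠ 2) ∧
    ∃ (x₀ : V) (c : G.Walk x₀ x₀), c.IsCycle ∧
      (∀ e : Sym2 V, e ∈ c.edges ↔ e ∈ G.edgeSet \ T.edgeSet) ∧
      (∀ u : V, u ∈ c.support ↔ deg T u = 1)

/-- The subgraph `G(f,g,t)`: the (spanning) subgraph of `G` with edge set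
`M(f,t) △ M(g,t)`. -/
def diffGraph (G : SimpleGraph V) (t : ℕ) (f g : Sym2 V → ℕ) : SimpleGraph V :=
  SimpleGraph.fromEdgeSet (symmDiff (colorClass G f t) (colorClass G g t))

/-- The walk `p` (a path or a cycle) is an entire connected component of its ambient graph:
every edge incident with a vertex of `p` is an edge of `p`. -/
def IsComponentWalk {G : SimpleGraph V} {u x : V} (p : G.Walk u x) : Prop :=
  ∀ a ∈ p.support, ∀ b, G.Adj a b → s(a, b) ∈ p.edges

/-- The color `i` is missing at `x` under `f`. -/
def MissingAt (G : SimpleGraph V) (f : Sym2 V → ℕ) (i : ℕ) (x : V) : Prop :=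
  ∀ e ∈ G.edgeSet, x ∈ e → f e ≠ i

/-- The path `p` is alternately colored with colors `a` and `b` under `f`
(an `(a,b)`-colored path). -/
def AltColored (f : Sym2 V → ℕ) (a b : ℕ) {G : SimpleGraph V} {u x : V}
    (p : G.Walk u x) : Prop :=
  (∀ i : Fin p.edges.length, f (p.edges.get i) = if Even i.1 then a else b) ∨
  (∀ i : Fin p.edges.length, f (p.edges.get i) = if Even i.1 then b else a)

/-- The path `p` is `t`-alternating: of any two consecutive edges, one is colored `t`. -/
def AltPath (f : Sym2 V → ℕ) (t : ℕ) {G : SimpleGraph V} {u x : V}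
    (p : G.Walk u x) : Prop :=
  ∀ (i : ℕ) (h : i + 1 < p.edges.length),
    f (p.edges.get ⟨i, Nat.lt_of_succ_lt h⟩) = t ∨ f (p.edges.get ⟨i + 1, h⟩) = t

/-- The cycle `c` is `t`-alternating: of any two (cyclically) consecutive edges, one is
colored `t`. -/
def IsAltCycle (f : Sym2 V → ℕ) (t : ℕ) {G : SimpleGraph V} {u : V}
    (c : G.Walk u u) : Prop :=
  ∀ i : Fin c.edges.length,
    f (c.edges.get i) = t ∨
    f (c.edges.get ⟨(i.1 + 1) % c.edges.length, Nat.mod_lt _ i.pos⟩) = t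

/-- `G` is 2-connected. -/
def TwoConnected (G : SimpleGraph V) : Prop :=
  G.Connected ∧ 3 ≤ Nat.card V ∧ ∀ x, ¬ IsCutVertex G x

/-- The union of the cycle `c` and the ears `P j` for `j < i`, as a subgraph. -/
noncomputable def earPrefix {G : SimpleGraph V} {v₀ : V} (c : G.Walk v₀ v₀) {n : ℕ}
    {x y : Fin n → V} (P : ∀ i : Fin n, G.Walk (x i) (y i)) (i : ℕ) : G.Subgraph :=
  c.toSubgraph ⊔ ⨆ j : Fin n, ⨆ _ : (j : ℕ) < i, (P j).toSubgraph

/-- `c, P 0, …, P (n-1)` is a `t`-alternating ear decomposition with respect to the cycle `c`: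
`c` is a `t`-alternating cycle, and each `P i` is a `(cᵢ, t)`-colored path (`cᵢ ≤ t - 1`) which
is an ear of `c ∪ P 0 ∪ … ∪ P i`, i.e. its endpoints lie in the previous part and its internal
vertices have degree 2 in `c ∪ P 0 ∪ … ∪ P i`. -/
def IsEarDecomp (G : SimpleGraph V) (f : Sym2 V → ℕ) (t : ℕ) {v₀ : V} (c : G.Walk v₀ v₀)
    (n : ℕ) (x y : Fin n → V) (P : ∀ i : Fin n, G.Walk (x i) (y i)) : Prop :=
  c.IsCycle ∧ IsAltCycle f t c ∧
  ∀ i : Fin n,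
    (P i).IsPath ∧ 1 ≤ (P i).length ∧
    (∃ ci : ℕ, ci ≤ t - 1 ∧ AltColored f ci t (P i)) ∧
    x i ∈ (earPrefix c P (i : ℕ)).verts ∧ y i ∈ (earPrefix c P (i : ℕ)).verts ∧
    ∀ a ∈ (P i).support, a ≠ x i → a ≠ y i →
      ((earPrefix c P ((i : ℕ) + 1)).neighborSet a).ncard = 2

/-- The line graph of `G`. -/
def lineGr (G : SimpleGraph V) : SimpleGraph G.edgeSet :=
  SimpleGraph.fromRel (fun e₁ e₂ => ∃ x, x ∈ (e₁ : Sym2 V) ∧ x ∈ (e₂ : Sym2 V))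

/-- The clique number (in `ℕ∞`). -/
noncomputable def cliqueNumE (G : SimpleGraph V) : ℕ∞ :=
  sSup {n : ℕ∞ | ∃ (m : ℕ) (s : Finset V), n = (m : ℕ∞) ∧ G.IsNClique m s}

/-- `G` is a perfect graph: every induced subgraph has chromatic number equal to its
clique number. -/
def IsPerfect (G : SimpleGraph V) : Prop :=
  ∀ s : Set V, (G.induce s).chromaticNumber = cliqueNumE (G.induce s)

/-- A partition of the vertex set of `G` into `n` cliques, each of size `sz`. -/
def IsCliquePartition (G : SimpleGraph V) (n sz : ℕ) (P : Set (Set V)) : Prop :=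
  P.ncard = n ∧ (∀ s ∈ P, G.IsClique s ∧ s.ncard = sz) ∧
  ⋃₀ P = Set.univ ∧ P.Pairwise fun s₁ s₂ => Disjoint s₁ s₂

/-- A proper vertex `n`-coloring of `G`, viewed as a partition of the vertex set into `n`
independent sets (color classes). -/
def IsIndepPartition (G : SimpleGraph V) (n : ℕ) (P : Set (Set V)) : Prop :=
  P.ncard = n ∧ (∀ s ∈ P, ∀ a ∈ s, ∀ b ∈ s, ¬ G.Adj a b) ∧
  ⋃₀ P = Set.univ ∧ P.Pairwise fun s₁ s₂ => Disjoint s₁ s₂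

/-- The graph `H(p,n)`: vertex classes `V_1, …, V_{2n}` of size `p` (indexed here by
`ZMod (2n)`), with two vertices adjacent iff they lie in the same class or in (cyclically)
consecutive classes. -/
def Hgraph (p n : ℕ) : SimpleGraph (ZMod (2 * n) × Fin p) :=
  SimpleGraph.fromRel (fun a b => a.1 = b.1 ∨ a.1 + 1 = b.1)

/-- The clique partition `{C_1, …, C_n}` of `H(p,n)`, `C_i = V_{2i-1} ∪ V_{2i}`. -/
def Cpart (p n : ℕ) : Set (Set (ZMod (2 * n) × Fin p)) :=
  {s | ∃ i : Fin n, s = {x | x.1 = ((2 * (i : ℕ) : ℕ) : ZMod (2 * n)) ∨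
      x.1 = ((2 * (i : ℕ) + 1 : ℕ) : ZMod (2 * n))}}

/-- The clique partition `{R_1, …, R_n}` of `H(p,n)`, `R_1 = V_{2n} ∪ V_1` and
`R_i = V_{2i-2} ∪ V_{2i-1}`. -/
def Rpart (p n : ℕ) : Set (Set (ZMod (2 * n) × Fin p)) :=
  {s | ∃ i : Fin n, s = {x | x.1 = ((2 * (i : ℕ) : ℕ) : ZMod (2 * n)) - 1 ∨
      x.1 = ((2 * (i : ℕ) : ℕ) : ZMod (2 * n))}}

/-- A multigraph on vertices `α` with edges `β`: each edge has two distinct endpoints. -/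
structure Multigraph (α : Type u) (β : Type v) where
  ends : β → Sym2 α
  not_isDiag : ∀ e, ¬ (ends e).IsDiag

namespace Multigraph

variable {α : Type u} {β : Type v}

/-- A proper `t`-edge-coloring of a multigraph, with colors `1, …, t`. -/
def IsProper (G : Multigraph α β) (t : ℕ) (f : β → ℕ) : Prop :=
  (∀ e, f e ∈ Finset.Icc 1 t) ∧
  ∀ e₁ e₂ : β, e₁ ≠ e₂ → (∃ x, x ∈ G.ends e₁ ∧ x ∈ G.ends e₂) → f e₁ ≠ f e₂

/-- The color class `M(f,j)` of a multigraph edge coloring. -/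
def mColorClass (f : β → ℕ) (j : ℕ) : Set β := {e | f e = j}

/-- `f` and `g` differ by at most `n` color classes. -/
def MDifferAtMost (n : ℕ) (f g : β → ℕ) : Prop :=
  {j : ℕ | mColorClass f j ≠ mColorClass g j}.ncard ≤ n

/-- `n`-equivalence of proper `t`-edge-colorings of a multigraph. -/
def MNEquiv (G : Multigraph α β) (t n : ℕ) (f g : β → ℕ) : Prop :=
  ∃ (k : ℕ) (F : ℕ → β → ℕ), 1 ≤ k ∧ F 0 = f ∧ F k = g ∧
    (∀ i ≤ k, G.IsProper t (F i)) ∧ ∀ i < k, MDifferAtMost n (F i) (F (i + 1))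

/-- The chromatic index of a multigraph. -/
noncomputable def mChromIdx (G : Multigraph α β) : ℕ :=
  sInf {t | ∃ f, G.IsProper t f}

/-- The edge chromatic transformation index of a multigraph. -/
noncomputable def mTransIdx (G : Multigraph α β) : ℕ :=
  sInf {n | 2 ≤ n ∧ ∀ f g, G.IsProper G.mChromIdx f → G.IsProper G.mChromIdx g →
      G.MNEquiv G.mChromIdx n f g}

/-- The degree of a vertex in a multigraph. -/
noncomputable def mDeg (G : Multigraph α β) (x : α) : ℕ := {e | x ∈ G.ends e}.ncard

/-- The underlying simple graph of a multigraph. -/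
def toSimple (G : Multigraph α β) : SimpleGraph α :=
  SimpleGraph.fromEdgeSet (Set.range G.ends)

end Multigraph

/-! ### Recoloring in a multigraph -/

section Recolor

open scoped Classical

/-- Two edges of the multigraph with incidence map `ends` share an endpoint. -/
def Meet {ι α : Type*} (ends : ι → Sym2 α) (e₁ e₂ : ι) : Prop :=
  ∃ x, x ∈ ends e₁ ∧ x ∈ ends e₂

/-- `f` is a proper coloring, with colors `1, …, t`, of the edges in `E` of the multigraph whose
edge `e` has the pair of endpoints `ends e`. Values of `f` off `E` are irrelevant. -/
def ProperOn {ι α : Type*} (ends : ι → Sym2 α) (E : Finset ι) (t : ℕ) (f : ι → ℕ) : Prop :=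
  (∀ e ∈ E, f e ∈ Finset.Icc 1 t) ∧
  ∀ e₁ ∈ E, ∀ e₂ ∈ E, e₁ ≠ e₂ → Meet ends e₁ e₂ → f e₁ ≠ f e₂

/-- The proper colorings `f` and `g` differ only inside the color classes in `T`. -/
def StepOn {ι α : Type*} (ends : ι → Sym2 α) (E : Finset ι) (t : ℕ) (T : Finset ℕ)
    (f g : ι → ℕ) : Prop :=
  ProperOn ends E t f ∧ ProperOn ends E t g ∧ ∀ e ∈ E, f e = g e ∨ (f e ∈ T ∧ g e ∈ T)

/-- A single recoloring step, in which at most four color classes change. -/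
def Step {ι α : Type*} (ends : ι → Sym2 α) (E : Finset ι) (t : ℕ) (f g : ι → ℕ) : Prop :=
  ∃ T : Finset ℕ, T ⊆ Finset.Icc 1 t ∧ T.card ≤ 4 ∧ StepOn ends E t T f g

/-- Reachability by recoloring steps. -/
def Eqv {ι α : Type*} (ends : ι → Sym2 α) (E : Finset ι) (t : ℕ) (f g : ι → ℕ) : Prop :=
  Relation.ReflTransGen (Step ends E t) f g

variable {ι α : Type*} {ends : ι → Sym2 α} {E : Finset ι} {t : ℕ}

lemma Meet.symm {e e' : ι} (h : Meet ends e e') : Meet ends e' e := by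
  obtain ⟨x, h1, h2⟩ := h; exact ⟨x, h2, h1⟩

lemma ProperOn.mono {F : Finset ι} (hF : F ⊆ E) {f : ι → ℕ} (h : ProperOn ends E t f) :
    ProperOn ends F t f :=
  ⟨fun e he => h.1 e (hF he), fun e he e' he' => h.2 e (hF he) e' (hF he')⟩

lemma ProperOn.congr {f g : ι → ℕ} (h : ProperOn ends E t f) (hfg : ∀ e ∈ E, f e = g e) :
    ProperOn ends E t g :=
  ⟨fun e he => hfg e he ▸ h.1 e he,
   fun e he e' he' hne hm => hfg e he ▸ hfg e' he' ▸ h.2 e he e' he' hne hm⟩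

lemma StepOn.symm {T : Finset ℕ} {f g : ι → ℕ} (h : StepOn ends E t T f g) :
    StepOn ends E t T g f :=
  ⟨h.2.1, h.1, fun e he => (h.2.2 e he).imp Eq.symm And.symm⟩

lemma Step.symm {f g : ι → ℕ} (h : Step ends E t f g) : Step ends E t g f := by
  obtain ⟨T, h1, h2, h3⟩ := h; exact ⟨T, h1, h2, h3.symm⟩

lemma Eqv.symm {f g : ι → ℕ} (h : Eqv ends E t f g) : Eqv ends E t g f := by
  induction h with
  | refl => exact Relation.ReflTransGen.refl
  | tail _ h2 ih => exact Relation.ReflTransGen.head h2.symm ih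

lemma Eqv.trans {f g h : ι → ℕ} (h1 : Eqv ends E t f g) (h2 : Eqv ends E t g h) :
    Eqv ends E t f h := Relation.ReflTransGen.trans h1 h2

lemma Step.eqv {f g : ι → ℕ} (h : Step ends E t f g) : Eqv ends E t f g :=
  Relation.ReflTransGen.single h

lemma Eqv.proper {f g : ι → ℕ} (hf : ProperOn ends E t f) (h : Eqv ends E t f g) :
    ProperOn ends E t g := by
  induction h with
  | refl => exact hf
  | tail _ h2 ih => exact h2.choose_spec.2.2.2.1

lemma eqv_of_le_four (ht : t ≤ 4) {f g : ι → ℕ} (hf : ProperOn ends E t f)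
    (hg : ProperOn ends E t g) : Eqv ends E t f g :=
  Step.eqv ⟨Finset.Icc 1 t, Finset.Subset.refl _, by simpa using ht, hf, hg,
    fun e he => Or.inr ⟨hf.1 e he, hg.1 e he⟩⟩

/-- The color `a` can be used on the edge `e` when the other edges of `E` are colored by `h`. -/
def Free (ends : ι → Sym2 α) (E : Finset ι) (t : ℕ) (e : ι) (h : ι → ℕ) (a : ℕ) : Prop :=
  a ∈ Finset.Icc 1 t ∧ ∀ e' ∈ E, e' ≠ e → Meet ends e' e → h e' ≠ a

lemma ProperOn.update {e : ι} {h : ι → ℕ} {a : ℕ}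
    (hh : ProperOn ends (E.erase e) t h) (ha : Free ends E t e h a) :
    ProperOn ends E t (Function.update h e a) := by
  constructor
  · intro e' he'
    by_cases hee : e' = e
    · subst hee; simpa using ha.1
    · rw [Function.update_of_ne hee]; exact hh.1 e' (Finset.mem_erase.2 ⟨hee, he'⟩)
  · intro e1 h1 e2 h2 hne hm
    by_cases h1e : e1 = e
    · subst h1e
      rw [Function.update_self, Function.update_of_ne hne.symm]
      exact (ha.2 e2 h2 hne.symm hm.symm).symm
    · by_cases h2e : e2 = e
      · subst h2e
        rw [Function.update_self, Function.update_of_ne hne]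
        exact ha.2 e1 h1 hne hm
      · rw [Function.update_of_ne h1e, Function.update_of_ne h2e]
        exact hh.2 e1 (Finset.mem_erase.2 ⟨h1e, h1⟩) e2 (Finset.mem_erase.2 ⟨h2e, h2⟩) hne hm

lemma step_update {e : ι} {h h' : ι → ℕ} {a b : ℕ} {T : Finset ℕ}
    (hT : T ⊆ Finset.Icc 1 t) (hT4 : T.card ≤ 4)
    (hs : StepOn ends (E.erase e) t T h h') (ha : Free ends E t e h a)
    (hb : Free ends E t e h' b) (hab : a = b ∨ (a ∈ T ∧ b ∈ T)) :
    Step ends E t (Function.update h e a) (Function.update h' e b) := by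
  refine ⟨T, hT, hT4, hs.1.update ha, hs.2.1.update hb, fun e' he' => ?_⟩
  by_cases hee : e' = e
  · subst hee; simpa using hab
  · rw [Function.update_of_ne hee, Function.update_of_ne hee]
    exact hs.2.2 e' (Finset.mem_erase.2 ⟨hee, he'⟩)

lemma step_update_self {e : ι} {h : ι → ℕ} {a b : ℕ}
    (hs : ProperOn ends (E.erase e) t h) (ha : Free ends E t e h a)
    (hb : Free ends E t e h b) :
    Step ends E t (Function.update h e a) (Function.update h e b) := by
  refine step_update (T := {a, b}) ?_ ?_ ⟨hs, hs, fun _ _ => Or.inl rfl⟩ ha hb (by simp)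
  · intro x hx; simp only [Finset.mem_insert, Finset.mem_singleton] at hx
    rcases hx with rfl | rfl
    exacts [ha.1, hb.1]
  · exact (Finset.card_le_two).trans (by norm_num)

lemma StepOn.free {e : ι} {h h' : ι → ℕ} {a : ℕ} {T : Finset ℕ}
    (hs : StepOn ends (E.erase e) t T h h') (ha : Free ends E t e h a) (haT : a ∉ T) :
    Free ends E t e h' a := by
  refine ⟨ha.1, fun e' he' hne hm heq => ?_⟩
  rcases hs.2.2 e' (Finset.mem_erase.2 ⟨hne, he'⟩) with h1 | h1
  · exact ha.2 e' he' hne hm (h1.trans heq)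
  · exact haT (heq ▸ h1.2)

/-- An edge meeting fewer than `t` other edges never obstructs recoloring: it always has a free
color, so a recoloring sequence of the remaining edges can be lifted. -/
lemma eqv_of_few_conflicts {e : ι}
    (hc : (E.filter (fun e' => e' ≠ e ∧ Meet ends e' e)).card < t)
    (H : ∀ f g, ProperOn ends (E.erase e) t f → ProperOn ends (E.erase e) t g →
      Eqv ends (E.erase e) t f g) {f g : ι → ℕ} (he : e ∈ E)
    (hf : ProperOn ends E t f) (hg : ProperOn ends E t g) : Eqv ends E t f g := by
  have hex : ∀ h : ι → ℕ, ∃ a, Free ends E t e h a := by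
    intro h
    have : (((E.filter (fun e' => e' ≠ e ∧ Meet ends e' e)).image h)).card
        < (Finset.Icc 1 t).card := by
      simpa using Finset.card_image_le.trans_lt hc
    obtain ⟨a, ha, hna⟩ := Finset.exists_mem_notMem_of_card_lt_card this
    refine ⟨a, ha, fun e' he' hne hm heq => hna ?_⟩
    exact Finset.mem_image.2 ⟨e', Finset.mem_filter.2 ⟨he', hne, hm⟩, heq⟩
  have hfree : ∀ h, ProperOn ends E t h → Free ends E t e h (h e) := fun h hh =>
    ⟨hh.1 e he, fun e' he' hne hm => hh.2 e' he' e he hne hm⟩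
  have key : ∀ h, Eqv ends (E.erase e) t f h → ∀ b, Free ends E t e h b →
      Eqv ends E t f (Function.update h e b) := by
    intro h hh
    induction hh with
    | refl =>
      intro b hb
      have := step_update_self (hf.mono (Finset.erase_subset e E)) (hfree f hf) hb
      rw [Function.update_eq_self] at this
      exact this.eqv
    | @tail h h' _ hst ih =>
      intro b hb
      obtain ⟨a, ha⟩ := hex h
      refine (ih a ha).trans ?_
      obtain ⟨T, hT, hT4, hs⟩ := hst
      by_cases haT : a ∈ T
      · by_cases hbT : b ∈ T
        · exact (step_update hT hT4 hs ha hb (Or.inr ⟨haT, hbT⟩)).eqv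
        · have hb' := hs.symm.free hb hbT
          exact (step_update_self hs.1 ha hb').eqv.trans
            (step_update hT hT4 hs hb' hb (Or.inl rfl)).eqv
      · have ha' := hs.free ha haT
        exact (step_update hT hT4 hs ha ha' (Or.inl rfl)).eqv.trans
          (step_update_self hs.2.1 ha' hb).eqv
  have := key g (H f g (hf.mono (Finset.erase_subset e E)) (hg.mono (Finset.erase_subset e E)))
    (g e) (hfree g hg)
  rwa [Function.update_eq_self] at this

/-- A vertex `v` of degree `t` together with `t - 2` of its edges, collected in `I`: the other end
`w i` of each `i ∈ I` has degree two, its second edge being `o i`. -/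
structure Config {ι α : Type*} (ends : ι → Sym2 α) (E : Finset ι) (t : ℕ) (v : α) (I : Finset ι)
    (w : ι → α) (o : ι → ι) : Prop where
  sub : I ⊆ E
  card : I.card + 2 = t
  deg : (E.filter (fun e => v ∈ ends e)).card = t
  hends : ∀ i ∈ I, ends i = s(v, w i)
  wne : ∀ i ∈ I, w i ≠ v
  winj : ∀ i ∈ I, ∀ j ∈ I, w i = w j → i = j
  oE : ∀ i ∈ I, o i ∈ E
  ov : ∀ i ∈ I, v ∉ ends (o i)
  ow : ∀ i ∈ I, w i ∈ ends (o i)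
  only : ∀ i ∈ I, ∀ e ∈ E, w i ∈ ends e → e = i ∨ e = o i
  oinj : ∀ i ∈ I, ∀ j ∈ I, o i = o j → i = j

/-- The colors of `1, …, t` not used by `h` at `v` on the edges in `E''`. -/
noncomputable def avail {ι α : Type*} (ends : ι → Sym2 α) (E'' : Finset ι) (t : ℕ) (v : α)
    (h : ι → ℕ) : Finset ℕ :=
  Finset.Icc 1 t \ ((E''.filter (fun e => v ∈ ends e)).image h)

lemma mem_avail {E'' : Finset ι} {v : α} {h : ι → ℕ} {q : ℕ} :
    q ∈ avail ends E'' t v h ↔ q ∈ Finset.Icc 1 t ∧ ∀ e ∈ E'', v ∈ ends e → h e ≠ q := by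
  simp only [avail, Finset.mem_sdiff, Finset.mem_image, Finset.mem_filter]
  constructor
  · rintro ⟨h1, h2⟩
    exact ⟨h1, fun e he hv hq => h2 ⟨e, ⟨he, hv⟩, hq⟩⟩
  · rintro ⟨h1, h2⟩
    exact ⟨h1, by rintro ⟨e, ⟨he, hv⟩, hq⟩; exact h2 e he hv hq⟩

section
variable {v : α} {I : Finset ι} {w : ι → α} {o : ι → ι}

lemma Config.vmem (hc : Config ends E t v I w o) {i : ι} (hi : i ∈ I) : v ∈ ends i := by
  rw [hc.hends i hi]; simp

lemma Config.o_mem (hc : Config ends E t v I w o) {i : ι} (hi : i ∈ I) : o i ∈ E \ I :=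
  Finset.mem_sdiff.2 ⟨hc.oE i hi, fun h => hc.ov i hi (hc.vmem h)⟩

lemma Config.card_avail (hc : Config ends E t v I w o) {h : ι → ℕ}
    (hh : ProperOn ends (E \ I) t h) : (avail ends (E \ I) t v h).card = I.card := by
  have h1 : (E.filter (fun e => v ∈ ends e)) = I ∪ (E \ I).filter (fun e => v ∈ ends e) := by
    ext e
    simp only [Finset.mem_filter, Finset.mem_union, Finset.mem_sdiff]
    constructor
    · rintro ⟨h1, h2⟩
      by_cases heI : e ∈ I
      · exact Or.inl heI
      · exact Or.inr ⟨⟨h1, heI⟩, h2⟩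
    · rintro (h1 | h1)
      · exact ⟨hc.sub h1, hc.vmem h1⟩
      · exact ⟨h1.1.1, h1.2⟩
  have h2 : Disjoint I ((E \ I).filter (fun e => v ∈ ends e)) := by
    rw [Finset.disjoint_left]; intro e he h; simp [he] at h
  have h3 := hc.deg
  rw [h1, Finset.card_union_of_disjoint h2] at h3
  have h4 : (((E \ I).filter (fun e => v ∈ ends e)).image h).card
      = ((E \ I).filter (fun e => v ∈ ends e)).card := by
    refine Finset.card_image_of_injOn ?_
    intro e he e' he' heq
    simp only [Finset.coe_filter, Set.mem_ofPred_eq] at he he'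
    by_contra hne
    exact hh.2 e he.1 e' he'.1 hne ⟨v, he.2, he'.2⟩ heq
  have h5 : (((E \ I).filter (fun e => v ∈ ends e)).image h) ⊆ Finset.Icc 1 t := by
    intro q hq
    obtain ⟨e, he, rfl⟩ := Finset.mem_image.1 hq
    exact hh.1 e (Finset.mem_filter.1 he).1
  have h6 := hc.card
  rw [avail, Finset.card_sdiff_of_subset h5, h4]
  simp only [Nat.card_Icc]
  omega

lemma Config.extend (hc : Config ends E t v I w o) {f : ι → ℕ}
    (hh : ProperOn ends (E \ I) t f) (hS : ∀ i ∈ I, f i ∈ avail ends (E \ I) t v f)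
    (hinj : ∀ i ∈ I, ∀ j ∈ I, f i = f j → i = j) (ho : ∀ i ∈ I, f i ≠ f (o i)) :
    ProperOn ends E t f := by
  have key : ∀ i ∈ I, ∀ e ∈ E, e ∉ I → Meet ends i e → f i ≠ f e := by
    rintro i hi e he heI ⟨x, hx1, hx2⟩
    rw [hc.hends i hi, Sym2.mem_iff] at hx1
    rcases hx1 with rfl | rfl
    · exact ((mem_avail.1 (hS i hi)).2 e (Finset.mem_sdiff.2 ⟨he, heI⟩) hx2).symm
    · rcases hc.only i hi e he hx2 with rfl | rfl
      · exact absurd hi heI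
      · exact ho i hi
  constructor
  · intro e he
    by_cases heI : e ∈ I
    · exact (mem_avail.1 (hS e heI)).1
    · exact hh.1 e (Finset.mem_sdiff.2 ⟨he, heI⟩)
  · intro e he e' he' hne hm
    by_cases heI : e ∈ I <;> by_cases heI' : e' ∈ I
    · exact fun h => hne (hinj e heI e' heI' h)
    · exact key e heI e' he' heI' hm
    · exact (key e' heI' e he heI hm.symm).symm
    · exact hh.2 e (Finset.mem_sdiff.2 ⟨he, heI⟩) e' (Finset.mem_sdiff.2 ⟨he', heI'⟩) hne hm

lemma Config.f_avail (hc : Config ends E t v I w o) {f : ι → ℕ}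
    (hf : ProperOn ends E t f) : ∀ i ∈ I, f i ∈ avail ends (E \ I) t v f := by
  intro i hi
  refine mem_avail.2 ⟨hf.1 i (hc.sub hi), fun e he hv => ?_⟩
  obtain ⟨h1, h2⟩ := Finset.mem_sdiff.1 he
  exact hf.2 e h1 i (hc.sub hi) (fun h => h2 (h ▸ hi)) ⟨v, hv, hc.vmem hi⟩

lemma Config.f_inj (hc : Config ends E t v I w o) {f : ι → ℕ}
    (hf : ProperOn ends E t f) : ∀ i ∈ I, ∀ j ∈ I, f i = f j → i = j := by
  intro i hi j hj heq
  by_contra hne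
  exact hf.2 i (hc.sub hi) j (hc.sub hj) hne ⟨v, hc.vmem hi, hc.vmem hj⟩ heq

lemma Config.f_o (hc : Config ends E t v I w o) {f : ι → ℕ}
    (hf : ProperOn ends E t f) : ∀ i ∈ I, f i ≠ f (o i) := by
  intro i hi
  refine hf.2 i (hc.sub hi) (o i) (hc.oE i hi) ?_ ⟨w i, ?_, hc.ow i hi⟩
  · intro h
    exact (Finset.mem_sdiff.1 (hc.o_mem hi)).2 (h ▸ hi)
  · rw [hc.hends i hi]; simp

lemma avail_congr {E'' : Finset ι} {f g : ι → ℕ} (h : ∀ e ∈ E'', f e = g e) :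
    avail ends E'' t v f = avail ends E'' t v g := by
  ext q
  simp only [mem_avail]
  refine and_congr_right fun _ => forall_congr' fun e => forall_congr' fun he => ?_
  rw [h e he]

lemma Config.f_surj (hc : Config ends E t v I w o) {f : ι → ℕ}
    (hf : ProperOn ends E t f) : ∀ q ∈ avail ends (E \ I) t v f, ∃ i ∈ I, f i = q := by
  have h1 : I.image f = avail ends (E \ I) t v f := by
    refine Finset.eq_of_subset_of_card_le ?_ ?_
    · intro q hq
      obtain ⟨i, hi, rfl⟩ := Finset.mem_image.1 hq
      exact hc.f_avail hf i hi
    · rw [hc.card_avail (hf.mono Finset.sdiff_subset),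
        Finset.card_image_of_injOn (fun i hi j hj => hc.f_inj hf i hi j hj)]
  intro q hq
  rw [← h1] at hq
  simpa using hq

/-- Permuting the colors of the edges in `I` among themselves. -/
lemma Config.step_perm (hc : Config ends E t v I w o) {f : ι → ℕ}
    (hf : ProperOn ends E t f) (τ : Equiv.Perm ι) (hτ : ∀ i, i ∈ I → τ i ∈ I)
    (ho : ∀ i ∈ I, f (τ i) ≠ f (o i)) {T : Finset ℕ} (hT4 : T.card ≤ 4)
    (hT : T ⊆ Finset.Icc 1 t)
    (hTI : ∀ i ∈ I, f (τ i) = f i ∨ (f i ∈ T ∧ f (τ i) ∈ T)) :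
    Step ends E t f (fun e => if e ∈ I then f (τ e) else f e) := by
  set g : ι → ℕ := fun e => if e ∈ I then f (τ e) else f e with hg
  have hgI : ∀ i ∈ I, g i = f (τ i) := fun i hi => by simp [hg, hi]
  have hgE : ∀ e ∈ E \ I, f e = g e := fun e he => by simp [hg, (Finset.mem_sdiff.1 he).2]
  refine ⟨T, hT, hT4, hf, ?_, ?_⟩
  · refine hc.extend ((hf.mono Finset.sdiff_subset).congr hgE) ?_ ?_ ?_
    · intro i hi
      rw [hgI i hi, ← avail_congr hgE]
      exact hc.f_avail hf _ (hτ i hi)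
    · intro i hi j hj heq
      rw [hgI i hi, hgI j hj] at heq
      exact τ.injective (hc.f_inj hf _ (hτ i hi) _ (hτ j hj) heq)
    · intro i hi
      rw [hgI i hi, ← hgE _ (hc.o_mem hi)]
      exact ho i hi
  · intro e he
    by_cases heI : e ∈ I
    · rw [hgI e heI]
      exact (hTI e heI).imp Eq.symm id
    · exact Or.inl (hgE e (Finset.mem_sdiff.2 ⟨he, heI⟩))

/-- Two proper colorings which agree off `I` are related by transpositions and 3-cycles of the
colors on `I`. -/
lemma Config.eqv_of_agree (hc : Config ends E t v I w o) {g : ι → ℕ}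
    (hg : ProperOn ends E t g) : ∀ (n : ℕ) (f : ι → ℕ), ProperOn ends E t f →
    (∀ e ∈ E \ I, f e = g e) → (I.filter (fun i => f i ≠ g i)).card ≤ n →
    Eqv ends E t f g := by
  intro n
  induction n with
  | zero =>
    intro f hf hfg hn
    refine Step.eqv ⟨∅, by simp, by simp, hf, hg, fun e he => Or.inl ?_⟩
    by_cases heI : e ∈ I
    · by_contra hne
      have : e ∈ I.filter (fun i => f i ≠ g i) := Finset.mem_filter.2 ⟨heI, hne⟩
      rw [Finset.card_eq_zero.1 (Nat.le_zero.1 hn)] at this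
      simp at this
    · exact hfg e (Finset.mem_sdiff.2 ⟨he, heI⟩)
  | succ n ih =>
    intro f hf hfg hn
    by_cases hall : ∀ i ∈ I, f i = g i
    · refine ih f hf hfg ?_
      rw [Finset.filter_false_of_mem (fun i hi => not_not.2 (hall i hi))]; simp
    push Not at hall
    obtain ⟨i, hi, hne⟩ := hall
    have hav := avail_congr (ends := ends) (t := t) (v := v) hfg
    obtain ⟨j, hj, hjs⟩ := hc.f_surj hf (g i) (hav ▸ hc.f_avail hg i hi)
    have hji : j ≠ i := fun h => hne (by rw [← hjs, h])
    have hgj : f j ≠ g j := fun h => hji (hc.f_inj hg j hj i hi (h.symm.trans hjs))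
    -- it suffices to permute colors so that `i` becomes correct and only wrong edges move
    have fin : ∀ (τ : Equiv.Perm ι), (∀ i, i ∈ I → τ i ∈ I) →
        (∀ l ∈ I, f (τ l) ≠ f (o l)) →
        (∀ l ∈ I, f l = g l → τ l = l) → f (τ i) = g i →
        (∃ T : Finset ℕ, T.card ≤ 4 ∧ T ⊆ Finset.Icc 1 t ∧
          ∀ l ∈ I, f (τ l) = f l ∨ (f l ∈ T ∧ f (τ l) ∈ T)) → Eqv ends E t f g := by
      rintro τ h1 h2 h3 h4 ⟨T, hT4, hT, hTI⟩
      have hst := hc.step_perm hf τ h1 h2 hT4 hT hTI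
      refine hst.eqv.trans (ih _ (hst.eqv.proper hf) ?_ ?_)
      · intro e he
        simp only [(Finset.mem_sdiff.1 he).2, if_false]
        exact hfg e he
      · refine Nat.le_of_lt_succ (lt_of_lt_of_le (Finset.card_lt_card ?_) hn)
        rw [Finset.ssubset_iff_of_subset]
        · refine ⟨i, Finset.mem_filter.2 ⟨hi, hne⟩, ?_⟩
          simp [hi, h4]
        · intro l hl
          obtain ⟨hl1, hl2⟩ := Finset.mem_filter.1 hl
          simp only [hl1, if_true] at hl2
          refine Finset.mem_filter.2 ⟨hl1, fun h => hl2 ?_⟩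
          rw [h3 l hl1 h, h]
    have hcol : ∀ l ∈ I, f l ∈ Finset.Icc 1 t := fun l hl => hf.1 l (hc.sub hl)
    have hfo : ∀ l ∈ I, f (o l) = g (o l) := fun l hl => hfg _ (hc.o_mem hl)
    by_cases hq : f (o j) = f i
    · obtain ⟨m, hm, hmq⟩ := hc.f_surj hg (f i) (hav ▸ hc.f_avail hf i hi)
      have hmj : m ≠ j := by
        rintro rfl
        exact hc.f_o hg m hm (by rw [hmq, ← hq, hfo m hm])
      have hmi : m ≠ i := by
        rintro rfl
        exact hne hmq.symm
      have hfm : f m ≠ g m := fun h => hmi (hc.f_inj hf m hm i hi (h.trans hmq))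
      have t1 : (Equiv.swap i j * Equiv.swap j m) i = j := by
        simp [Equiv.swap_apply_of_ne_of_ne hji.symm hmi.symm]
      have t2 : (Equiv.swap i j * Equiv.swap j m) j = m := by
        simp [Equiv.swap_apply_of_ne_of_ne hmi hmj]
      have t3 : (Equiv.swap i j * Equiv.swap j m) m = i := by simp
      have t4 : ∀ l, l ≠ i → l ≠ j → l ≠ m → (Equiv.swap i j * Equiv.swap j m) l = l := by
        intro l a b c
        simp [Equiv.swap_apply_of_ne_of_ne b c, Equiv.swap_apply_of_ne_of_ne a b]
      generalize (Equiv.swap i j * Equiv.swap j m) = τ at t1 t2 t3 t4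
      have cases4 : ∀ l, l = i ∨ l = j ∨ l = m ∨ τ l = l := by
        intro l
        by_cases a : l = i; · exact Or.inl a
        by_cases b : l = j; · exact Or.inr (Or.inl b)
        by_cases c : l = m; · exact Or.inr (Or.inr (Or.inl c))
        exact Or.inr (Or.inr (Or.inr (t4 l a b c)))
      refine fin τ ?_ ?_ ?_ (by rw [t1, hjs]) ⟨{f i, f j, f m}, ?_, ?_, ?_⟩
      · intro l hl
        rcases cases4 l with rfl | rfl | rfl | h
        · rwa [t1]
        · rwa [t2]
        · rwa [t3]
        · rwa [h]
      · intro l hl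
        rcases cases4 l with rfl | rfl | rfl | h
        · rw [t1, hjs, hfo _ hl]; exact hc.f_o hg _ hl
        · rw [t2, hq]; exact fun h => hmi (hc.f_inj hf m hm i hi h)
        · rw [t3, ← hmq, hfo _ hl]; exact hc.f_o hg _ hl
        · rw [h]; exact hc.f_o hf l hl
      · intro l hl heq
        rcases cases4 l with rfl | rfl | rfl | h
        · exact absurd heq hne
        · exact absurd heq hgj
        · exact absurd heq hfm
        · exact h
      · exact Finset.card_le_three.trans (by norm_num)
      · intro x hx
        simp only [Finset.mem_insert, Finset.mem_singleton] at hx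
        rcases hx with rfl | rfl | rfl
        exacts [hcol _ hi, hcol _ hj, hcol _ hm]
      · intro l hl
        rcases cases4 l with rfl | rfl | rfl | h
        · right; rw [t1]; simp
        · right; rw [t2]; simp
        · right; rw [t3]; simp
        · left; rw [h]
    · have t4 : ∀ l, l = i ∨ l = j ∨ Equiv.swap i j l = l := by
        intro l
        by_cases a : l = i; · exact Or.inl a
        by_cases b : l = j; · exact Or.inr (Or.inl b)
        exact Or.inr (Or.inr (Equiv.swap_apply_of_ne_of_ne a b))
      have t1 : Equiv.swap i j i = j := Equiv.swap_apply_left i j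
      have t2 : Equiv.swap i j j = i := Equiv.swap_apply_right i j
      refine fin (Equiv.swap i j) ?_ ?_ ?_ (by rw [t1, hjs]) ⟨{f i, f j}, ?_, ?_, ?_⟩
      · intro l hl
        rcases t4 l with rfl | rfl | h
        · rwa [t1]
        · rwa [t2]
        · rwa [h]
      · intro l hl
        rcases t4 l with rfl | rfl | h
        · rw [t1, hjs, hfo _ hl]; exact hc.f_o hg _ hl
        · rw [t2]; exact Ne.symm hq
        · rw [h]; exact hc.f_o hf l hl
      · intro l hl heq
        rcases t4 l with rfl | rfl | h
        · exact absurd heq hne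
        · exact absurd heq hgj
        · exact h
      · exact Finset.card_le_two.trans (by norm_num)
      · intro x hx
        simp only [Finset.mem_insert, Finset.mem_singleton] at hx
        rcases hx with rfl | rfl
        exacts [hcol _ hi, hcol _ hj]
      · intro l hl
        rcases t4 l with rfl | rfl | h
        · right; rw [t1]; simp
        · right; rw [t2]; simp
        · left; rw [h]

end

/-- Hall's theorem for the sets `S \ {c i}`: if `X` and `S` have equal size and no color of `S` is
forbidden at all of `X`, then the elements of `X` receive distinct colors of `S`, none of them
forbidden. -/
lemma exists_injOn_avoiding (X : Finset ι) (S : Finset ℕ) (c : ι → ℕ) (hcard : X.card = S.card)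
    (hne : ∀ q ∈ S, ∃ i ∈ X, c i ≠ q) :
    ∃ σ : ι → ℕ, (∀ i ∈ X, σ i ∈ S ∧ σ i ≠ c i) ∧ ∀ i ∈ X, ∀ j ∈ X, σ i = σ j → i = j := by
  have hall : ∀ A : Finset X, A.card ≤ (A.biUnion (fun x => S.erase (c x))).card := by
    intro A
    rcases A.eq_empty_or_nonempty with rfl | ⟨a, ha⟩
    · simp
    have hA : A.card ≤ X.card := by
      simpa using Finset.card_le_univ A
    by_cases hsame : ∀ b ∈ A, c b = c a
    · have hsub : S.erase (c a) ⊆ A.biUnion (fun x => S.erase (c x)) := fun q hq =>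
        Finset.mem_biUnion.2 ⟨a, ha, hq⟩
      refine le_trans ?_ (Finset.card_le_card hsub)
      by_cases hq : c a ∈ S
      · obtain ⟨i, hi, hci⟩ := hne _ hq
        rw [Finset.card_erase_of_mem hq, ← hcard]
        have : A.card < Fintype.card X := by
          rw [Finset.card_lt_iff_ne_univ]
          intro h
          exact hci (hsame ⟨i, hi⟩ (h ▸ Finset.mem_univ _))
        simp at this
        omega
      · rw [Finset.erase_eq_of_notMem hq]; omega
    · push Not at hsame
      obtain ⟨b, hb, hbc⟩ := hsame
      rw [hcard] at hA
      refine hA.trans (Finset.card_le_card fun q hq => Finset.mem_biUnion.2 ?_)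
      by_cases hqa : q = c a
      · exact ⟨b, hb, Finset.mem_erase.2 ⟨fun h => hbc (h.symm.trans hqa), hq⟩⟩
      · exact ⟨a, ha, Finset.mem_erase.2 ⟨hqa, hq⟩⟩
  obtain ⟨σ, hσ, hσ2⟩ := (Finset.all_card_le_biUnion_card_iff_exists_injective _).1 hall
  refine ⟨fun i => if h : i ∈ X then σ ⟨i, h⟩ else 0, ?_, ?_⟩
  · intro i hi
    have := hσ2 ⟨i, hi⟩
    rw [Finset.mem_erase] at this
    simp only [hi, dif_pos]
    exact ⟨this.2, this.1⟩
  · intro i hi j hj heq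
    simp only [hi, hj, dif_pos] at heq
    simpa using hσ heq

lemma StepOn.avail_sdiff {E'' : Finset ι} {T : Finset ℕ} {h h' : ι → ℕ} (v : α)
    (hs : StepOn ends E'' t T h h') :
    avail ends E'' t v h \ T ⊆ avail ends E'' t v h' \ T := by
  intro q hq
  obtain ⟨h1, h2⟩ := Finset.mem_sdiff.1 hq
  obtain ⟨h3, h4⟩ := mem_avail.1 h1
  refine Finset.mem_sdiff.2 ⟨mem_avail.2 ⟨h3, fun e he hv heq => ?_⟩, h2⟩
  rcases hs.2.2 e he with h5 | h5
  · exact h4 e he hv (h5.trans heq)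
  · exact h2 (heq ▸ h5.2)

/-- A recoloring step of `E \ I` lifts to a recoloring step of `E`, provided that before and after
the step no available color is forbidden at both `i0` and `i1`. -/
lemma Config.lift {v : α} {I : Finset ι} {w : ι → α} {o : ι → ι}
    (hc : Config ends E t v I w o) (ht : 5 ≤ t) {h h' : ι → ℕ}
    (hst : Step ends (E \ I) t h h') {i0 i1 : ι} (hi0 : i0 ∈ I) (hi1 : i1 ∈ I) (hi : i0 ≠ i1)
    (hW : ∀ q ∈ avail ends (E \ I) t v h, h (o i0) ≠ q ∨ h (o i1) ≠ q)
    (hW' : ∀ q ∈ avail ends (E \ I) t v h', h' (o i0) ≠ q ∨ h' (o i1) ≠ q) :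
    ∃ f f', Step ends E t f f' ∧ ∀ e ∈ E \ I, f e = h e ∧ f' e = h' e := by
  obtain ⟨T0, hT0, hT04, hs0⟩ := hst
  obtain ⟨T, hT0T, hT, hT4⟩ := Finset.exists_subsuperset_card_eq hT0 hT04
    (by simpa using (by omega : 4 ≤ t))
  have hs : StepOn ends (E \ I) t T h h' :=
    ⟨hs0.1, hs0.2.1, fun e he => (hs0.2.2 e he).imp id (fun a => ⟨hT0T a.1, hT0T a.2⟩)⟩
  clear hs0 hT0T hT04 hT0
  set S := avail ends (E \ I) t v h with hS
  set S' := avail ends (E \ I) t v h' with hS'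
  have hSc : S.card = I.card := hc.card_avail hs.1
  have hSc' : S'.card = I.card := hc.card_avail hs.2.1
  have hsd : S \ T = S' \ T :=
    Finset.Subset.antisymm (hs.avail_sdiff v) (hs.symm.avail_sdiff v)
  have e1 := Finset.card_inter_add_card_sdiff S T
  have e2 := Finset.card_inter_add_card_sdiff S' T
  rw [← hsd] at e2
  have e3 := Finset.card_union_add_card_inter S T
  have e4 : (S ∪ T).card ≤ t := by
    have : S ∪ T ⊆ Finset.Icc 1 t := Finset.union_subset (fun q hq => (mem_avail.1 hq).1) hT
    simpa using Finset.card_le_card this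
  have e5 := hc.card
  have hk2 : 2 ≤ (S ∩ T).card := by omega
  -- outside `T`, the forbidden colors do not change
  have hcc : ∀ i ∈ I, ∀ q, q ∉ T → h (o i) = q → h' (o i) = q := by
    intro i hi q hq heq
    rcases hs.2.2 _ (hc.o_mem hi) with h5 | h5
    · exact h5 ▸ heq
    · exact absurd (heq ▸ h5.1) hq
  -- `X` is the set of edges of `I` colored from `T`; the edges of `I \ X` keep their colors.
  -- Both `i0` and `i1` are put into `X`, unless some color of `S \ T` is then forbidden on all of
  -- `I \ X`, in which case exchanging one element repairs this.
  have hX : ∃ X ⊆ I, X.card = (S ∩ T).card ∧ (∀ q ∈ S ∩ T, ∃ i ∈ X, h (o i) ≠ q) ∧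
      (∀ q ∈ S' ∩ T, ∃ i ∈ X, h' (o i) ≠ q) ∧ (∀ q ∈ S \ T, ∃ i ∈ I \ X, h (o i) ≠ q) := by
    obtain ⟨X0, hX0a, hX0, hX0c⟩ := Finset.exists_subsuperset_card_eq
      (s := {i0, i1}) (t := I) (n := (S ∩ T).card)
      (by intro x hx; simp only [Finset.mem_insert, Finset.mem_singleton] at hx
          rcases hx with rfl | rfl <;> assumption)
      (by rw [Finset.card_pair hi]; exact hk2) (by omega)
    have h0X : i0 ∈ X0 := hX0a (by simp)
    have h1X : i1 ∈ X0 := hX0a (by simp)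
    by_cases hB : ∀ q ∈ S \ T, ∃ i ∈ I \ X0, h (o i) ≠ q
    · refine ⟨X0, hX0, hX0c, ?_, ?_, hB⟩
      · intro q hq
        rcases hW q (Finset.mem_inter.1 hq).1 with h5 | h5
        exacts [⟨i0, h0X, h5⟩, ⟨i1, h1X, h5⟩]
      · intro q hq
        rcases hW' q (Finset.mem_inter.1 hq).1 with h5 | h5
        exacts [⟨i0, h0X, h5⟩, ⟨i1, h1X, h5⟩]
    push Not at hB
    obtain ⟨a, ha, haX⟩ := hB
    obtain ⟨haS, haT⟩ := Finset.mem_sdiff.1 ha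
    obtain ⟨j, hjX, hja⟩ : ∃ j ∈ X0, h (o j) ≠ a := by
      rcases hW a haS with h5 | h5
      exacts [⟨i0, h0X, h5⟩, ⟨i1, h1X, h5⟩]
    have hcd : (I \ X0).card = (S \ T).card := by
      rw [Finset.card_sdiff_of_subset hX0]; omega
    obtain ⟨m, hm⟩ : (I \ X0).Nonempty := by
      rw [← Finset.card_pos, hcd]; exact Finset.card_pos.2 ⟨a, ha⟩
    obtain ⟨hmI, hmX⟩ := Finset.mem_sdiff.1 hm
    have hmj : m ≠ j := fun h => hmX (h ▸ hjX)
    refine ⟨insert m (X0.erase j), ?_, ?_, ?_, ?_, ?_⟩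
    · intro x hx
      rcases Finset.mem_insert.1 hx with rfl | hx
      exacts [hmI, hX0 (Finset.mem_of_mem_erase hx)]
    · rw [Finset.card_insert_of_notMem (fun h => hmX (Finset.mem_of_mem_erase h)),
        Finset.card_erase_of_mem hjX]
      omega
    · intro q hq
      refine ⟨m, Finset.mem_insert_self _ _, ?_⟩
      rw [haX m hm]
      rintro rfl
      exact haT (Finset.mem_inter.1 hq).2
    · intro q hq
      refine ⟨m, Finset.mem_insert_self _ _, ?_⟩
      rw [hcc m hmI a haT (haX m hm)]
      rintro rfl
      exact haT (Finset.mem_inter.1 hq).2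
    · intro q hq
      by_cases hqa : q = a
      · refine ⟨j, Finset.mem_sdiff.2 ⟨hX0 hjX, ?_⟩, hqa ▸ hja⟩
        simp [hmj.symm]
      · have h2 : 1 < (I \ X0).card := by
          rw [hcd]; exact Finset.one_lt_card.2 ⟨q, hq, a, ha, hqa⟩
        obtain ⟨m', hm', hmm⟩ := Finset.exists_mem_ne h2 m
        obtain ⟨hm'I, hm'X⟩ := Finset.mem_sdiff.1 hm'
        refine ⟨m', Finset.mem_sdiff.2 ⟨hm'I, ?_⟩, ?_⟩
        · simp [hmm, hm'X]
        · rw [haX m' hm']; exact Ne.symm hqa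
  obtain ⟨X, hXI, hXc, hA, hA', hB⟩ := hX
  obtain ⟨σ1, h1a, h1b⟩ := exists_injOn_avoiding X (S ∩ T) (fun i => h (o i)) hXc hA
  obtain ⟨σ2, h2a, h2b⟩ := exists_injOn_avoiding X (S' ∩ T) (fun i => h' (o i)) (by omega) hA'
  obtain ⟨σ3, h3a, h3b⟩ := exists_injOn_avoiding (I \ X) (S \ T) (fun i => h (o i))
    (by rw [Finset.card_sdiff_of_subset hXI]; omega) hB
  -- one construction serves for both colorings
  have build : ∀ (h : ι → ℕ) (σ : ι → ℕ), ProperOn ends (E \ I) t h →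
      (∀ i ∈ X, σ i ∈ avail ends (E \ I) t v h ∩ T ∧ σ i ≠ h (o i)) →
      (∀ i ∈ X, ∀ j ∈ X, σ i = σ j → i = j) →
      (∀ i ∈ I \ X, σ3 i ∈ avail ends (E \ I) t v h \ T ∧ σ3 i ≠ h (o i)) →
      ProperOn ends E t (fun e => if e ∈ X then σ e else if e ∈ I then σ3 e else h e) := by
    intro h σ hp k1 k2 k3
    have hXe : ∀ i ∈ X, (fun e => if e ∈ X then σ e else if e ∈ I then σ3 e else h e) i = σ i :=
      fun i hi => by simp [hi]
    have hIe : ∀ i ∈ I \ X,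
        (fun e => if e ∈ X then σ e else if e ∈ I then σ3 e else h e) i = σ3 i :=
      fun i hi => by
        obtain ⟨a, b⟩ := Finset.mem_sdiff.1 hi
        simp [a, b]
    have hEe : ∀ e ∈ E \ I,
        h e = (fun e => if e ∈ X then σ e else if e ∈ I then σ3 e else h e) e :=
      fun e he => by
        have := (Finset.mem_sdiff.1 he).2
        have hx : e ∉ X := fun hx => this (hXI hx)
        simp [this, hx]
    generalize (fun e => if e ∈ X then σ e else if e ∈ I then σ3 e else h e) = f at hXe hIe hEe ⊢
    have hIX : ∀ i ∈ I, i ∈ X ∨ i ∈ I \ X := fun i hi => by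
      by_cases h : i ∈ X
      · exact Or.inl h
      · exact Or.inr (Finset.mem_sdiff.2 ⟨hi, h⟩)
    refine hc.extend (hp.congr hEe) ?_ ?_ ?_
    · intro i hi
      rw [← avail_congr hEe]
      rcases hIX i hi with h5 | h5
      · rw [hXe i h5]; exact (Finset.mem_inter.1 (k1 i h5).1).1
      · rw [hIe i h5]; exact (Finset.mem_sdiff.1 (k3 i h5).1).1
    · intro i hi j hj heq
      rcases hIX i hi with h5 | h5 <;> rcases hIX j hj with h6 | h6
      · rw [hXe i h5, hXe j h6] at heq; exact k2 i h5 j h6 heq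
      · rw [hXe i h5, hIe j h6] at heq
        exact absurd (heq ▸ (Finset.mem_inter.1 (k1 i h5).1).2) (Finset.mem_sdiff.1 (k3 j h6).1).2
      · rw [hIe i h5, hXe j h6] at heq
        exact absurd (heq ▸ (Finset.mem_inter.1 (k1 j h6).1).2) (Finset.mem_sdiff.1 (k3 i h5).1).2
      · rw [hIe i h5, hIe j h6] at heq; exact h3b i h5 j h6 heq
    · intro i hi
      rw [← hEe _ (hc.o_mem hi)]
      rcases hIX i hi with h5 | h5
      · rw [hXe i h5]; exact (k1 i h5).2
      · rw [hIe i h5]; exact (k3 i h5).2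
  refine ⟨_, _, ⟨T, hT, hT4.le, build h σ1 hs.1 h1a h1b h3a,
    build h' σ2 hs.2.1 h2a h2b ?_, ?_⟩, ?_⟩
  · intro i hi
    obtain ⟨k1, k2⟩ := h3a i hi
    refine ⟨hsd ▸ k1, fun heq => ?_⟩
    rcases hs.2.2 _ (hc.o_mem (Finset.mem_sdiff.1 hi).1) with h5 | h5
    · exact k2 (heq.trans h5.symm)
    · exact (Finset.mem_sdiff.1 k1).2 (heq ▸ h5.2)
  · intro e he
    by_cases heX : e ∈ X
    · simp only [heX, if_true]
      exact Or.inr ⟨(Finset.mem_inter.1 (h1a e heX).1).2, (Finset.mem_inter.1 (h2a e heX).1).2⟩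
    · by_cases heI : e ∈ I
      · simp [heX, heI]
      · simp only [heX, heI, if_false]
        exact hs.2.2 e (Finset.mem_sdiff.2 ⟨he, heI⟩)
  · intro e he
    have := (Finset.mem_sdiff.1 he).2
    have hx : e ∉ X := fun hx => this (hXI hx)
    simp [this, hx]

/-- A connected graph of maximum degree two has at most two vertices of degree at most one. -/
lemma not_reachable_three_leaves {β : Type*} [Fintype β] (Q : SimpleGraph β)
    (h2 : ∀ x, (Finset.univ.filter (fun y => Q.Adj x y)).card ≤ 2) (a b c : β)
    (hab : a ≠ b) (hac : a ≠ c) (hbc : b ≠ c)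
    (h1 : ∀ x ∈ ({a, b, c} : Finset β), (Finset.univ.filter (fun y => Q.Adj x y)).card ≤ 1)
    (rab : Q.Reachable a b) (rac : Q.Reachable a c) : False := by
  set C := Q.connectedComponentMk a with hC
  have mC : ∀ x, x ∈ C.supp ↔ Q.Reachable x a := fun x => by
    rw [hC, ConnectedComponent.mem_supp_iff, ConnectedComponent.eq]
  let Q' : SimpleGraph C.supp := Q.induce C.supp
  have hconn : Q'.Connected := C.connected_toSimpleGraph
  have hdeg : ∀ x : C.supp, Q'.degree x ≤ (Finset.univ.filter (fun y => Q.Adj x.1 y)).card := by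
    intro x
    rw [← card_neighborFinset_eq_degree]
    refine Finset.card_le_card_of_injOn Subtype.val ?_ (fun _ _ _ _ h => Subtype.ext h)
    intro y hy
    simp only [Finset.mem_coe, mem_neighborFinset] at hy
    simpa [Q'] using hy
  have e1 := hconn.card_vert_le_card_edgeSet_add_one
  have e2 := Q'.sum_degrees_eq_twice_card_edges
  let a' : C.supp := ⟨a, (mC a).2 (Reachable.refl a)⟩
  let b' : C.supp := ⟨b, (mC b).2 rab.symm⟩
  let c' : C.supp := ⟨c, (mC c).2 rac.symm⟩
  have e3 : ∑ x : C.supp, (Q'.degree x + if x ∈ ({a', b', c'} : Finset C.supp) then 1 else 0)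
      ≤ ∑ x : C.supp, 2 := by
    refine Finset.sum_le_sum fun x _ => ?_
    split_ifs with hx
    · have : x.1 ∈ ({a, b, c} : Finset β) := by
        simp only [Finset.mem_insert, Finset.mem_singleton] at hx ⊢
        rcases hx with rfl | rfl | rfl <;> simp [a', b', c']
      have := h1 _ this
      have := hdeg x
      omega
    · have := h2 x.1
      have := hdeg x
      omega
  have e4 : ({a', b', c'} : Finset C.supp).card = 3 :=
    Finset.card_eq_three.2 ⟨a', b', c', fun h => hab (congrArg Subtype.val h),
      fun h => hac (congrArg Subtype.val h), fun h => hbc (congrArg Subtype.val h), rfl⟩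
  rw [Finset.sum_add_distrib, ← Finset.sum_filter, Finset.filter_mem_eq_inter,
    Finset.univ_inter, e2] at e3
  simp only [Finset.sum_const, e4, Finset.card_univ, smul_eq_mul, mul_one] at e3
  rw [Nat.card_eq_fintype_card, Nat.card_eq_fintype_card] at e1
  rw [← edgeFinset_card] at e1
  omega

lemma exists_common_pair {I : Finset ι} {c c' : ι → ℕ}
    (h : ∃ i ∈ I, ∃ j ∈ I, c i ≠ c j) (h' : ∃ i ∈ I, ∃ j ∈ I, c' i ≠ c' j) :
    ∃ i ∈ I, ∃ j ∈ I, c i ≠ c j ∧ c' i ≠ c' j := by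
  obtain ⟨a, ha, b, hb, hab⟩ := h
  by_cases h1 : c' a ≠ c' b
  · exact ⟨a, ha, b, hb, hab, h1⟩
  push Not at h1
  obtain ⟨d, hd, hda⟩ : ∃ d ∈ I, c' d ≠ c' a := by
    by_contra hcon
    push Not at hcon
    obtain ⟨i, hi, j, hj, hij⟩ := h'
    exact hij ((hcon i hi).trans (hcon j hj).symm)
  by_cases h2 : c d ≠ c a
  · exact ⟨d, hd, a, ha, h2, hda⟩
  · push Not at h2
    exact ⟨d, hd, b, hb, h2 ▸ hab, h1 ▸ hda⟩

/-- The conflict graph between the edges of `F` colored `γ` or `β`; its components are the Kempe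
chains. -/
def chainGraph {ι α : Type*} (ends : ι → Sym2 α) (F : Finset ι) (f : ι → ℕ) (γ β : ℕ) :
    SimpleGraph ι where
  Adj e e' := e ≠ e' ∧ (e ∈ F ∧ (f e = γ ∨ f e = β)) ∧ (e' ∈ F ∧ (f e' = γ ∨ f e' = β)) ∧
    Meet ends e e'
  symm := ⟨fun _ _ h => ⟨h.1.symm, h.2.2.1, h.2.1, h.2.2.2.symm⟩⟩
  loopless := ⟨fun _ h => h.1 rfl⟩

lemma ProperOn.card_color_le {F : Finset ι} {f : ι → ℕ} (hf : ProperOn ends F t f) (a : α)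
    (δ : ℕ) : (F.filter (fun y => f y = δ ∧ a ∈ ends y)).card ≤ 1 := by
  refine Finset.card_le_one.2 fun y hy z hz => ?_
  simp only [Finset.mem_filter] at hy hz
  by_contra hne
  exact hf.2 y hy.1 z hz.1 hne ⟨a, hy.2.2, hz.2.2⟩ (hy.2.1.trans hz.2.1.symm)

lemma chainGraph_nbr {F : Finset ι} {f : ι → ℕ} (hf : ProperOn ends F t f) {γ β : ℕ}
    {x y : ι} {a b : α} (hx : ends x = s(a, b)) (h : (chainGraph ends F f γ β).Adj x y) :
    y ∈ F.filter (fun y => f y = Equiv.swap γ β (f x) ∧ a ∈ ends y) ∪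
      F.filter (fun y => f y = Equiv.swap γ β (f x) ∧ b ∈ ends y) := by
  obtain ⟨h1, ⟨h2, h3⟩, ⟨h4, h5⟩, z, h6, h7⟩ := h
  have hne := hf.2 x h2 y h4 h1 ⟨z, h6, h7⟩
  have hy : f y = Equiv.swap γ β (f x) := by
    rcases h3 with h3 | h3 <;> rcases h5 with h5 | h5
    · exact absurd (h3.trans h5.symm) hne
    · rw [h3, h5, Equiv.swap_apply_left]
    · rw [h3, h5, Equiv.swap_apply_right]
    · exact absurd (h3.trans h5.symm) hne
  rw [hx, Sym2.mem_iff] at h6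
  simp only [Finset.mem_union, Finset.mem_filter]
  rcases h6 with rfl | rfl
  exacts [Or.inl ⟨h4, hy, h7⟩, Or.inr ⟨h4, hy, h7⟩]

/-- Exchanging two colors on a Kempe chain. -/
lemma stepOn_kempe {F : Finset ι} {f : ι → ℕ} (hf : ProperOn ends F t f) {γ β : ℕ}
    (hγ : γ ∈ Finset.Icc 1 t) (hβ : β ∈ Finset.Icc 1 t) {r : ι} 
    (hrγ : f r = γ) :
    StepOn ends F t {γ, β} f (fun e => if (chainGraph ends F f γ β).Reachable r e then
      Equiv.swap γ β (f e) else f e) := by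
  set Q := chainGraph ends F f γ β with hQ
  have hK : ∀ e, Q.Reachable r e → f e = γ ∨ f e = β := by
    intro e he
    obtain ⟨p⟩ := he.symm
    cases p with
    | nil => exact Or.inl hrγ
    | cons h _ => exact h.2.1.2
  have hsw : ∀ q, q = γ ∨ q = β → Equiv.swap γ β q = γ ∨ Equiv.swap γ β q = β := by
    rintro q (rfl | rfl)
    · right; simp
    · left; simp
  refine ⟨hf, ⟨?_, ?_⟩, ?_⟩
  · intro e he
    by_cases hr : Q.Reachable r e
    · simp only [hr, if_true]
      rcases hsw _ (hK e hr) with h | h <;> rw [h] <;> assumption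
    · simp only [hr, if_false]; exact hf.1 e he
  · have mixed : ∀ e ∈ F, ∀ e' ∈ F, e ≠ e' → Meet ends e e' → Q.Reachable r e →
        ¬ Q.Reachable r e' → Equiv.swap γ β (f e) ≠ f e' := by
      intro e he e' he' hne hm h1 h2 heq
      refine h2 (h1.trans (Adj.reachable (?_ : Q.Adj e e')))
      exact ⟨hne, ⟨he, hK e h1⟩, ⟨he', heq ▸ hsw _ (hK e h1)⟩, hm⟩
    intro e he e' he' hne hm
    by_cases h1 : Q.Reachable r e <;> by_cases h2 : Q.Reachable r e' <;>
      simp only [h1, h2, if_true, if_false]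
    · exact fun h => hf.2 e he e' he' hne hm ((Equiv.swap γ β).injective h)
    · exact mixed e he e' he' hne hm h1 h2
    · exact (mixed e' he' e he hne.symm hm.symm h2 h1).symm
    · exact hf.2 e he e' he' hne hm
  · intro e he
    by_cases hr : Q.Reachable r e
    · right
      simp only [hr, if_true, Finset.mem_insert, Finset.mem_singleton]
      exact ⟨hK e hr, hsw _ (hK e hr)⟩
    · left; simp [hr]

/-- If all the edges `o i` have the same color, then at least one of any three of them lies
outside the Kempe chain of another one, so that a Kempe exchange makes their colors distinct. -/
lemma Config.exists_nonconstant [Fintype ι] {v : α} {I : Finset ι} {w : ι → α} {o : ι → ι}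
    (hc : Config ends E t v I w o) (ht : 5 ≤ t) {f : ι → ℕ} (hf : ProperOn ends E t f) :
    ∃ f', Eqv ends E t f f' ∧ ∃ i ∈ I, ∃ j ∈ I, f' (o i) ≠ f' (o j) := by
  by_cases hnc : ∃ i ∈ I, ∃ j ∈ I, f (o i) ≠ f (o j)
  · exact ⟨f, Relation.ReflTransGen.refl, hnc⟩
  push Not at hnc
  have hcard := hc.card
  obtain ⟨i1, h1, i2, h2, i3, h3, h12, h13, h23⟩ := Finset.two_lt_card.1 (by omega : 2 < I.card)
  set γ := f (o i1) with hγ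
  have hconst : ∀ i ∈ I, f (o i) = γ := fun i hi => hnc i hi i1 h1
  have hγt : γ ∈ Finset.Icc 1 t := hf.1 _ (hc.oE i1 h1)
  obtain ⟨β, hβt, hβγ⟩ := Finset.exists_mem_ne
    (by simp; omega : 1 < (Finset.Icc 1 t).card) γ
  set F := E \ I with hF
  have hfF : ProperOn ends F t f := hf.mono Finset.sdiff_subset
  set Q := chainGraph ends F f γ β with hQ
  have hst := stepOn_kempe hfF hγt hβt (r := o i1) hγ.symm
  rw [← hQ] at hst
  set h' : ι → ℕ := fun e => if Q.Reachable (o i1) e then Equiv.swap γ β (f e) else f e with hh'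
  replace hst : StepOn ends F t {γ, β} f h' := by convert hst
  have hleaf : ∀ i ∈ I, (Finset.univ.filter (fun y => Q.Adj (o i) y)).card ≤ 1 := by
    intro i hi
    obtain ⟨b, hb⟩ := Sym2.mem_iff_exists.1 (hc.ow i hi)
    refine le_trans (Finset.card_le_card ?_)
      (hfF.card_color_le b (Equiv.swap γ β (f (o i))))
    intro y hy
    have hadj : Q.Adj (o i) y := (Finset.mem_filter.1 hy).2
    rcases Finset.mem_union.1 (chainGraph_nbr hfF hb hadj) with h | h
    · exfalso
      obtain ⟨h4, h5, h6⟩ := Finset.mem_filter.1 h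
      obtain ⟨h7, h8⟩ := Finset.mem_sdiff.1 h4
      rcases hc.only i hi y h7 h6 with rfl | rfl
      · exact h8 hi
      · exact hadj.ne rfl
    · exact h
  have hdeg : ∀ x, (Finset.univ.filter (fun y => Q.Adj x y)).card ≤ 2 := by
    intro x
    obtain ⟨a, b, hab⟩ : ∃ a b, ends x = s(a, b) := by
      induction h : ends x with
      | _ a b => exact ⟨a, b, rfl⟩
    refine le_trans (Finset.card_le_card (fun y hy =>
      chainGraph_nbr hfF hab (Finset.mem_filter.1 hy).2)) ?_
    refine (Finset.card_union_le _ _).trans ?_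
    have k1 := hfF.card_color_le a (Equiv.swap γ β (f x))
    have k2 := hfF.card_color_le b (Equiv.swap γ β (f x))
    omega
  obtain ⟨i0, hi0, hi01, hnr⟩ : ∃ i0 ∈ I, i0 ≠ i1 ∧ ¬ Q.Reachable (o i1) (o i0) := by
    by_contra hcon
    push Not at hcon
    refine not_reachable_three_leaves Q hdeg (o i1) (o i2) (o i3)
      (fun h => h12 (hc.oinj _ h1 _ h2 h)) (fun h => h13 (hc.oinj _ h1 _ h3 h))
      (fun h => h23 (hc.oinj _ h2 _ h3 h)) ?_ (hcon i2 h2 h12.symm) (hcon i3 h3 h13.symm)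
    intro x hx
    simp only [Finset.mem_insert, Finset.mem_singleton] at hx
    rcases hx with rfl | rfl | rfl
    exacts [hleaf _ h1, hleaf _ h2, hleaf _ h3]
  have hv1 : h' (o i1) = β := by
    simp only [hh', Reachable.refl, if_true, ← hγ, Equiv.swap_apply_left]
  have hv0 : h' (o i0) = γ := by
    simp only [hh', hnr, if_false, hconst i0 hi0]
  have hγav : γ ∉ avail ends F t v f := by
    intro h
    obtain ⟨i, hi, hiγ⟩ := hc.f_surj hf γ h
    exact hc.f_o hf i hi (hiγ.trans (hconst i hi).symm)
  obtain ⟨f1, f1', hs1, hag⟩ := hc.lift (h := f) (h' := h') ht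
    ⟨{γ, β}, by
      intro x hx
      simp only [Finset.mem_insert, Finset.mem_singleton] at hx
      rcases hx with rfl | rfl <;> assumption,
      Finset.card_le_two.trans (by norm_num), hst⟩ hi0 h1 hi01
    (fun q hq => Or.inl (by rw [hconst i0 hi0]; rintro rfl; exact hγav hq))
    (fun q _ => by
      rw [hv0, hv1]
      by_cases h : γ = q
      · exact Or.inr (h ▸ hβγ)
      · exact Or.inl h)
  have hf1 : ProperOn ends E t f1 := hs1.choose_spec.2.2.1
  refine ⟨f1', (hc.eqv_of_agree hf1 _ f hf (fun e he => ((hag e he).1).symm) le_rfl).trans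
    hs1.eqv, i0, hi0, i1, h1, ?_⟩
  rw [(hag _ (hc.o_mem hi0)).2, (hag _ (hc.o_mem h1)).2, hv0, hv1]
  exact hβγ.symm

/-- Every nonempty set of edges of `E` has a vertex meeting one or two of its edges. -/
def TwoDeg {ι α : Type*} (ends : ι → Sym2 α) (E : Finset ι) : Prop :=
  ∀ F ⊆ E, F.Nonempty → ∃ x, 1 ≤ (F.filter (fun e => x ∈ ends e)).card ∧
    (F.filter (fun e => x ∈ ends e)).card ≤ 2

/-- The conflicts of an edge `s(a, b)` are counted at its two ends. -/
lemma conflicts_subset {e : ι} {a b : α} (hab : ends e = s(a, b)) :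
    E.filter (fun e' => e' ≠ e ∧ Meet ends e' e) ⊆
      (E.filter (fun e' => a ∈ ends e')).erase e ∪ (E.filter (fun e' => b ∈ ends e')).erase e := by
  intro e' he'
  obtain ⟨h1, h2, x, h3, h4⟩ := Finset.mem_filter.1 he'
  rw [hab, Sym2.mem_iff] at h4
  simp only [Finset.mem_union, Finset.mem_erase, Finset.mem_filter]
  rcases h4 with rfl | rfl
  exacts [Or.inl ⟨h2, h1, h3⟩, Or.inr ⟨h2, h1, h3⟩]

lemma ProperOn.deg_le {f : ι → ℕ} (hf : ProperOn ends E t f) (x : α) :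
    (E.filter (fun e => x ∈ ends e)).card ≤ t := by
  have h1 : ((E.filter (fun e => x ∈ ends e)).image f).card
      = (E.filter (fun e => x ∈ ends e)).card := by
    refine Finset.card_image_of_injOn ?_
    intro e he e' he' heq
    simp only [Finset.coe_filter, Set.mem_ofPred_eq] at he he'
    by_contra hne
    exact hf.2 e he.1 e' he'.1 hne ⟨x, he.2, he'.2⟩ heq
  rw [← h1]
  refine (Finset.card_le_card (t := Finset.Icc 1 t) ?_).trans (by simp)
  intro q hq
  obtain ⟨e, he, rfl⟩ := Finset.mem_image.1 hq
  exact hf.1 e (Finset.mem_filter.1 he).1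

/-- If every edge has at least `t` conflicts, 2-degeneracy yields a vertex of degree `t` of which
all but at most two neighbors have degree two. -/
lemma exists_config (ht : 5 ≤ t) (hE : E.Nonempty) (hdeg2 : TwoDeg ends E)
    (hconf : ∀ e ∈ E, t ≤ (E.filter (fun e' => e' ≠ e ∧ Meet ends e' e)).card)
    {f : ι → ℕ} (hf : ProperOn ends E t f) : ∃ v I w o, Config ends E t v I w o := by
  set d : α → ℕ := fun x => (E.filter (fun e => x ∈ ends e)).card with hd
  have hdt : ∀ x, d x ≤ t := hf.deg_le
  have ends_ex : ∀ e, ∃ a b, ends e = s(a, b) := by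
    intro e
    induction h : ends e with
    | _ a b => exact ⟨a, b, rfl⟩
  have herase : ∀ e ∈ E, ∀ x ∈ ends e,
      ((E.filter (fun e' => x ∈ ends e')).erase e).card + 1 = d x := fun e he x hx =>
    Finset.card_erase_add_one (Finset.mem_filter.2 ⟨he, hx⟩)
  have hsum : ∀ e ∈ E, ∀ a b, ends e = s(a, b) → t + 2 ≤ d a + d b := by
    intro e he a b hab
    have h1 := (hconf e he).trans ((Finset.card_le_card (conflicts_subset hab)).trans
      (Finset.card_union_le _ _))
    have h2 := herase e he a (by simp [hab])
    have h3 := herase e he b (by simp [hab])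
    omega
  have hloop : ∀ e ∈ E, ∀ a b, ends e = s(a, b) → a ≠ b := by
    rintro e he a b hab rfl
    have h1 := (hconf e he).trans (Finset.card_le_card (conflicts_subset hab))
    rw [Finset.union_self] at h1
    have h2 := herase e he a (by simp [hab])
    have := hdt a
    omega
  set F := E.filter (fun e => ∀ x ∈ ends e, 3 ≤ d x) with hF
  -- an edge outside `F` joins a vertex of degree two to a vertex of degree `t`
  have hnF : ∀ e ∈ E, e ∉ F → ∃ x w, ends e = s(x, w) ∧ d x = t ∧ d w = 2 := by
    intro e he heF
    have : ∃ w ∈ ends e, d w ≤ 2 := by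
      by_contra hcon
      push Not at hcon
      exact heF (Finset.mem_filter.2 ⟨he, fun x hx => hcon x hx⟩)
    obtain ⟨w, hw, hw2⟩ := this
    obtain ⟨x, hx⟩ := Sym2.mem_iff_exists.1 hw
    have h1 := hsum e he w x hx
    have h2 := hdt x
    exact ⟨x, w, hx.trans Sym2.eq_swap, by omega, by omega⟩
  -- 2-degeneracy is applied to the set `F` of edges between vertices of degree at least three
  obtain ⟨v, hv, hvF⟩ : ∃ v, d v = t ∧ (F.filter (fun e => v ∈ ends e)).card ≤ 2 := by
    rcases F.eq_empty_or_nonempty with hFe | hFn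
    · obtain ⟨e, he⟩ := hE
      obtain ⟨x, w, -, hx, -⟩ := hnF e he (by rw [hFe]; simp)
      exact ⟨x, hx, by rw [hFe]; simp⟩
    · obtain ⟨x, hx1, hx2⟩ := hdeg2 F (Finset.filter_subset _ _) hFn
      refine ⟨x, ?_, hx2⟩
      obtain ⟨e, he⟩ := Finset.card_pos.1 hx1
      obtain ⟨heF, hxe⟩ := Finset.mem_filter.1 he
      have hdx : 3 ≤ d x := (Finset.mem_filter.1 heF).2 x hxe
      obtain ⟨e0, he0, hne0⟩ : ∃ e0 ∈ E.filter (fun e => x ∈ ends e),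
          e0 ∉ F.filter (fun e => x ∈ ends e) :=
        Finset.exists_mem_notMem_of_card_lt_card (by
          have : d x = (E.filter (fun e => x ∈ ends e)).card := rfl
          omega)
      obtain ⟨he0E, hxe0⟩ := Finset.mem_filter.1 he0
      obtain ⟨y, w, hyw, hy, hw⟩ := hnF e0 he0E
        (fun h => hne0 (Finset.mem_filter.2 ⟨h, hxe0⟩))
      rw [hyw, Sym2.mem_iff] at hxe0
      rcases hxe0 with rfl | rfl
      · exact hy
      · omega
  obtain ⟨I, hIsub, hIcard⟩ : ∃ I ⊆ (E.filter (fun e => v ∈ ends e)) \ F, I.card = t - 2 := by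
    refine Finset.exists_subset_card_eq ?_
    have h1 := Finset.card_sdiff_add_card_inter (E.filter (fun e => v ∈ ends e)) F
    have h2 : (E.filter (fun e => v ∈ ends e)) ∩ F ⊆ F.filter (fun e => v ∈ ends e) := by
      intro e he
      obtain ⟨h3, h4⟩ := Finset.mem_inter.1 he
      exact Finset.mem_filter.2 ⟨h4, (Finset.mem_filter.1 h3).2⟩
    have h3 := Finset.card_le_card h2
    have h4 : (E.filter (fun e => v ∈ ends e)).card = t := hv
    omega
  have hI : ∀ i ∈ I, i ∈ E ∧ v ∈ ends i ∧ i ∉ F := fun i hi => by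
    obtain ⟨h1, h2⟩ := Finset.mem_sdiff.1 (hIsub hi)
    obtain ⟨h3, h4⟩ := Finset.mem_filter.1 h1
    exact ⟨h3, h4, h2⟩
  have hwo : ∀ i, ∃ w o, i ∈ I → (ends i = s(v, w) ∧ w ≠ v ∧ o ∈ E ∧ v ∉ ends o ∧ w ∈ ends o ∧
      ∀ e ∈ E, w ∈ ends e → e = i ∨ e = o) := by
    intro i
    by_cases hi : i ∈ I
    swap
    · exact ⟨v, i, fun h => absurd h hi⟩
    obtain ⟨hiE, hvi, hiF⟩ := hI i hi
    obtain ⟨x, w, hxw, hx, hw⟩ := hnF i hiE hiF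
    have hxv : x = v := by
      rw [hxw, Sym2.mem_iff] at hvi
      rcases hvi with rfl | rfl
      · rfl
      · omega
    subst hxv
    have hcw : ((E.filter (fun e => w ∈ ends e)).erase i).card = 1 := by
      have := herase i hiE w (by simp [hxw])
      omega
    obtain ⟨o, ho⟩ := Finset.card_eq_one.1 hcw
    have homem : o ∈ (E.filter (fun e => w ∈ ends e)).erase i := by rw [ho]; simp
    obtain ⟨hoi, ho2⟩ := Finset.mem_erase.1 homem
    obtain ⟨hoE, hwo⟩ := Finset.mem_filter.1 ho2
    refine ⟨w, o, fun _ => ⟨hxw, (hloop i hiE _ _ hxw).symm, hoE, ?_, hwo, ?_⟩⟩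
    · intro hvo
      have h1 := (hconf i hiE).trans (Finset.card_le_card (conflicts_subset hxw))
      rw [ho, Finset.union_eq_left.2] at h1
      · have := herase i hiE _ hvi
        omega
      · intro z hz
        rw [Finset.mem_singleton] at hz
        subst hz
        exact Finset.mem_erase.2 ⟨hoi, Finset.mem_filter.2 ⟨hoE, hvo⟩⟩
    · intro e he hwe
      by_cases hei : e = i
      · exact Or.inl hei
      · right
        have : e ∈ (E.filter (fun e => w ∈ ends e)).erase i :=
          Finset.mem_erase.2 ⟨hei, Finset.mem_filter.2 ⟨he, hwe⟩⟩
        rw [ho] at this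
        simpa using this
  choose w o hwo using hwo
  have hwinj : ∀ i ∈ I, ∀ j ∈ I, w i = w j → i = j := by
    intro i hi j hj hij
    obtain ⟨h1, h2, h3, h4, h5, h6⟩ := hwo i hi
    rcases h6 j (hI j hj).1 (by rw [(hwo j hj).1, hij]; simp) with h | h
    · exact h.symm
    · exact absurd (h ▸ (hI j hj).2.1) h4
  refine ⟨v, I, w, o, fun i hi => (hI i hi).1, by omega, hv, fun i hi => (hwo i hi).1,
    fun i hi => (hwo i hi).2.1, hwinj,
    fun i hi => (hwo i hi).2.2.1, fun i hi => (hwo i hi).2.2.2.1,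
    fun i hi => (hwo i hi).2.2.2.2.1, fun i hi => (hwo i hi).2.2.2.2.2, ?_⟩
  intro i hi j hj hij
  by_contra hne
  obtain ⟨h1, h2, h3, h4, h5, h6⟩ := hwo i hi
  obtain ⟨k1, k2, k3, k4, k5, k6⟩ := hwo j hj
  have hww : w i ≠ w j := fun h => hne (hwinj i hi j hj h)
  rw [← hij] at k5 k6
  have hends : ends (o i) = s(w i, w j) := (Sym2.mem_and_mem_iff hww).1 ⟨h5, k5⟩
  have : E.filter (fun e' => e' ≠ o i ∧ Meet ends e' (o i)) ⊆ {i, j} := by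
    intro e he
    obtain ⟨l1, l2, x, l3, l4⟩ := Finset.mem_filter.1 he
    rw [hends, Sym2.mem_iff] at l4
    rcases l4 with rfl | rfl
    · rcases h6 e l1 l3 with h | h
      · simp [h]
      · exact absurd h l2
    · rcases k6 e l1 l3 with h | h
      · simp [h]
      · exact absurd h l2
  have := (hconf _ h3).trans ((Finset.card_le_card this).trans Finset.card_le_two)
  omega

/-- In a 2-degenerate multigraph with `t ≥ 5`, any two proper `t`-edge-colorings are related by
recoloring steps. The edges in `I` of a configuration are deleted and the two pendant vertices
`w i0`, `w i1` so created are identified; this forces different colors on `o i0` and `o i1`, which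
is what is needed to lift recoloring steps. -/
theorem eqv_of_twoDeg [Fintype ι] (ht : 5 ≤ t) : ∀ (n : ℕ) (ends : ι → Sym2 α) (E : Finset ι),
    E.card = n → TwoDeg ends E → ∀ f g, ProperOn ends E t f → ProperOn ends E t g →
    Eqv ends E t f g := by
  intro n
  induction n using Nat.strong_induction_on with
  | _ n ih =>
  intro ends E hn h2 f g hf hg
  rcases E.eq_empty_or_nonempty with rfl | hE
  · exact Step.eqv ⟨∅, by simp, by simp, hf, hg, by simp⟩
  by_cases hfew : ∃ e ∈ E, (E.filter (fun e' => e' ≠ e ∧ Meet ends e' e)).card < t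
  · obtain ⟨e, he, hlt⟩ := hfew
    refine eqv_of_few_conflicts hlt ?_ he hf hg
    intro f g hf hg
    refine ih (E.erase e).card (hn ▸ Finset.card_erase_lt_of_mem he) ends _ rfl ?_ f g hf hg
    exact fun F hF => h2 F (hF.trans (Finset.erase_subset _ _))
  push Not at hfew
  obtain ⟨v, I, w, o, hc⟩ := exists_config ht hE h2 hfew hf
  -- both colorings may be assumed nonconstant on the edges `o i`
  obtain ⟨f', hff', hfnc⟩ := hc.exists_nonconstant ht hf
  obtain ⟨g', hgg', hgnc⟩ := hc.exists_nonconstant ht hg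
  have hf' := hff'.proper hf
  have hg' := hgg'.proper hg
  refine hff'.trans (Eqv.trans ?_ hgg'.symm)
  clear hff' hgg' hf hg f g
  obtain ⟨i0, hi0, i1, hi1, hfc, hgc⟩ := exists_common_pair hfnc hgnc
  have h01 : i0 ≠ i1 := fun h => hfc (by rw [h])
  set F := E \ I with hF
  let π : α → α := fun x => if x = w i1 then w i0 else x
  have hπ1 : π (w i1) = w i0 := by simp [π]
  have hπn : ∀ x, x ≠ w i1 → π x = x := fun x hx => by simp [π, hx]
  have hπ0 : π (w i0) = w i0 := hπn _ (fun h => h01 (hc.winj _ hi0 _ hi1 h))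
  let ends' : ι → Sym2 α := fun e => Sym2.map π (ends e)
  have hmem' : ∀ e x, x ∈ ends' e ↔ ∃ y ∈ ends e, π y = x := fun e x => Sym2.mem_map
  have hpend : ∀ i ∈ I, ∀ e ∈ F, w i ∈ ends e → e = o i := by
    intro i hi e he hw
    obtain ⟨h1, h2⟩ := Finset.mem_sdiff.1 he
    rcases hc.only i hi e h1 hw with rfl | h
    · exact absurd hi h2
    · exact h
  have hto : ∀ h, ProperOn ends F t h → h (o i0) ≠ h (o i1) → ProperOn ends' F t h := by
    intro h hp hne
    refine ⟨hp.1, ?_⟩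
    rintro e he e' he' hee ⟨x, hx, hx'⟩
    obtain ⟨y, hy, rfl⟩ := (hmem' e x).1 hx
    obtain ⟨y', hy', hyy⟩ := (hmem' e' _).1 hx'
    by_cases h1 : y = w i1
    · subst h1
      by_cases h2 : y' = w i1
      · subst h2; exact hp.2 e he e' he' hee ⟨_, hy, hy'⟩
      · rw [hπ1, hπn _ h2] at hyy
        subst hyy
        rw [hpend _ hi1 e he hy, hpend _ hi0 e' he' hy']
        exact hne.symm
    · by_cases h2 : y' = w i1
      · subst h2
        rw [hπ1, hπn _ h1] at hyy
        subst hyy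
        rw [hpend _ hi0 e he hy, hpend _ hi1 e' he' hy']
        exact hne
      · rw [hπn _ h1, hπn _ h2] at hyy
        subst hyy
        exact hp.2 e he e' he' hee ⟨_, hy, hy'⟩
  have hfrom : ∀ h, ProperOn ends' F t h → ProperOn ends F t h ∧ h (o i0) ≠ h (o i1) := by
    intro h hp
    refine ⟨⟨hp.1, ?_⟩, ?_⟩
    · rintro e he e' he' hee ⟨x, hx, hx'⟩
      exact hp.2 e he e' he' hee ⟨π x, (hmem' _ _).2 ⟨x, hx, rfl⟩, (hmem' _ _).2 ⟨x, hx', rfl⟩⟩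
    · exact hp.2 _ (hc.o_mem hi0) _ (hc.o_mem hi1) (fun h => h01 (hc.oinj _ hi0 _ hi1 h))
        ⟨w i0, (hmem' _ _).2 ⟨_, hc.ow _ hi0, hπ0⟩, (hmem' _ _).2 ⟨_, hc.ow _ hi1, hπ1⟩⟩
  have h2' : TwoDeg ends' F := by
    intro A hA hAn
    obtain ⟨x, hx1, hx2⟩ := h2 A (hA.trans Finset.sdiff_subset) hAn
    by_cases hx : x = w i0 ∨ x = w i1
    · refine ⟨w i0, ?_, ?_⟩
      · refine hx1.trans (Finset.card_le_card fun e he => ?_)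
        obtain ⟨he1, he2⟩ := Finset.mem_filter.1 he
        refine Finset.mem_filter.2 ⟨he1, (hmem' _ _).2 ⟨x, he2, ?_⟩⟩
        rcases hx with rfl | rfl
        exacts [hπ0, hπ1]
      · refine (Finset.card_le_card (t := {o i0, o i1}) fun e he => ?_).trans Finset.card_le_two
        obtain ⟨he1, he2⟩ := Finset.mem_filter.1 he
        obtain ⟨y, hy, hyw⟩ := (hmem' _ _).1 he2
        by_cases hy1 : y = w i1
        · subst hy1; simp [hpend _ hi1 e (hA he1) hy]
        · rw [hπn _ hy1] at hyw
          subst hyw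
          simp [hpend _ hi0 e (hA he1) hy]
    · push Not at hx
      have : A.filter (fun e => x ∈ ends' e) = A.filter (fun e => x ∈ ends e) := by
        refine Finset.filter_congr fun e _ => ?_
        rw [hmem']
        constructor
        · rintro ⟨y, hy, hyx⟩
          by_cases hy1 : y = w i1
          · subst hy1; exact absurd (hyx.symm.trans hπ1) hx.1
          · rw [hπn _ hy1] at hyx
            exact hyx ▸ hy
        · exact fun h => ⟨x, h, hπn x hx.2⟩
      exact ⟨x, this ▸ hx1, this ▸ hx2⟩
  have hIpos : 0 < I.card := by have := hc.card; omega
  have hlt : F.card < n := by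
    rw [hF, Finset.card_sdiff_of_subset hc.sub]
    have := Finset.card_le_card hc.sub
    omega
  have hpath := ih F.card hlt ends' F rfl h2' f' g'
    (hto _ (hf'.mono Finset.sdiff_subset) hfc) (hto _ (hg'.mono Finset.sdiff_subset) hgc)
  have key : ∀ h, Eqv ends' F t f' h → ∀ f2, ProperOn ends E t f2 → (∀ e ∈ F, h e = f2 e) →
      Eqv ends E t f' f2 := by
    intro h hh
    induction hh with
    | refl => exact fun f2 hf2 hag => hc.eqv_of_agree hf2 _ f' hf' hag le_rfl
    | @tail h h' _ hst ihh =>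
      intro f2 hf2 hag
      obtain ⟨T, hT, hT4, hs⟩ := hst
      obtain ⟨p1, p2⟩ := hfrom h hs.1
      obtain ⟨q1, q2⟩ := hfrom h' hs.2.1
      have hW : ∀ a b : ℕ, a ≠ b → ∀ q, a ≠ q ∨ b ≠ q := fun a b hab q => by
        by_contra hcon
        push Not at hcon
        exact hab (hcon.1.trans hcon.2.symm)
      obtain ⟨f1, f1', hs1, hag1⟩ := hc.lift ht ⟨T, hT, hT4, p1, q1, hs.2.2⟩ hi0 hi1 h01
        (fun q _ => hW _ _ p2 q) (fun q _ => hW _ _ q2 q)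
      have r1 : ProperOn ends E t f1 := hs1.choose_spec.2.2.1
      have r2 : ProperOn ends E t f1' := hs1.eqv.proper r1
      refine (ihh f1 r1 (fun e he => ((hag1 e he).1).symm)).trans (hs1.eqv.trans ?_)
      exact hc.eqv_of_agree hf2 _ f1' r2 (fun e he => ((hag1 e he).2).trans (hag e he)) le_rfl
  exact key g' hpath g' hg' (fun _ _ => rfl)

end Recolor

/-! ### Series-parallel and chordless graphs are 2-degenerate -/

section LongestPath

/-- `x 0, …, x k` is a path of `H`. -/
def IsP {V : Type*} (H : SimpleGraph V) (k : ℕ) (x : ℕ → V) : Prop :=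
  (∀ i < k, H.Adj (x i) (x (i + 1))) ∧ ∀ i ≤ k, ∀ j ≤ k, x i = x j → i = j

lemma IsP.walk {V : Type*} {G H : SimpleGraph V} (hHG : H ≤ G) {k : ℕ} {x : ℕ → V}
    (hx : IsP H k x) (a : ℕ) : ∀ n, a + n ≤ k → ∃ p : G.Walk (x a) (x (a + n)), p.IsPath ∧
      (∀ v, v ∈ p.support ↔ ∃ i, a ≤ i ∧ i ≤ a + n ∧ v = x i) ∧
      ∀ e ∈ p.edges, ∃ i, a ≤ i ∧ i < a + n ∧ e = s(x i, x (i + 1)) := by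
  intro n
  induction n with
  | zero =>
    intro _
    refine ⟨Walk.nil, by simp, ?_, by simp⟩
    intro v
    simp only [Walk.support_nil, List.mem_singleton, add_zero]
    constructor
    · rintro rfl; exact ⟨a, le_rfl, le_rfl, rfl⟩
    · rintro ⟨i, h1, h2, rfl⟩
      rw [le_antisymm h2 h1]
  | succ n ih =>
    intro hn
    obtain ⟨p, h1, h2, h3⟩ := ih (by omega)
    have hadj : G.Adj (x (a + n)) (x (a + (n + 1))) := hHG (hx.1 (a + n) (by omega))
    refine ⟨p.concat hadj, ?_, ?_, ?_⟩
    · rw [Walk.concat_isPath_iff]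
      refine ⟨h1, fun h => ?_⟩
      obtain ⟨i, h4, h5, h6⟩ := (h2 _).1 h
      have := hx.2 _ (by omega) i (by omega) h6
      omega
    · intro v
      rw [Walk.support_concat, List.mem_append, h2]
      constructor
      · rintro (⟨i, h4, h5, h6⟩ | h)
        · exact ⟨i, h4, by omega, h6⟩
        · exact ⟨a + (n + 1), by omega, le_rfl, by simpa using h⟩
      · rintro ⟨i, h4, h5, h6⟩
        rcases Nat.lt_or_ge (a + n) i with h | h
        · right
          have : i = a + (n + 1) := by omega
          subst this
          simpa using h6
        · exact Or.inl ⟨i, h4, h, h6⟩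
    · intro e he
      rw [Walk.edges_concat, List.concat_eq_append, List.mem_append] at he
      rcases he with he | he
      · obtain ⟨i, h4, h5, h6⟩ := h3 e he
        exact ⟨i, h4, by omega, h6⟩
      · exact ⟨a + n, by omega, by omega, by rw [List.mem_singleton] at he; exact he⟩

lemma IsP.connected {V : Type*} {G H : SimpleGraph V} (hHG : H ≤ G) {k : ℕ} {x : ℕ → V}
    (hx : IsP H k x) {a b : ℕ} (hab : a ≤ b) (hb : b ≤ k) :
    (G.induce (x '' Set.Icc a b)).Connected := by
  obtain ⟨n, rfl⟩ := Nat.exists_eq_add_of_le hab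
  obtain ⟨p, -, h2, -⟩ := hx.walk hHG a n hb
  have := p.connected_induce_support
  have heq : {v | v ∈ p.support} = x '' Set.Icc a (a + n) := by
    ext v
    rw [Set.mem_ofPred_eq, h2]
    constructor
    · rintro ⟨i, h4, h5, rfl⟩; exact ⟨i, ⟨h4, h5⟩, rfl⟩
    · rintro ⟨i, ⟨h4, h5⟩, rfl⟩; exact ⟨i, h4, h5, rfl⟩
  rwa [heq] at this

/-- A longest path: every path with as many edges has all neighbors of its first vertex on it. -/
lemma exists_longest_path {V : Type*} [Fintype V] {H : SimpleGraph V} {a b : V}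
    (hab : H.Adj a b) : ∃ k x, 1 ≤ k ∧ IsP H k x ∧
      ∀ z, IsP H k z → ∀ y, H.Adj (z 0) y → ∃ i, 1 ≤ i ∧ i ≤ k ∧ y = z i := by
  classical
  have hb : ∀ k x, IsP H k x → k ≤ Fintype.card V := by
    intro k x hx
    have : (Finset.range (k + 1)).card ≤ (Finset.univ : Finset V).card :=
      Finset.card_le_card_of_injOn x (by simp) (by
        intro i hi j hj h
        simp only [Finset.coe_range, Set.mem_Iio] at hi hj
        exact hx.2 i (by omega) j (by omega) h)
    simp only [Finset.card_range, Finset.card_univ] at this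
    omega
  have h1 : IsP H 1 (fun i => if i = 0 then a else b) := by
    constructor
    · intro i hi
      obtain rfl : i = 0 := by omega
      simpa using hab
    · intro i hi j hj h
      rcases Nat.le_one_iff_eq_zero_or_eq_one.1 hi with rfl | rfl <;>
        rcases Nat.le_one_iff_eq_zero_or_eq_one.1 hj with rfl | rfl
      · rfl
      · exact absurd (by simpa using h) hab.ne
      · exact absurd (by simpa using h.symm) hab.ne
      · rfl
  have hbd : ∃ x, IsP H 1 x := ⟨_, h1⟩
  set k := Nat.findGreatest (fun k => ∃ x, IsP H k x) (Fintype.card V) with hk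
  have hk1 : 1 ≤ k := Nat.le_findGreatest (hb 1 _ h1) hbd
  obtain ⟨x, hx⟩ : ∃ x, IsP H k x := Nat.findGreatest_spec (P := fun k => ∃ x, IsP H k x)
    (hb 1 _ h1) hbd
  refine ⟨k, x, hk1, hx, fun z hz y hy => ?_⟩
  by_contra hcon
  push Not at hcon
  have hy0 : ∀ i ≤ k, y ≠ z i := by
    intro i hi
    rcases Nat.eq_zero_or_pos i with rfl | hi0
    · exact hy.ne.symm
    · exact hcon i hi0 hi
  have hlong : IsP H (k + 1) (fun i => if i = 0 then y else z (i - 1)) := by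
    constructor
    · intro i hi
      rcases Nat.eq_zero_or_pos i with rfl | hi0
      · simpa using hy.symm
      · have := hz.1 (i - 1) (by omega)
        rw [Nat.sub_add_cancel hi0] at this
        simpa [hi0.ne'] using this
    · intro i hi j hj h
      rcases Nat.eq_zero_or_pos i with rfl | hi0 <;> rcases Nat.eq_zero_or_pos j with rfl | hj0
      · rfl
      · simp only [if_true, hj0.ne', if_false] at h
        exact absurd h (hy0 _ (by omega))
      · simp only [if_true, hi0.ne', if_false] at h
        exact absurd h.symm (hy0 _ (by omega))
      · simp only [hj0.ne', hi0.ne', if_false] at h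
        have := hz.2 _ (by omega) _ (by omega) h
        omega
  have : k + 1 ≤ k := Nat.le_findGreatest (hb _ _ hlong) ⟨_, hlong⟩
  omega

variable {V : Type*} [Fintype V] {G H : SimpleGraph V}

/-- A longest path in a graph without vertices of degree one or two closes up to a cycle with a
chord at its first vertex. -/
lemma not_chordless_of_three_le (hHG : H ≤ G) {a b : V} (hab : H.Adj a b)
    (h3 : ∀ x y, H.Adj x y → ∀ a b, ∃ c, H.Adj x c ∧ c ≠ a ∧ c ≠ b) : ¬ Chordless G := by
  intro hG
  obtain ⟨k, x, hk, hx, hmax⟩ := exists_longest_path hab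
  have h01 : H.Adj (x 0) (x 1) := hx.1 0 hk
  obtain ⟨c, hc, hc1, -⟩ := h3 _ _ h01 (x 1) (x 1)
  obtain ⟨d, hd, hd1, hdc⟩ := h3 _ _ h01 (x 1) c
  obtain ⟨i, hi1, hik, rfl⟩ := hmax x hx c hc
  obtain ⟨j, hj1, hjk, rfl⟩ := hmax x hx d hd
  have key : ∀ i j, 2 ≤ i → i < j → j ≤ k → H.Adj (x 0) (x i) → H.Adj (x 0) (x j) → False := by
    intro i j hi hij hjk hi0 hj0
    have hw := hx.walk hHG 0 j (by omega)
    rw [Nat.zero_add] at hw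
    obtain ⟨p, hp, hs, he⟩ := hw
    have hpe : ∀ l, l ≤ k → s(x 0, x l) ∈ p.edges → l = 1 := by
      intro l hl hmem
      obtain ⟨m, -, hm, heq⟩ := he _ hmem
      rw [Sym2.eq_iff] at heq
      rcases heq with ⟨q1, q2⟩ | ⟨q1, q2⟩
      · have := hx.2 _ (by omega) _ (by omega) q1
        have := hx.2 _ (by omega) _ (by omega) q2
        omega
      · have := hx.2 _ (by omega) _ (by omega) q1
        omega
    have hcyc : (Walk.cons (hHG hj0.symm) p).IsCycle := by
      rw [Walk.cons_isCycle_iff]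
      refine ⟨hp, fun h => ?_⟩
      rw [Sym2.eq_swap] at h
      have := hpe j hjk h
      omega
    have := hG _ _ hcyc (x 0) (by simp) (x i) (by
      rw [Walk.support_cons]
      exact List.mem_cons_of_mem _ ((hs _).2 ⟨i, by omega, by omega, rfl⟩)) (hHG hi0)
    rw [Walk.edges_cons, List.mem_cons] at this
    rcases this with h | h
    · rw [Sym2.eq_iff] at h
      rcases h with ⟨q1, q2⟩ | ⟨q1, q2⟩
      · have := hx.2 _ (by omega) _ (by omega) q1
        omega
      · have := hx.2 _ (by omega) _ (by omega) q2
        omega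
    · have := hpe i (by omega) h
      omega
  have hi2 : i ≠ 1 := by rintro rfl; exact hc1 rfl
  have hj2 : j ≠ 1 := by rintro rfl; exact hd1 rfl
  have hij : i ≠ j := by rintro rfl; exact hdc rfl
  rcases lt_or_gt_of_ne hij with h | h
  · exact key i j (by omega) h hjk hc hd
  · exact key j i (by omega) h hik hd hc

/-- Among all longest paths choose one whose first vertex has a neighbor as early as possible,
beyond the second vertex; reversing the corresponding initial segment gives a second chord and
a `K₄` minor. -/
lemma not_seriesParallel_of_three_le (hHG : H ≤ G) {a b : V} (hab : H.Adj a b)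
    (h3 : ∀ x y, H.Adj x y → ∀ a b, ∃ c, H.Adj x c ∧ c ≠ a ∧ c ≠ b) : ¬ SeriesParallel G := by
  classical
  intro hG
  obtain ⟨k, x0, hk, hx0, hmax⟩ := exists_longest_path hab
  have hex : ∃ i, 2 ≤ i ∧ i ≤ k ∧ ∃ x, IsP H k x ∧ H.Adj (x 0) (x i) := by
    obtain ⟨c, hc, hc1, -⟩ := h3 _ _ (hx0.1 0 hk) (x0 1) (x0 1)
    obtain ⟨i, hi1, hik, rfl⟩ := hmax x0 hx0 c hc
    have hi2 : i ≠ 1 := by rintro rfl; exact hc1 rfl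
    exact ⟨i, by omega, hik, x0, hx0, hc⟩
  set i := Nat.find hex with hi
  obtain ⟨hi2, hik, x, hx, hxi⟩ : 2 ≤ i ∧ i ≤ k ∧ ∃ x, IsP H k x ∧ H.Adj (x 0) (x i) :=
    Nat.find_spec hex
  have hmin : ∀ z, IsP H k z → ∀ m, 2 ≤ m → m ≤ k → H.Adj (z 0) (z m) → i ≤ m :=
    fun z hz m h2 hmk hm => Nat.find_min' hex ⟨h2, hmk, z, hz, hm⟩
  obtain ⟨j, hij, hjk, hj⟩ : ∃ j, i < j ∧ j ≤ k ∧ H.Adj (x 0) (x j) := by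
    obtain ⟨c, hc, hc1, hci⟩ := h3 _ _ hxi (x 1) (x i)
    obtain ⟨j, hj1, hjk, rfl⟩ := hmax x hx c hc
    have hj2 : j ≠ 1 := by rintro rfl; exact hc1 rfl
    have hj3 : j ≠ i := fun h => hci (by rw [h])
    have := hmin x hx j (by omega) hjk hc
    exact ⟨j, by omega, hjk, hc⟩
  obtain ⟨l, hil, hlk, hl⟩ : ∃ l, i < l ∧ l ≤ k ∧ H.Adj (x (i - 1)) (x l) := by
    -- the edge from `x 0` to `x i` allows the initial segment `x 0, …, x (i - 1)` to be reversed
    let z : ℕ → V := fun m => if m < i then x (i - 1 - m) else x m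
    have hz1 : ∀ m, m < i → z m = x (i - 1 - m) := fun m hm => by simp [z, hm]
    have hz2 : ∀ m, i ≤ m → z m = x m := fun m hm => by simp [z, hm]
    have hz : IsP H k z := by
      constructor
      · intro m hm
        rcases Nat.lt_or_ge (m + 1) i with h | h
        · rw [hz1 m (by omega), hz1 (m + 1) h]
          have := (hx.1 (i - 1 - (m + 1)) (by omega)).symm
          rwa [show i - 1 - (m + 1) + 1 = i - 1 - m by omega] at this
        · rcases Nat.lt_or_ge m i with h' | h'
          · obtain rfl : m = i - 1 := by omega
            rw [hz1 _ h', hz2 _ h, Nat.sub_self, Nat.sub_add_cancel (by omega)]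
            exact hxi
          · rw [hz2 _ h', hz2 _ h]
            exact hx.1 m hm
      · intro p hp q hq hpq
        rcases Nat.lt_or_ge p i with h | h <;> rcases Nat.lt_or_ge q i with h' | h'
        · rw [hz1 _ h, hz1 _ h'] at hpq
          have := hx.2 _ (by omega) _ (by omega) hpq
          omega
        · rw [hz1 _ h, hz2 _ h'] at hpq
          have := hx.2 _ (by omega) _ (by omega) hpq
          omega
        · rw [hz2 _ h, hz1 _ h'] at hpq
          have := hx.2 _ (by omega) _ (by omega) hpq
          omega
        · rw [hz2 _ h, hz2 _ h'] at hpq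
          exact hx.2 _ (by omega) _ (by omega) hpq
    obtain ⟨c, hc, hc1, hci⟩ := h3 _ _ (hz.1 0 hk) (z 1) (z i)
    obtain ⟨m, hm1, hmk, rfl⟩ := hmax z hz c hc
    have hm2 : m ≠ 1 := by rintro rfl; exact hc1 rfl
    have hm3 : m ≠ i := fun h => hci (by rw [h])
    have hm4 := hmin z hz m (by omega) hmk hc
    refine ⟨m, by omega, hmk, ?_⟩
    rwa [hz1 0 (by omega), hz2 m hm4, Nat.sub_zero] at hc
  obtain ⟨m, him, hmj, hml, hmk⟩ : ∃ m, i < m ∧ m ≤ j ∧ m ≤ l ∧ m ≤ k :=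
    ⟨min j l, by omega, by omega, by omega, by omega⟩
  refine hG ⟨fun w => x '' (![Set.Icc 0 (i - 2), Set.Icc (i - 1) (i - 1), Set.Icc i (m - 1),
    Set.Icc m k] w), ?_, ?_, ?_⟩
  · intro w
    fin_cases w
    · exact hx.connected hHG (by omega) (by omega)
    · exact hx.connected hHG (by omega) (by omega)
    · exact hx.connected hHG (by omega) (by omega)
    · exact hx.connected hHG (by omega) (by omega)
  · have main : ∀ a b c d, (b < c ∨ d < a) → b ≤ k → d ≤ k →
        Disjoint (x '' Set.Icc a b) (x '' Set.Icc c d) := by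
      intro a b c d h hb hd
      rw [Set.disjoint_left]
      rintro _ ⟨p, ⟨hp1, hp2⟩, rfl⟩ ⟨q, ⟨hq1, hq2⟩, hpq⟩
      have := hx.2 _ (by omega) _ (by omega) hpq
      omega
    intro w1 w2 hw
    fin_cases w1 <;> fin_cases w2 <;> first
      | exact absurd rfl hw
      | exact main _ _ _ _ (by omega) (by omega) (by omega)
  · have main : ∀ a b c d p q, a ≤ p → p ≤ b → c ≤ q → q ≤ d → H.Adj (x p) (x q) →
        (∃ v₁ ∈ x '' Set.Icc a b, ∃ v₂ ∈ x '' Set.Icc c d, G.Adj v₁ v₂) ∧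
        (∃ v₁ ∈ x '' Set.Icc c d, ∃ v₂ ∈ x '' Set.Icc a b, G.Adj v₁ v₂) := by
      intro a b c d p q h1 h2 h3 h4 h
      exact ⟨⟨x p, ⟨p, ⟨h1, h2⟩, rfl⟩, x q, ⟨q, ⟨h3, h4⟩, rfl⟩, hHG h⟩,
        ⟨x q, ⟨q, ⟨h3, h4⟩, rfl⟩, x p, ⟨p, ⟨h1, h2⟩, rfl⟩, (hHG h).symm⟩⟩
    have e01 : H.Adj (x (i - 2)) (x (i - 1)) := by
      have := hx.1 (i - 2) (by omega)
      rwa [show i - 2 + 1 = i - 1 by omega] at this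
    have e12 : H.Adj (x (i - 1)) (x i) := by
      have := hx.1 (i - 1) (by omega)
      rwa [Nat.sub_add_cancel (by omega)] at this
    have e23 : H.Adj (x (m - 1)) (x m) := by
      have := hx.1 (m - 1) (by omega)
      rwa [Nat.sub_add_cancel (by omega)] at this
    have m01 := main 0 (i - 2) (i - 1) (i - 1) (i - 2) (i - 1) (by omega) le_rfl le_rfl le_rfl e01
    have m02 := main 0 (i - 2) i (m - 1) 0 i le_rfl (by omega) le_rfl (by omega) hxi
    have m03 := main 0 (i - 2) m k 0 j le_rfl (by omega) hmj hjk hj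
    have m12 := main (i - 1) (i - 1) i (m - 1) (i - 1) i le_rfl le_rfl le_rfl (by omega) e12
    have m13 := main (i - 1) (i - 1) m k (i - 1) l le_rfl le_rfl hml hlk hl
    have m23 := main i (m - 1) m k (m - 1) m (by omega) le_rfl le_rfl hmk e23
    intro w1 w2 hw
    fin_cases w1 <;> fin_cases w2 <;> first
      | exact absurd rfl hw.ne
      | exact m01.1 | exact m02.1 | exact m03.1 | exact m12.1 | exact m13.1 | exact m23.1
      | exact m01.2 | exact m02.2 | exact m03.2 | exact m12.2 | exact m13.2 | exact m23.2

open scoped Classical in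
lemma twoDeg_of_seriesParallel_or_chordless (hG : SeriesParallel G ∨ Chordless G) :
    TwoDeg (fun e : Sym2 V => e) G.edgeFinset := by
  intro F hF ⟨e, he⟩
  by_contra hcon
  push Not at hcon
  have hFG : ∀ a b, s(a, b) ∈ F → G.Adj a b := fun a b h => by simpa using hF h
  let H : SimpleGraph V :=
    { Adj := fun a b => s(a, b) ∈ F
      symm := ⟨fun a b h => by rwa [Sym2.eq_swap]⟩
      loopless := ⟨fun a h => (hFG a a h).ne rfl⟩ }
  have hHG : H ≤ G := fun a b h => hFG a b h
  have h3 : ∀ x y, H.Adj x y → ∀ a b, ∃ c, H.Adj x c ∧ c ≠ a ∧ c ≠ b := by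
    intro x y hxy a b
    have h1 : 2 < (F.filter (fun e => x ∈ e)).card :=
      hcon x (Finset.card_pos.2 ⟨s(x, y), Finset.mem_filter.2 ⟨hxy, by simp⟩⟩)
    obtain ⟨e, he, hne⟩ := Finset.exists_mem_notMem_of_card_lt_card
      (lt_of_le_of_lt (Finset.card_le_two (a := s(x, a)) (b := s(x, b))) h1)
    obtain ⟨he1, he2⟩ := Finset.mem_filter.1 he
    obtain ⟨c, rfl⟩ := Sym2.mem_iff_exists.1 he2
    refine ⟨c, he1, ?_, ?_⟩
    · rintro rfl; simp at hne
    · rintro rfl; simp at hne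
  obtain ⟨a, b, rfl⟩ : ∃ a b, e = s(a, b) := by
    induction e with
    | _ a b => exact ⟨a, b, rfl⟩
  rcases hG with hG | hG
  · exact not_seriesParallel_of_three_le hHG (a := a) (b := b) he h3 hG
  · exact not_chordless_of_three_le hHG (a := a) (b := b) he h3 hG

end LongestPath

/-! ### Minors inside a vertex set -/

section Minors

variable {V : Type*} {G : SimpleGraph V}

/-- `S` is nonempty and connected in `G`: a nonempty part of `S` that is closed under adjacency
within `S` is all of `S`. -/
def Conn (G : SimpleGraph V) (S : Set V) : Prop :=
  S.Nonempty ∧ ∀ C ⊆ S, C.Nonempty → (∀ u ∈ C, ∀ v ∈ S, G.Adj u v → v ∈ C) → S ⊆ C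

/-- The graph `K` is a minor of `G` with all branch sets inside `s`. -/
def MinorIn {W : Type*} (G : SimpleGraph V) (s : Set V) (K : SimpleGraph W) : Prop :=
  ∃ F : W → Set V, (∀ w, F w ⊆ s) ∧ (∀ w, Conn G (F w)) ∧
    (∀ w w', w ≠ w' → Disjoint (F w) (F w')) ∧
    ∀ w w', K.Adj w w' → ∃ u ∈ F w, ∃ v ∈ F w', G.Adj u v

/-- `W` is the vertex set of a component of the subgraph induced by `U`. -/
def IsComp (G : SimpleGraph V) (U W : Set V) : Prop :=
  W ⊆ U ∧ Conn G W ∧ ∀ u ∈ W, ∀ v ∈ U, G.Adj u v → v ∈ W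

lemma Conn.singleton (x : V) : Conn G {x} := by
  refine ⟨⟨x, rfl⟩, ?_⟩
  rintro C hC ⟨c, hc⟩ - y rfl
  have := hC hc
  rw [Set.mem_singleton_iff] at this
  exact this ▸ hc

lemma Conn.union {S T : Set V} (hS : Conn G S) (hT : Conn G T)
    (h : ∃ u ∈ S, ∃ v ∈ T, u = v ∨ G.Adj u v) : Conn G (S ∪ T) := by
  obtain ⟨u, hu, v, hv, huv⟩ := h
  refine ⟨hS.1.inl, fun C hC hne hcl => ?_⟩
  have h1 : (∃ c ∈ S, c ∈ C) → S ⊆ C := by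
    rintro ⟨c, hc, hcC⟩
    refine (hS.2 (S ∩ C) Set.inter_subset_left ⟨c, hc, hcC⟩ ?_).trans Set.inter_subset_right
    exact fun a ha b hb hab => ⟨hb, hcl a ha.2 b (Or.inl hb) hab⟩
  have h2 : (∃ c ∈ T, c ∈ C) → T ⊆ C := by
    rintro ⟨c, hc, hcC⟩
    refine (hT.2 (T ∩ C) Set.inter_subset_left ⟨c, hc, hcC⟩ ?_).trans Set.inter_subset_right
    exact fun a ha b hb hab => ⟨hb, hcl a ha.2 b (Or.inr hb) hab⟩
  have huC : u ∈ C ↔ v ∈ C := by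
    rcases huv with rfl | huv
    · rfl
    · exact ⟨fun h => hcl u h v (Or.inr hv) huv, fun h => hcl v h u (Or.inl hu) huv.symm⟩
  obtain ⟨c, hc⟩ := hne
  rcases hC hc with hcS | hcT
  · have h3 := h1 ⟨c, hcS, hc⟩
    exact Set.union_subset h3 (h2 ⟨v, hv, huC.1 (h3 hu)⟩)
  · have h3 := h2 ⟨c, hcT, hc⟩
    exact Set.union_subset (h1 ⟨u, hu, huC.2 (h3 hv)⟩) h3

lemma Conn.pair {x y : V} (h : x = y ∨ G.Adj x y) : Conn G {x, y} := by
  have := (Conn.singleton (G := G) x).union (Conn.singleton y) ⟨x, rfl, y, rfl, h⟩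
  rwa [Set.singleton_union] at this

lemma Conn.connected {S : Set V} (h : Conn G S) : (G.induce S).Connected := by
  rw [connected_iff]
  refine ⟨fun ⟨a, ha⟩ ⟨b, hb⟩ => ?_, h.1.to_subtype⟩
  have := h.2 {v | ∃ hv : v ∈ S, (G.induce S).Reachable ⟨a, ha⟩ ⟨v, hv⟩}
    (fun v hv => hv.1) ⟨a, ha, Reachable.refl _⟩ (by
      rintro u ⟨hu, hr⟩ v hv huv
      exact ⟨hv, hr.trans (Adj.reachable (by simpa using huv))⟩)
  exact (this hb).2

lemma exists_isComp {U : Set V} {u : V} (hu : u ∈ U) : ∃ W, IsComp G U W ∧ u ∈ W := by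
  let r : V → V → Prop := fun a b => a ∈ U ∧ b ∈ U ∧ G.Adj a b
  have hsymm : ∀ a b, Relation.ReflTransGen r a b → Relation.ReflTransGen r b a := by
    intro a b h
    induction h with
    | refl => exact .refl
    | tail _ h2 ih => exact .head ⟨h2.2.1, h2.1, h2.2.2.symm⟩ ih
  have hin : ∀ w, Relation.ReflTransGen r u w → w ∈ U := by
    intro w h
    cases h with
    | refl => exact hu
    | tail _ h => exact h.2.1
  refine ⟨{w | Relation.ReflTransGen r u w}, ⟨fun w hw => hin w hw, ⟨⟨u, .refl⟩, ?_⟩, ?_⟩, .refl⟩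
  · rintro C hC ⟨c, hc⟩ hcl w hw
    have hcw := (hsymm _ _ (hC hc)).trans hw
    have : w ∈ C ∧ Relation.ReflTransGen r u w := by
      clear hw
      induction hcw with
      | refl => exact ⟨hc, hC hc⟩
      | @tail a b h1 h2 ih =>
        have := ih.2.tail h2
        exact ⟨hcl _ ih.1 _ this h2.2.2, this⟩
    exact this.1
  · intro a ha b hb hab
    exact Relation.ReflTransGen.tail ha ⟨hin a ha, hb, hab⟩

lemma IsComp.subset {U W W' : Set V} (h : IsComp G U W) (h' : IsComp G U W') {u : V}
    (hu : u ∈ W) (hu' : u ∈ W') : W ⊆ W' :=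
  (h.2.1.2 (W ∩ W') Set.inter_subset_left ⟨u, hu, hu'⟩ fun a ha b hb hab =>
    ⟨hb, h'.2.2 a ha.2 b (h.1 hb) hab⟩).trans Set.inter_subset_right

lemma IsComp.eq {U W W' : Set V} (h : IsComp G U W) (h' : IsComp G U W') {u : V}
    (hu : u ∈ W) (hu' : u ∈ W') : W = W' :=
  (h.subset h' hu hu').antisymm (h'.subset h hu' hu)

/-- Minors of a contraction of `G` are minors of `G`; the vertex `p` of the contraction `G'`
stands for the connected set `B p`. -/
lemma MinorIn.of_contraction {W : Type*} {G' : SimpleGraph V} {s s' : Set V} {K : SimpleGraph W}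
    (B : V → Set V) (hB : ∀ p ∈ s', B p ⊆ s ∧ Conn G (B p))
    (hdisj : ∀ p ∈ s', ∀ q ∈ s', p ≠ q → Disjoint (B p) (B q))
    (hadj : ∀ p ∈ s', ∀ q ∈ s', G'.Adj p q → ∃ u ∈ B p, ∃ v ∈ B q, G.Adj u v)
    (h : MinorIn G' s' K) : MinorIn G s K := by
  obtain ⟨F, h1, h2, h3, h4⟩ := h
  refine ⟨fun w => ⋃ p ∈ F w, B p, fun w => Set.iUnion₂_subset fun p hp => (hB p (h1 w hp)).1,
    fun w => ?_, fun w w' hw => ?_, fun w w' hw => ?_⟩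
  · refine ⟨?_, fun C hC hne hcl => ?_⟩
    · obtain ⟨p, hp⟩ := (h2 w).1
      obtain ⟨u, hu⟩ := (hB p (h1 w hp)).2.1
      exact ⟨u, Set.mem_biUnion hp hu⟩
    · have hfib : ∀ p ∈ F w, ∀ c ∈ B p, c ∈ C → B p ⊆ C := by
        intro p hp c hc hcC
        refine ((hB p (h1 w hp)).2.2 (B p ∩ C) Set.inter_subset_left ⟨c, hc, hcC⟩ ?_).trans
          Set.inter_subset_right
        exact fun a ha b hb hab => ⟨hb, hcl a ha.2 b (Set.mem_biUnion hp hb) hab⟩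
      have := (h2 w).2 {p | p ∈ F w ∧ B p ⊆ C} (fun p hp => hp.1) (by
        obtain ⟨c, hc⟩ := hne
        obtain ⟨p, hp, hcp⟩ := Set.mem_iUnion₂.1 (hC hc)
        exact ⟨p, hp, hfib p hp c hcp hc⟩) (by
        rintro p ⟨hp, hpC⟩ q hq hpq
        obtain ⟨u, hu, v, hv, huv⟩ := hadj p (h1 w hp) q (h1 w hq) hpq
        exact ⟨hq, hfib q hq v hv (hcl u (hpC hu) v (Set.mem_biUnion hq hv) huv)⟩)
      exact Set.iUnion₂_subset fun p hp => (this hp).2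
  · rw [Set.disjoint_iUnion₂_left]
    intro p hp
    rw [Set.disjoint_iUnion₂_right]
    intro q hq
    refine hdisj p (h1 w hp) q (h1 w' hq) ?_
    rintro rfl
    exact Set.disjoint_left.1 (h3 w w' hw) hp hq
  · obtain ⟨p, hp, q, hq, hpq⟩ := h4 w w' hw
    obtain ⟨u, hu, v, hv, huv⟩ := hadj p (h1 w hp) q (h1 w' hq) hpq
    exact ⟨u, Set.mem_biUnion hp hu, v, Set.mem_biUnion hq hv, huv⟩

lemma MinorIn.hasMinor {W : Type*} {s : Set V} {K : SimpleGraph W} (h : MinorIn G s K) :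
    HasMinor G K := by
  obtain ⟨F, -, h2, h3, h4⟩ := h
  exact ⟨F, fun w => (h2 w).connected, h3, h4⟩

/-- `G` has neither a `K₅` minor nor a `K₃,₃` minor with branch sets inside `s`. -/
def PlanarIn (G : SimpleGraph V) (s : Set V) : Prop :=
  ¬ MinorIn G s (completeGraph (Fin 5)) ∧
  ¬ MinorIn G s (completeBipartiteGraph (Fin 3) (Fin 3))

lemma PlanarIn.mono {s s' : Set V} (h : PlanarIn G s) (hs : s' ⊆ s) : PlanarIn G s' :=
  ⟨fun ⟨F, h1, h2⟩ => h.1 ⟨F, fun w => (h1 w).trans hs, h2⟩,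
   fun ⟨F, h1, h2⟩ => h.2 ⟨F, fun w => (h1 w).trans hs, h2⟩⟩

lemma PlanarIn.of_contraction {G' : SimpleGraph V} {s s' : Set V} (h : PlanarIn G s)
    (B : V → Set V) (hB : ∀ p ∈ s', B p ⊆ s ∧ Conn G (B p))
    (hdisj : ∀ p ∈ s', ∀ q ∈ s', p ≠ q → Disjoint (B p) (B q))
    (hadj : ∀ p ∈ s', ∀ q ∈ s', G'.Adj p q → ∃ u ∈ B p, ∃ v ∈ B q, G.Adj u v) :
    PlanarIn G' s' :=
  ⟨fun h' => h.1 (h'.of_contraction B hB hdisj hadj),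
   fun h' => h.2 (h'.of_contraction B hB hdisj hadj)⟩

lemma not_planarIn_of_k33 {s : Set V} (A B : Fin 3 → Set V)
    (hs : ∀ i, A i ⊆ s ∧ B i ⊆ s) (hc : ∀ i, Conn G (A i) ∧ Conn G (B i))
    (hA : ∀ i j, i < j → Disjoint (A i) (A j)) (hB : ∀ i j, i < j → Disjoint (B i) (B j))
    (hAB : ∀ i j, Disjoint (A i) (B j)) (hadj : ∀ i j, ∃ u ∈ A i, ∃ v ∈ B j, G.Adj u v) :
    ¬ PlanarIn G s := by
  rintro ⟨-, h⟩
  refine h ⟨Sum.elim A B, ?_, ?_, ?_, ?_⟩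
  · rintro (i | i)
    exacts [(hs i).1, (hs i).2]
  · rintro (i | i)
    exacts [(hc i).1, (hc i).2]
  · rintro (i | i) (j | j) hij
    · rcases lt_trichotomy i j with h | rfl | h
      exacts [hA _ _ h, absurd rfl hij, (hA _ _ h).symm]
    · exact hAB i j
    · exact (hAB j i).symm
    · rcases lt_trichotomy i j with h | rfl | h
      exacts [hB _ _ h, absurd rfl hij, (hB _ _ h).symm]
  · rintro (i | i) (j | j) hij
    · simp at hij
    · exact hadj i j
    · obtain ⟨u, hu, v, hv, huv⟩ := hadj j i
      exact ⟨v, hv, u, hu, huv.symm⟩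
    · simp at hij

lemma not_planarIn_of_k5 {s : Set V} (A : Fin 5 → Set V)
    (hs : ∀ i, A i ⊆ s) (hc : ∀ i, Conn G (A i))
    (hA : ∀ i j, i < j → Disjoint (A i) (A j))
    (hadj : ∀ i j, i < j → ∃ u ∈ A i, ∃ v ∈ A j, G.Adj u v) :
    ¬ PlanarIn G s := by
  rintro ⟨h, -⟩
  refine h ⟨A, hs, hc, ?_, ?_⟩
  · intro i j hij
    rcases lt_or_gt_of_ne hij with h | h
    exacts [hA _ _ h, (hA _ _ h).symm]
  · intro i j hij
    rcases lt_or_gt_of_ne hij.ne with h | h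
    · exact hadj _ _ h
    · obtain ⟨u, hu, v, hv, huv⟩ := hadj j i h
      exact ⟨v, hv, u, hu, huv.symm⟩

end Minors

/-! ### Counting edges and triangles -/

section Counting

open scoped Classical

variable {V : Type*} (G : SimpleGraph V)

/-- The number of ordered adjacent pairs in `s`, i.e. twice the number of edges. -/
noncomputable def numD (s : Finset V) : ℤ :=
  ((s ×ˢ s).filter (fun p => G.Adj p.1 p.2)).card

/-- The number of ordered triangles in `s`, i.e. six times the number of triangles. -/
noncomputable def numT (s : Finset V) : ℤ :=
  ((s ×ˢ s ×ˢ s).filter (fun p => G.Adj p.1 p.2.1 ∧ G.Adj p.2.1 p.2.2 ∧ G.Adj p.2.2 p.1)).card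

/-- The adjacency indicator. -/
noncomputable def adjI (u v : V) : ℤ := if G.Adj u v then 1 else 0

lemma adjI_symm (u v : V) : adjI G u v = adjI G v u := by
  unfold adjI; rw [G.adj_comm]

lemma adjI_self (u : V) : adjI G u u = 0 := by simp [adjI]

lemma adjI_cases (u v : V) : (adjI G u v = 0 ∧ ¬ G.Adj u v) ∨ (adjI G u v = 1 ∧ G.Adj u v) := by
  unfold adjI; split_ifs with h <;> simp [h]

lemma numD_eq_sum (s : Finset V) : numD G s = ∑ u ∈ s, ∑ v ∈ s, adjI G u v := by
  unfold numD adjI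
  rw [Finset.card_filter, Finset.sum_product]
  push_cast
  rfl

lemma numT_eq_sum (s : Finset V) :
    numT G s = ∑ u ∈ s, ∑ v ∈ s, ∑ w ∈ s, adjI G u v * adjI G v w * adjI G w u := by
  unfold numT adjI
  rw [Finset.card_filter, Finset.sum_product]
  push_cast
  refine Finset.sum_congr rfl fun u _ => ?_
  rw [Finset.sum_product]
  refine Finset.sum_congr rfl fun v _ => Finset.sum_congr rfl fun w _ => ?_
  by_cases h1 : G.Adj u v <;> by_cases h2 : G.Adj v w <;> by_cases h3 : G.Adj w u <;>
    simp [h1, h2, h3]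

lemma numD_insert {x : V} {s : Finset V} (hx : x ∉ s) :
    numD G (insert x s) = numD G s + 2 * ∑ a ∈ s, adjI G x a := by
  simp only [numD_eq_sum, Finset.sum_insert hx, Finset.sum_add_distrib, adjI_self,
    adjI_symm G _ x]
  ring

lemma numT_insert {x : V} {s : Finset V} (hx : x ∉ s) :
    numT G (insert x s) = numT G s +
      3 * ∑ a ∈ s, ∑ b ∈ s, adjI G x a * adjI G a b * adjI G b x := by
  simp only [numT_eq_sum, Finset.sum_insert hx, Finset.sum_add_distrib, adjI_self,
    zero_mul, mul_zero, zero_add, Finset.sum_const_zero]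
  have h1 : ∀ u v : V, adjI G u v * adjI G v x * adjI G x u
      = adjI G x u * adjI G u v * adjI G v x := fun u v => by ring
  have h2 : (∑ u ∈ s, ∑ w ∈ s, adjI G u x * adjI G x w * adjI G w u)
      = ∑ a ∈ s, ∑ b ∈ s, adjI G x a * adjI G a b * adjI G b x := by
    rw [Finset.sum_comm]
    refine Finset.sum_congr rfl fun u _ => Finset.sum_congr rfl fun w _ => by ring
  simp only [h1, h2]
  ring

/-- Inclusion–exclusion for edges and triangles over two sets that cover all of them. -/
lemma numD_numT_glue {s A B : Finset V} (hs : s = A ∪ B)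
    (hcl : ∀ u ∈ A, u ∉ B → ∀ v ∈ B, v ∉ A → ¬ G.Adj u v) :
    numD G s + numD G (A ∩ B) = numD G A + numD G B ∧
    numT G s + numT G (A ∩ B) = numT G A + numT G B := by
  subst hs
  have key : ∀ u v, u ∈ A ∪ B → v ∈ A ∪ B → G.Adj u v → (u ∈ A ∧ v ∈ A) ∨ (u ∈ B ∧ v ∈ B) := by
    intro u v hu hv huv
    have h1 := hcl u
    have h2 := hcl v
    have h3 := huv.symm
    rw [Finset.mem_union] at hu hv
    by_cases a : u ∈ A <;> by_cases b : u ∈ B <;> by_cases c : v ∈ A <;> by_cases d : v ∈ B <;>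
      simp_all
  unfold numD numT
  constructor
  · rw [← Nat.cast_add, ← Nat.cast_add, Nat.cast_inj,
      ← Finset.card_union_add_card_inter ((A ×ˢ A).filter _) ((B ×ˢ B).filter _)]
    congr 2
    · ext ⟨u, v⟩
      simp only [Finset.mem_filter, Finset.mem_union, Finset.mem_product]
      constructor
      · rintro ⟨⟨hu, hv⟩, h⟩
        rcases key u v (Finset.mem_union.2 hu) (Finset.mem_union.2 hv) h with h' | h'
        exacts [Or.inl ⟨h', h⟩, Or.inr ⟨h', h⟩]
      · tauto
    · ext ⟨u, v⟩
      simp only [Finset.mem_filter, Finset.mem_inter, Finset.mem_product]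
      tauto
  · rw [← Nat.cast_add, ← Nat.cast_add, Nat.cast_inj,
      ← Finset.card_union_add_card_inter ((A ×ˢ A ×ˢ A).filter _) ((B ×ˢ B ×ˢ B).filter _)]
    congr 2
    · ext ⟨u, v, w⟩
      simp only [Finset.mem_filter, Finset.mem_union, Finset.mem_product]
      constructor
      · rintro ⟨⟨hu, hv, hw⟩, h⟩
        have h1 := key u v (Finset.mem_union.2 hu) (Finset.mem_union.2 hv) h.1
        have h2 := key v w (Finset.mem_union.2 hv) (Finset.mem_union.2 hw) h.2.1
        have h3 := key w u (Finset.mem_union.2 hw) (Finset.mem_union.2 hu) h.2.2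
        have : (u ∈ A ∧ v ∈ A ∧ w ∈ A) ∨ (u ∈ B ∧ v ∈ B ∧ w ∈ B) := by tauto
        rcases this with h' | h'
        exacts [Or.inl ⟨h', h⟩, Or.inr ⟨h', h⟩]
      · tauto
    · ext ⟨u, v, w⟩
      simp only [Finset.mem_filter, Finset.mem_inter, Finset.mem_product]
      tauto

lemma numD_numT_triangle {x y z : V} (h1 : G.Adj x y) (h2 : G.Adj y z) (h3 : G.Adj z x) :
    24 * (3 : ℤ) + numT G {x, y, z} ≤ 6 * numD G {x, y, z} + 48 := by
  have n1 : x ∉ ({y, z} : Finset V) := by simp [h1.ne, h3.ne']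
  have n2 : y ∉ ({z} : Finset V) := by simp [h2.ne]
  have e1 : adjI G x y = 1 := by simp [adjI, h1]
  have e2 : adjI G y z = 1 := by simp [adjI, h2]
  have e3 : adjI G x z = 1 := by simp [adjI, h3.symm]
  have d : numD G {z} = 0 := by simp [numD_eq_sum, adjI_self]
  have t : numT G {z} = 0 := by simp [numT_eq_sum, adjI_self]
  rw [numD_insert G n1, numD_insert G n2, numT_insert G n1, numT_insert G n2, d, t]
  simp only [Finset.sum_insert n2, Finset.sum_singleton, adjI_symm G z, adjI_symm G y x,
    adjI_self, e1, e2, e3]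
  norm_num

lemma numD_four {x a b y : V} (hn : [x, a, b, y].Nodup) :
    numD G {x, a, b, y} = 2 * (adjI G x a + adjI G x b + adjI G x y + adjI G a b + adjI G a y
      + adjI G b y) ∧
    numT G {x, a, b, y} = 6 * (adjI G x a * adjI G x b * adjI G a b
      + adjI G x a * adjI G x y * adjI G a y + adjI G x b * adjI G x y * adjI G b y
      + adjI G a b * adjI G a y * adjI G b y) := by
  simp only [List.nodup_cons, List.mem_cons, List.not_mem_nil, or_false, not_or,
    List.nodup_nil, not_false_eq_true, and_true] at hn
  obtain ⟨⟨h1, h2, h3⟩, ⟨h4, h5⟩, h6⟩ := hn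
  have n1 : x ∉ ({a, b, y} : Finset V) := by simp [h1, h2, h3]
  have n2 : a ∉ ({b, y} : Finset V) := by simp [h4, h5]
  have n3 : b ∉ ({y} : Finset V) := by simp [h6]
  have d : numD G {y} = 0 := by simp [numD_eq_sum, adjI_self]
  have t : numT G {y} = 0 := by simp [numT_eq_sum, adjI_self]
  rw [numD_insert G n1, numD_insert G n2, numD_insert G n3, numT_insert G n1, numT_insert G n2,
    numT_insert G n3, d, t]
  simp only [Finset.sum_insert n2, Finset.sum_insert n3, Finset.sum_singleton, adjI_symm G y,
    adjI_symm G _ x, adjI_symm G b a, adjI_self]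
  constructor <;> ring

lemma numD_numT_fourCycle {x a b y : V} (hn : [x, a, b, y].Nodup) (h1 : G.Adj x a)
    (h2 : G.Adj a b) (h3 : G.Adj b y) (h4 : G.Adj y x) :
    24 * (4 : ℤ) + numT G {x, a, b, y} ≤ 6 * numD G {x, a, b, y} + 48 := by
  obtain ⟨e1, e2⟩ := numD_four G hn
  rw [e1, e2, show adjI G x a = 1 by simp [adjI, h1], show adjI G a b = 1 by simp [adjI, h2],
    show adjI G b y = 1 by simp [adjI, h3], show adjI G x y = 1 by simp [adjI, h4.symm]]
  rcases adjI_cases G x b with ⟨h, -⟩ | ⟨h, -⟩ <;> rcases adjI_cases G a y with ⟨h', -⟩ | ⟨h', -⟩ <;>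
    rw [h, h'] <;> norm_num

lemma numD_le_of_card_four {s : Finset V} (hs : s.card = 4) :
    6 * numD G s + 48 ≤ 24 * (s.card : ℤ) + numT G s := by
  obtain ⟨x, s', hx, rfl, hs'⟩ := Finset.card_eq_succ.1 hs
  obtain ⟨a, b, y, h1, h2, h3, rfl⟩ := Finset.card_eq_three.1 hs'
  simp only [Finset.mem_insert, Finset.mem_singleton, not_or] at hx
  obtain ⟨e1, e2⟩ := numD_four G (x := x) (a := a) (b := b) (y := y) (by simp; tauto)
  rw [hs, e1, e2]
  rcases adjI_cases G x a with ⟨g1, -⟩ | ⟨g1, -⟩ <;>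
  rcases adjI_cases G x b with ⟨g2, -⟩ | ⟨g2, -⟩ <;>
  rcases adjI_cases G x y with ⟨g3, -⟩ | ⟨g3, -⟩ <;>
  rcases adjI_cases G a b with ⟨g4, -⟩ | ⟨g4, -⟩ <;>
  rcases adjI_cases G a y with ⟨g5, -⟩ | ⟨g5, -⟩ <;>
  rcases adjI_cases G b y with ⟨g6, -⟩ | ⟨g6, -⟩ <;>
  rw [g1, g2, g3, g4, g5, g6] <;> norm_num

/-- The graph obtained by contracting `y` into `x`. The vertex `y` is kept, with its adjacencies,
and is left out of the vertex sets considered. -/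
def contractEdge (x y : V) : SimpleGraph V where
  Adj p q := p ≠ q ∧ (G.Adj p q ∨ (p = x ∧ G.Adj y q) ∨ (q = x ∧ G.Adj p y))
  symm := ⟨by
    rintro p q ⟨h1, h2⟩
    refine ⟨h1.symm, ?_⟩
    rcases h2 with h | ⟨h, h'⟩ | ⟨h, h'⟩
    exacts [Or.inl h.symm, Or.inr (Or.inr ⟨h, h'.symm⟩), Or.inr (Or.inl ⟨h, h'.symm⟩)]⟩
  loopless := ⟨fun p h => h.1 rfl⟩

/-- The pages along the edge `xy`: triangles `x, y, a` (with `a = b`), and chordless four-cycles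
`x, a, b, y`. -/
noncomputable def pages (R : Finset V) (x y : V) : Finset (V × V) :=
  (R ×ˢ R).filter (fun p => G.Adj x p.1 ∧ G.Adj y p.2 ∧
    (p.1 = p.2 ∨ (G.Adj p.1 p.2 ∧ ¬ G.Adj y p.1 ∧ ¬ G.Adj x p.2)))

/-- The effect of contracting the edge `xy` on the numbers of edges and triangles: the
quantity `6 D - T` drops by at most `12` plus six times the number of pages. -/
lemma numD_numT_contract {R : Finset V} {x y : V} (hxy : G.Adj x y) (hx : x ∉ R) (hy : y ∉ R) :
    6 * numD G (insert x (insert y R)) - numT G (insert x (insert y R)) ≤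
    6 * numD (contractEdge G x y) (insert x R) - numT (contractEdge G x y) (insert x R)
      + 12 + 6 * (pages G R x y).card := by
  have hx' : x ∉ insert y R := by simp [hx, hxy.ne]
  set G' := contractEdge G x y with hG'
  have eR : ∀ a ∈ R, ∀ b ∈ R, adjI G' a b = adjI G a b := by
    intro a ha b hb
    have h1 : a ≠ x := fun h => hx (h ▸ ha)
    have h2 : b ≠ x := fun h => hx (h ▸ hb)
    have : G'.Adj a b ↔ G.Adj a b := by
      simp only [hG', contractEdge, h1, h2, false_and, or_false]
      exact ⟨fun h => h.2, fun h => ⟨h.ne, h⟩⟩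
    simp only [adjI, this]
  have ex : ∀ a ∈ R, adjI G' x a = adjI G x a + adjI G y a - adjI G x a * adjI G y a := by
    intro a ha
    have h1 : a ≠ x := fun h => hx (h ▸ ha)
    have : G'.Adj x a ↔ G.Adj x a ∨ G.Adj y a := by
      simp [hG', contractEdge, h1, h1.symm]
    simp only [adjI, this]
    by_cases h1 : G.Adj x a <;> by_cases h2 : G.Adj y a <;> simp [h1, h2]
  have exy : adjI G x y = 1 := by simp [adjI, hxy]
  have hD : numD G' R = numD G R := by
    rw [numD_eq_sum, numD_eq_sum]
    exact Finset.sum_congr rfl fun a ha => Finset.sum_congr rfl fun b hb => eR a ha b hb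
  have hT : numT G' R = numT G R := by
    rw [numT_eq_sum, numT_eq_sum]
    refine Finset.sum_congr rfl fun a ha => Finset.sum_congr rfl fun b hb =>
      Finset.sum_congr rfl fun c hc => ?_
    rw [eR a ha b hb, eR b hb c hc, eR c hc a ha]
  set τ : ℤ := ∑ a ∈ R, adjI G x a * adjI G y a with hτ
  let n : V → V → ℤ := fun a b =>
    adjI G x a * adjI G y b * adjI G a b * (1 - adjI G y a) * (1 - adjI G x b)
  set q : ℤ := ∑ a ∈ R, ∑ b ∈ R, n a b with hq
  have hp : ((pages G R x y).card : ℤ) = τ + q := by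
    unfold pages
    rw [Finset.card_filter, Finset.sum_product, hτ, hq, ← Finset.sum_add_distrib]
    push_cast
    refine Finset.sum_congr rfl fun a ha => ?_
    have : adjI G x a * adjI G y a
        = ∑ b ∈ R, if a = b then adjI G x a * adjI G y b else 0 := by
      rw [Finset.sum_ite_eq, if_pos ha]
    rw [this, ← Finset.sum_add_distrib]
    refine Finset.sum_congr rfl fun b hb => ?_
    simp only [n]
    by_cases hab : a = b
    · subst hab
      rcases adjI_cases G x a with ⟨g1, g1'⟩ | ⟨g1, g1'⟩ <;>
      rcases adjI_cases G y a with ⟨g2, g2'⟩ | ⟨g2, g2'⟩ <;> simp [g1, g1', g2, g2']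
    · rcases adjI_cases G x a with ⟨g1, g1'⟩ | ⟨g1, g1'⟩ <;>
      rcases adjI_cases G y b with ⟨g2, g2'⟩ | ⟨g2, g2'⟩ <;>
      rcases adjI_cases G a b with ⟨g3, g3'⟩ | ⟨g3, g3'⟩ <;>
      rcases adjI_cases G y a with ⟨g4, g4'⟩ | ⟨g4, g4'⟩ <;>
      rcases adjI_cases G x b with ⟨g5, g5'⟩ | ⟨g5, g5'⟩ <;>
      simp [g1, g1', g2, g2', g3, g3', g4, g4', g5, g5', hab]
  have hD1 : numD G (insert x (insert y R)) = numD G R + 2 * ∑ a ∈ R, adjI G y a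
      + 2 * (1 + ∑ a ∈ R, adjI G x a) := by
    rw [numD_insert G hx', numD_insert G hy, Finset.sum_insert hy, exy]
  have hD2 : numD G' (insert x R) = numD G R
      + 2 * (∑ a ∈ R, adjI G x a + ∑ a ∈ R, adjI G y a - τ) := by
    rw [numD_insert G' hx, hD, hτ, ← Finset.sum_add_distrib, ← Finset.sum_sub_distrib,
      Finset.sum_congr rfl ex]
  have hT1 : numT G (insert x (insert y R)) = numT G R
      + 3 * (∑ a ∈ R, ∑ b ∈ R, adjI G y a * adjI G a b * adjI G b y)
      + 3 * (∑ a ∈ R, ∑ b ∈ R, adjI G x a * adjI G a b * adjI G b x) + 6 * τ := by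
    rw [numT_insert G hx', numT_insert G hy, Finset.sum_insert hy, Finset.sum_insert hy]
    simp only [Finset.sum_insert hy, Finset.sum_add_distrib]
    rw [adjI_self, exy, adjI_symm G y x, exy]
    have e1 : ∑ b ∈ R, 1 * adjI G y b * adjI G b x = τ := by
      refine Finset.sum_congr rfl fun b _ => ?_
      rw [adjI_symm G b x]; ring
    have e2 : ∑ a ∈ R, adjI G x a * adjI G a y * 1 = τ := by
      refine Finset.sum_congr rfl fun b _ => ?_
      rw [adjI_symm G b y]; ring
    rw [e1, e2]; ring
  have hT2 : numT G' (insert x R) ≤ numT G R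
      + 3 * (∑ a ∈ R, ∑ b ∈ R, adjI G y a * adjI G a b * adjI G b y)
      + 3 * (∑ a ∈ R, ∑ b ∈ R, adjI G x a * adjI G a b * adjI G b x) + 6 * q := by
    rw [numT_insert G' hx, hT]
    have hq2 : 2 * q = ∑ a ∈ R, ∑ b ∈ R, (n a b + n b a) := by
      simp only [Finset.sum_add_distrib]
      rw [Finset.sum_comm (f := fun a b => n b a)]
      ring
    have : ∑ a ∈ R, ∑ b ∈ R, adjI G' x a * adjI G' a b * adjI G' b x ≤
        (∑ a ∈ R, ∑ b ∈ R, adjI G y a * adjI G a b * adjI G b y)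
        + (∑ a ∈ R, ∑ b ∈ R, adjI G x a * adjI G a b * adjI G b x) + 2 * q := by
      rw [hq2]
      simp only [← Finset.sum_add_distrib]
      refine Finset.sum_le_sum fun a ha => Finset.sum_le_sum fun b hb => ?_
      rw [adjI_symm G' b x, ex a ha, ex b hb, eR a ha b hb]
      simp only [n]
      rw [adjI_symm G b y, adjI_symm G b x, adjI_symm G b a]
      rcases adjI_cases G x a with ⟨g1, -⟩ | ⟨g1, -⟩ <;>
      rcases adjI_cases G y b with ⟨g2, -⟩ | ⟨g2, -⟩ <;>
      rcases adjI_cases G a b with ⟨g3, -⟩ | ⟨g3, -⟩ <;>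
      rcases adjI_cases G y a with ⟨g4, -⟩ | ⟨g4, -⟩ <;>
      rcases adjI_cases G x b with ⟨g5, -⟩ | ⟨g5, -⟩ <;>
      rw [g1, g2, g3, g4, g5] <;> norm_num
    linarith
  rw [hp, hD1, hD2, hT1]
  linarith

end Counting

/-! ### An edge bound for graphs without `K₅` and `K₃,₃` minors -/

section EdgeBound

open scoped Classical

variable {V : Type*} {G : SimpleGraph V}

/-- `S` does not separate `s`: the graph induced on `s \ S` is connected (or empty). -/
def NonSep (G : SimpleGraph V) (s S : Set V) : Prop :=
  ∀ C : Set V, C ⊆ s \ S → C.Nonempty →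
    (∀ u ∈ C, ∀ v ∈ s \ S, G.Adj u v → v ∈ C) → s \ S ⊆ C

/-- No triangle (the case `a = b`) and no four-cycle `x, a, b, y` separates `s`. -/
def ShortNonSep (G : SimpleGraph V) (s : Set V) : Prop :=
  ∀ x ∈ s, ∀ a ∈ s, ∀ b ∈ s, ∀ y ∈ s, a ≠ y → x ≠ b → G.Adj x a → G.Adj y b → G.Adj x y →
    (a = b ∨ G.Adj a b) → NonSep G s {x, a, b, y}

/-- Two vertices `y₁, y₂` with three common neighbors, together with a component of the remaining
vertices, give a `K₃,₃` minor. -/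
lemma ShortNonSep.not_k23 {s : Set V} (hns : ShortNonSep G s) (hP : PlanarIn G s)
    {y₁ y₂ : V} (c : Fin 3 → V) {z : V} (h1s : y₁ ∈ s) (h2s : y₂ ∈ s) (hcs : ∀ i, c i ∈ s)
    (hzs : z ∈ s) (h12 : y₁ ≠ y₂) (hc : ∀ i j, i < j → c i ≠ c j)
    (h1 : ∀ i, G.Adj y₁ (c i)) (h2 : ∀ i, G.Adj y₂ (c i))
    (hz1 : z ≠ y₁) (hz2 : z ≠ y₂) (hzc : ∀ i, z ≠ c i) : False := by
  set U : Set V := s \ ({y₁, y₂} ∪ Set.range c) with hU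
  have hzU : z ∈ U := ⟨hzs, by
    rintro ((h | h) | ⟨i, h⟩)
    exacts [hz1 h, hz2 h, hzc i h.symm]⟩
  obtain ⟨W, hW, hzW⟩ := exists_isComp (G := G) hzU
  have hWU : ∀ w ∈ W, w ∈ s ∧ w ≠ y₁ ∧ w ≠ y₂ ∧ ∀ i, w ≠ c i := by
    intro w hw
    obtain ⟨h3, h4⟩ := hW.1 hw
    exact ⟨h3, fun h => h4 (Or.inl (Or.inl h)), fun h => h4 (Or.inl (Or.inr h)),
      fun i h => h4 (Or.inr ⟨i, h.symm⟩)⟩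
  have hc' : ∀ i j, i ≠ j → c i ≠ c j := by
    intro i j hij
    rcases lt_or_gt_of_ne hij with h | h
    exacts [hc _ _ h, (hc _ _ h).symm]
  have htouch : ∀ i j k : Fin 3, i ≠ j → i ≠ k → j ≠ k → (∀ l, l = i ∨ l = j ∨ l = k) →
      ∃ u ∈ W, G.Adj u (c i) := by
    intro i j k hij hik hjk hall
    by_contra hcon
    push Not at hcon
    have := hns y₁ h1s (c j) (hcs j) y₂ h2s (c k) (hcs k) (hc' _ _ hjk) h12 (h1 j) (h2 k).symm
      (h1 k) (Or.inr (h2 j).symm) W (fun w hw => ?_) ⟨z, hzW⟩ (fun u hu v hv huv => ?_)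
      (show c i ∈ _ from ?_)
    · exact (hWU _ this).2.2.2 i rfl
    · obtain ⟨g1, g2, g3, g4⟩ := hWU w hw
      exact ⟨g1, by simp [g2, g3, g4]⟩
    · have hv2 := hv.2
      simp only [Set.mem_insert_iff, Set.mem_singleton_iff, not_or] at hv2
      refine hW.2.2 u hu v ⟨hv.1, ?_⟩ huv
      rintro ((h | h) | ⟨l, h⟩)
      · exact hv2.1 h
      · exact hv2.2.2.1 h
      · rcases hall l with rfl | rfl | rfl
        · exact hcon u hu (h ▸ huv)
        · exact hv2.2.1 h.symm
        · exact hv2.2.2.2 h.symm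
    · refine ⟨hcs i, ?_⟩
      simp [hc' _ _ hij, hc' _ _ hik, (h1 i).ne', (h2 i).ne']
  have hT : ∀ i, ∃ u ∈ W, G.Adj u (c i) := by
    intro i
    fin_cases i
    · exact htouch 0 1 2 (by decide) (by decide) (by decide) (by decide)
    · exact htouch 1 0 2 (by decide) (by decide) (by decide) (by decide)
    · exact htouch 2 0 1 (by decide) (by decide) (by decide) (by decide)
  refine not_planarIn_of_k33 ![{y₁}, {y₂}, W] (fun i => {c i}) ?_ ?_ ?_ ?_ ?_ ?_ hP
  · intro i
    refine ⟨?_, by simpa using hcs i⟩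
    fin_cases i
    · simpa using h1s
    · simpa using h2s
    · exact fun w hw => (hWU w hw).1
  · intro i
    refine ⟨?_, Conn.singleton _⟩
    fin_cases i
    exacts [Conn.singleton _, Conn.singleton _, hW.2.1]
  · intro i j hij
    fin_cases i <;> fin_cases j <;> first
      | exact absurd hij (by decide)
      | exact Set.disjoint_singleton.2 h12
      | exact Set.disjoint_singleton_left.2 fun h => (hWU _ h).2.1 rfl
      | exact Set.disjoint_singleton_left.2 fun h => (hWU _ h).2.2.1 rfl
  · intro i j hij
    exact Set.disjoint_singleton.2 (hc i j hij)
  · intro i j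
    fin_cases i
    · exact Set.disjoint_singleton.2 (h1 j).ne
    · exact Set.disjoint_singleton.2 (h2 j).ne
    · exact Set.disjoint_singleton_right.2 fun h => (hWU _ h).2.2.2 j rfl
  · intro i j
    fin_cases i
    · exact ⟨y₁, rfl, c j, rfl, h1 j⟩
    · exact ⟨y₂, rfl, c j, rfl, h2 j⟩
    · obtain ⟨u, hu, h⟩ := hT j
      exact ⟨u, hu, c j, rfl, h⟩

/-- Three disjoint pages `{a i, b i}` along an edge `xy` give a `K₅` or a `K₃,₃` minor. -/
lemma ShortNonSep.not_three_pages {s : Set V} (hns : ShortNonSep G s) (hP : PlanarIn G s)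
    {x y : V} (a b : Fin 3 → V) (hxs : x ∈ s) (hys : y ∈ s) (has : ∀ i, a i ∈ s)
    (hbs : ∀ i, b i ∈ s) (hay : ∀ i, a i ≠ y) (hbx : ∀ i, b i ≠ x) (hxy : G.Adj x y)
    (hxa : ∀ i, G.Adj x (a i)) (hyb : ∀ i, G.Adj y (b i)) (hab : ∀ i, a i = b i ∨ G.Adj (a i) (b i))
    (haa : ∀ i j, i ≠ j → a i ≠ a j) (hbb : ∀ i j, i ≠ j → b i ≠ b j)
    (habn : ∀ i j, i ≠ j → a i ≠ b j) : False := by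
  let P : Fin 3 → Set V := fun i => {a i, b i}
  have hPc : ∀ i, Conn G (P i) := fun i => Conn.pair (hab i)
  have hPs : ∀ i, P i ⊆ s := fun i => by
    rintro v (rfl | rfl)
    exacts [has i, hbs i]
  have hxP : ∀ i, x ∉ P i := by
    rintro i (h | h)
    exacts [(hxa i).ne h, hbx i h.symm]
  have hyP : ∀ i, y ∉ P i := by
    rintro i (h | h)
    exacts [hay i h.symm, (hyb i).ne h]
  have hPP : ∀ i j, i ≠ j → ∀ v ∈ P i, v ∉ P j := by
    rintro i j hij v (rfl | rfl) (h | h)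
    exacts [haa i j hij h, habn i j hij h, habn j i hij.symm h.symm, hbb i j hij h]
  set U : Set V := s \ ({x, y} ∪ ⋃ i, P i) with hU
  have hUm : ∀ u, u ∈ U ↔ u ∈ s ∧ u ≠ x ∧ u ≠ y ∧ ∀ i, u ∉ P i := by
    intro u
    simp only [hU, Set.mem_sdiff, Set.mem_union, Set.mem_insert_iff, Set.mem_singleton_iff,
      Set.mem_iUnion, not_or, not_exists, and_assoc]
  let Touch : Set V → Fin 3 → Prop := fun W i => ∃ u ∈ W, ∃ v ∈ P i, G.Adj u v
  by_cases hall : ∃ W, IsComp G U W ∧ ∀ i, Touch W i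
  · obtain ⟨W, hW, hWt⟩ := hall
    have hWU := fun w hw => (hUm w).1 (hW.1 hw)
    refine not_planarIn_of_k33 ![{x}, {y}, W] P ?_ ?_ ?_ ?_ ?_ ?_ hP
    · intro i
      refine ⟨?_, hPs i⟩
      fin_cases i
      · simpa using hxs
      · simpa using hys
      · exact fun w hw => (hWU w hw).1
    · intro i
      refine ⟨?_, hPc i⟩
      fin_cases i
      exacts [Conn.singleton _, Conn.singleton _, hW.2.1]
    · intro i j hij
      fin_cases i <;> fin_cases j <;> first
        | exact absurd hij (by decide)
        | exact Set.disjoint_singleton.2 hxy.ne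
        | exact Set.disjoint_singleton_left.2 fun h => (hWU _ h).2.1 rfl
        | exact Set.disjoint_singleton_left.2 fun h => (hWU _ h).2.2.1 rfl
    · exact fun i j hij => Set.disjoint_left.2 (hPP i j hij.ne)
    · intro i j
      fin_cases i
      · exact Set.disjoint_singleton_left.2 (hxP j)
      · exact Set.disjoint_singleton_left.2 (hyP j)
      · exact Set.disjoint_left.2 fun v hv => (hWU v hv).2.2.2 j
    · intro i j
      fin_cases i
      · exact ⟨x, rfl, a j, Or.inl rfl, hxa j⟩
      · exact ⟨y, rfl, b j, Or.inr rfl, hyb j⟩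
      · exact hWt j
  -- any two pages are joined by an edge or by a component of `U`
  have hlink : ∀ i j k : Fin 3, i ≠ j → i ≠ k → j ≠ k → (∀ l, l = i ∨ l = j ∨ l = k) →
      (∃ u ∈ P i, ∃ v ∈ P j, G.Adj u v) ∨ ∃ W, IsComp G U W ∧ Touch W i ∧ Touch W j := by
    intro i j k hij hik hjk hl
    by_contra hcon
    push Not at hcon
    obtain ⟨hno, hnoW⟩ := hcon
    have hk : ∀ v, v ∈ ({x, a k, b k, y} : Set V) ↔ v = x ∨ v = y ∨ v ∈ P k := by
      intro v
      simp only [P, Set.mem_insert_iff, Set.mem_singleton_iff]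
      tauto
    have := hns x hxs (a k) (has k) (b k) (hbs k) y hys (hay k) (hbx k).symm (hxa k) (hyb k) hxy
      (hab k) (P i ∪ {u | ∃ W, IsComp G U W ∧ Touch W i ∧ u ∈ W}) ?_ (hPc i).1.inl ?_
      (show a j ∈ _ from ?_)
    · rcases this with h | ⟨W, hW, -, h⟩
      · exact hPP i j hij _ h (Or.inl rfl)
      · exact ((hUm _).1 (hW.1 h)).2.2.2 j (Or.inl rfl)
    · rintro u (hu | ⟨W, hW, -, hu⟩)
      · refine ⟨hPs i hu, ?_⟩
        rw [hk]
        rintro (rfl | rfl | h)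
        exacts [hxP i hu, hyP i hu, hPP i k hik u hu h]
      · obtain ⟨g1, g2, g3, g4⟩ := (hUm u).1 (hW.1 hu)
        refine ⟨g1, ?_⟩
        rw [hk]
        rintro (h | h | h)
        exacts [g2 h, g3 h, g4 k h]
    · intro u hu v hv huv
      have hv2 := hv.2
      rw [hk, not_or, not_or] at hv2
      by_cases hvi : v ∈ P i
      · exact Or.inl hvi
      by_cases hvj : v ∈ P j
      · exfalso
        rcases hu with hu | ⟨W, hW, ht, hu⟩
        · exact hno u hu v hvj huv
        · exact hnoW W hW ht ⟨u, hu, v, hvj, huv⟩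
      · have hvU : v ∈ U := (hUm v).2 ⟨hv.1, hv2.1, hv2.2.1, fun l => by
          rcases hl l with rfl | rfl | rfl
          exacts [hvi, hvj, hv2.2.2]⟩
        rcases hu with hu | ⟨W, hW, ht, hu⟩
        · obtain ⟨W, hW, hvW⟩ := exists_isComp (G := G) hvU
          exact Or.inr ⟨W, hW, ⟨v, hvW, u, hu, huv.symm⟩, hvW⟩
        · exact Or.inr ⟨W, hW, ht, hW.2.2 u hu v hvU huv⟩
    · refine ⟨has j, ?_⟩
      rw [hk]
      rintro (h | h | h)
      exacts [(hxa j).ne' h, hay j h, hPP j k hjk _ (Or.inl rfl) h]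
  have hQ : ∀ i j k : Fin 3, i ≠ j → i ≠ k → j ≠ k → (∀ l, l = i ∨ l = j ∨ l = k) →
      ∃ Q ⊆ U, Conn G (P i ∪ Q) ∧ (∃ u ∈ P i ∪ Q, ∃ v ∈ P j, G.Adj u v) ∧
        (Q.Nonempty → IsComp G U Q ∧ Touch Q i ∧ Touch Q j) := by
    intro i j k hij hik hjk hl
    rcases hlink i j k hij hik hjk hl with ⟨u, hu, v, hv, huv⟩ | ⟨W, hW, hi, hj⟩
    · refine ⟨∅, Set.empty_subset _, ?_, ⟨u, Or.inl hu, v, hv, huv⟩, fun h => ?_⟩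
      · rw [Set.union_empty]; exact hPc i
      · exact absurd h Set.not_nonempty_empty
    · refine ⟨W, hW.1, ?_, ?_, fun _ => ⟨hW, hi, hj⟩⟩
      · obtain ⟨u, hu, v, hv, huv⟩ := hi
        exact (hPc i).union hW.2.1 ⟨v, hv, u, hu, Or.inr huv.symm⟩
      · obtain ⟨u, hu, v, hv, huv⟩ := hj
        exact ⟨u, Or.inr hu, v, hv, huv⟩
  obtain ⟨Q0, hQ0U, hQ0c, hQ0a, hQ0⟩ := hQ 0 1 2 (by decide) (by decide) (by decide) (by decide)
  obtain ⟨Q1, hQ1U, hQ1c, hQ1a, hQ1⟩ := hQ 1 2 0 (by decide) (by decide) (by decide) (by decide)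
  obtain ⟨Q2, hQ2U, hQ2c, hQ2a, hQ2⟩ := hQ 2 0 1 (by decide) (by decide) (by decide) (by decide)
  have hQQ : ∀ (Q Q' : Set V) (i j k : Fin 3), (∀ l, l = i ∨ l = j ∨ l = k) →
      (Q.Nonempty → IsComp G U Q ∧ Touch Q i ∧ Touch Q j) →
      (Q'.Nonempty → IsComp G U Q' ∧ Touch Q' j ∧ Touch Q' k) → ∀ v ∈ Q, v ∉ Q' := by
    intro Q Q' i j k hl h h' v hv hv'
    obtain ⟨g1, g2, g3⟩ := h ⟨v, hv⟩
    obtain ⟨g1', g2', g3'⟩ := h' ⟨v, hv'⟩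
    have : Q = Q' := g1.eq g1' hv hv'
    subst this
    refine hall ⟨Q, g1, fun l => ?_⟩
    rcases hl l with rfl | rfl | rfl
    exacts [g2, g3, g3']
  have hPQ : ∀ i, ∀ Q ⊆ U, ∀ v ∈ P i, v ∉ Q := fun i Q hQU v hv hvQ =>
    ((hUm v).1 (hQU hvQ)).2.2.2 i hv
  have hdis : ∀ (i j : Fin 3) (Q Q' : Set V), i ≠ j → Q ⊆ U → Q' ⊆ U → (∀ v ∈ Q, v ∉ Q') →
      Disjoint (P i ∪ Q) (P j ∪ Q') := by
    intro i j Q Q' hij hQ hQ' hd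
    rw [Set.disjoint_left]
    rintro v (hv | hv) (hv' | hv')
    exacts [hPP i j hij v hv hv', hPQ i Q' hQ' v hv hv', hPQ j Q hQ v hv' hv, hd v hv hv']
  have h01 := hdis 0 1 Q0 Q1 (by decide) hQ0U hQ1U (hQQ Q0 Q1 0 1 2 (by decide) hQ0 hQ1)
  have h12 := hdis 1 2 Q1 Q2 (by decide) hQ1U hQ2U (hQQ Q1 Q2 1 2 0 (by decide) hQ1 hQ2)
  have h02 := (hdis 2 0 Q2 Q0 (by decide) hQ2U hQ0U (hQQ Q2 Q0 2 0 1 (by decide) hQ2 hQ0)).symm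
  have hx : ∀ i, ∀ Q ⊆ U, Disjoint {x} (P i ∪ Q) := fun i Q hQ => by
    rw [Set.disjoint_singleton_left]
    rintro (h | h)
    exacts [hxP i h, ((hUm x).1 (hQ h)).2.1 rfl]
  have hy : ∀ i, ∀ Q ⊆ U, Disjoint {y} (P i ∪ Q) := fun i Q hQ => by
    rw [Set.disjoint_singleton_left]
    rintro (h | h)
    exacts [hyP i h, ((hUm y).1 (hQ h)).2.2.1 rfl]
  have hsub : ∀ i, ∀ Q ⊆ U, P i ∪ Q ⊆ s := fun i Q hQ =>
    Set.union_subset (hPs i) (hQ.trans Set.sdiff_subset)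
  have hax : ∀ i, ∀ Q : Set V, ∃ u ∈ ({x} : Set V), ∃ v ∈ P i ∪ Q, G.Adj u v :=
    fun i Q => ⟨x, rfl, a i, Or.inl (Or.inl rfl), hxa i⟩
  have hay' : ∀ i, ∀ Q : Set V, ∃ u ∈ ({y} : Set V), ∃ v ∈ P i ∪ Q, G.Adj u v :=
    fun i Q => ⟨y, rfl, b i, Or.inl (Or.inr rfl), hyb i⟩
  refine not_planarIn_of_k5 ![{x}, {y}, P 0 ∪ Q0, P 1 ∪ Q1, P 2 ∪ Q2] ?_ ?_ ?_ ?_ hP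
  · intro i
    fin_cases i
    · simpa using hxs
    · simpa using hys
    exacts [hsub 0 Q0 hQ0U, hsub 1 Q1 hQ1U, hsub 2 Q2 hQ2U]
  · intro i
    fin_cases i
    exacts [Conn.singleton _, Conn.singleton _, hQ0c, hQ1c, hQ2c]
  · intro i j hij
    fin_cases i <;> fin_cases j <;> first
      | exact absurd hij (by decide)
      | exact Set.disjoint_singleton.2 hxy.ne
      | exact hx 0 Q0 hQ0U | exact hx 1 Q1 hQ1U | exact hx 2 Q2 hQ2U
      | exact hy 0 Q0 hQ0U | exact hy 1 Q1 hQ1U | exact hy 2 Q2 hQ2U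
      | exact h01 | exact h12 | exact h02
  · intro i j hij
    have g01 : ∃ u ∈ P 0 ∪ Q0, ∃ v ∈ P 1 ∪ Q1, G.Adj u v := by
      obtain ⟨u, hu, v, hv, h⟩ := hQ0a
      exact ⟨u, hu, v, Or.inl hv, h⟩
    have g12 : ∃ u ∈ P 1 ∪ Q1, ∃ v ∈ P 2 ∪ Q2, G.Adj u v := by
      obtain ⟨u, hu, v, hv, h⟩ := hQ1a
      exact ⟨u, hu, v, Or.inl hv, h⟩
    have g02 : ∃ u ∈ P 0 ∪ Q0, ∃ v ∈ P 2 ∪ Q2, G.Adj u v := by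
      obtain ⟨u, hu, v, hv, h⟩ := hQ2a
      exact ⟨v, Or.inl hv, u, hu, h.symm⟩
    fin_cases i <;> fin_cases j <;> first
      | exact absurd hij (by decide)
      | exact ⟨x, rfl, y, rfl, hxy⟩
      | exact hax 0 Q0 | exact hax 1 Q1 | exact hax 2 Q2
      | exact hay' 0 Q0 | exact hay' 1 Q1 | exact hay' 2 Q2
      | exact g01 | exact g12 | exact g02

end EdgeBound

section EdgeBoundInduction

open scoped Classical

variable {V : Type*} {G : SimpleGraph V}

lemma mem_pages {R : Finset V} {x y : V} {p : V × V} : p ∈ pages G R x y ↔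
    (p.1 ∈ R ∧ p.2 ∈ R) ∧ G.Adj x p.1 ∧ G.Adj y p.2 ∧
      (p.1 = p.2 ∨ (G.Adj p.1 p.2 ∧ ¬ G.Adj y p.1 ∧ ¬ G.Adj x p.2)) := by
  unfold pages
  rw [Finset.mem_filter, Finset.mem_product]

lemma swap_mem_pages {R : Finset V} {x y : V} {p : V × V} (h : p ∈ pages G R x y) :
    p.swap ∈ pages G R y x := by
  obtain ⟨⟨h1, h2⟩, h3, h4, h5⟩ := mem_pages.1 h
  exact mem_pages.2 ⟨⟨h2, h1⟩, h4, h3, h5.imp Eq.symm fun h => ⟨h.1.symm, h.2.2, h.2.1⟩⟩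

/-- Two pages with the same neighbor `a` of `x` would give `a` and `y` three common neighbors. -/
lemma ShortNonSep.pages_fst_ne {s : Set V} (hns : ShortNonSep G s) (hP : PlanarIn G s)
    {R : Finset V} {x y : V} (hR : ↑R ⊆ s) (hxs : x ∈ s) (hys : y ∈ s) (hxR : x ∉ R) (hyR : y ∉ R)
    (hxy : G.Adj x y) {p q r : V × V} (hp : p ∈ pages G R x y) (hq : q ∈ pages G R x y)
    (hr : r ∈ pages G R x y) (hpq : p ≠ q) (hpr : p ≠ r) (hqr : q ≠ r) : p.1 ≠ q.1 := by
  obtain ⟨a, b⟩ := p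
  obtain ⟨a', b'⟩ := q
  obtain ⟨c, d⟩ := r
  rintro h
  simp only at h
  subst h
  obtain ⟨⟨haR, hbR⟩, hxa, hyb, h1⟩ := mem_pages.1 hp
  obtain ⟨⟨-, hbR'⟩, -, hyb', h2⟩ := mem_pages.1 hq
  obtain ⟨⟨hcR, hdR⟩, hxc, hyd, -⟩ := mem_pages.1 hr
  simp only at haR hbR hxa hyb h1 hbR' hyb' h2 hcR hdR hxc hyd
  have hbb : b ≠ b' := fun h => hpq (by rw [h])
  have hne : ∀ v ∈ R, v ≠ x ∧ v ≠ y := fun v hv =>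
    ⟨fun h => hxR (h ▸ hv), fun h => hyR (h ▸ hv)⟩
  have h1' : G.Adj a b ∧ ¬ G.Adj y a ∧ ¬ G.Adj x b := by
    rcases h1 with h1 | h1
    · subst h1
      rcases h2 with h2 | h2
      exacts [absurd h2 hbb, absurd hyb h2.2.1]
    · exact h1
  have h2' : G.Adj a b' ∧ ¬ G.Adj y a ∧ ¬ G.Adj x b' := by
    rcases h2 with h2 | h2
    · subst h2
      exact absurd hyb' h1'.2.1
    · exact h2
  obtain ⟨z, hzR, hza, hzb, hzb'⟩ : ∃ z ∈ R, z ≠ a ∧ z ≠ b ∧ z ≠ b' := by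
    by_cases hca : c = a
    · subst hca
      exact ⟨d, hdR, fun h => h1'.2.1 (h ▸ hyd), fun h => hpr (by rw [h]), fun h => hqr (by rw [h])⟩
    · exact ⟨c, hcR, hca, fun h => h1'.2.2 (h ▸ hxc), fun h => h2'.2.2 (h ▸ hxc)⟩
  refine hns.not_k23 hP (y₁ := a) (y₂ := y) ![x, b, b'] (z := z) (hR haR) hys ?_ (hR hzR)
    (hne a haR).2 ?_ ?_ ?_ hza (hne z hzR).2 ?_
  · intro i; fin_cases i
    exacts [hxs, hR hbR, hR hbR']
  · intro i j hij
    fin_cases i <;> fin_cases j <;> first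
      | exact absurd hij (by decide)
      | exact (hne b hbR).1.symm
      | exact (hne b' hbR').1.symm
      | exact hbb
  · intro i; fin_cases i
    exacts [hxa.symm, h1'.1, h2'.1]
  · intro i; fin_cases i
    exacts [hxy.symm, hyb, hyb']
  · intro i; fin_cases i
    exacts [(hne z hzR).1, hzb, hzb']

/-- If every smaller set of at least four vertices satisfies the bound and `s` does not, then no
triangle and no four-cycle separates `s`, by gluing along it. -/
lemma shortNonSep_of_minimal {s : Finset V}
    (hIH : ∀ s' : Finset V, s' ⊂ s → 4 ≤ s'.card → 6 * numD G s' + 48 ≤ 24 * (s'.card : ℤ) + numT G s')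
    (hbad : 24 * (s.card : ℤ) + numT G s < 6 * numD G s + 48) : ShortNonSep G (s : Set V) := by
  intro x hx a ha b hb y hy hay hxb hxa hyb hxy hab C hC hCne hcl v hv
  by_contra hvC
  set S : Finset V := {x, a, b, y} with hS
  have hSc : (S : Set V) = {x, a, b, y} := by simp [hS]
  rw [← hSc] at hC hcl hv
  have hSs : S ⊆ s := by
    intro u hu
    simp only [hS, Finset.mem_insert, Finset.mem_singleton] at hu
    rcases hu with rfl | rfl | rfl | rfl
    exacts [hx, ha, hb, hy]
  have hgood : 3 ≤ S.card ∧ 24 * (S.card : ℤ) + numT G S ≤ 6 * numD G S + 48 := by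
    rcases hab with rfl | hab
    · have e : S = {x, a, y} := by simp [hS]
      have hc : S.card = 3 := by
        rw [e]; exact Finset.card_eq_three.2 ⟨x, a, y, hxb, hxy.ne, hay, rfl⟩
      rw [hc, e]
      exact ⟨le_rfl, numD_numT_triangle G hxa hyb.symm hxy.symm⟩
    · have hnd : [x, a, b, y].Nodup := by simp [hxa.ne, hxb, hxy.ne, hab.ne, hay, hyb.ne']
      have hc : S.card = 4 := by
        have := List.toFinset_card_of_nodup hnd
        simpa [hS] using this
      rw [hc]
      exact ⟨by norm_num, numD_numT_fourCycle G hnd hxa hab hyb.symm hxy.symm⟩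
  set A : Finset V := s.filter (fun u => u ∈ S ∨ u ∈ C) with hA
  set B : Finset V := s.filter (fun u => u ∉ C) with hB
  have hSC : ∀ u ∈ S, u ∉ C := fun u hu huC => (hC huC).2 hu
  have hAB : s = A ∪ B := by
    ext u
    simp only [hA, hB, Finset.mem_union, Finset.mem_filter]
    tauto
  have hABi : A ∩ B = S := by
    ext u
    have := hSC u
    have := @hSs u
    simp only [hA, hB, Finset.mem_inter, Finset.mem_filter]
    tauto
  have hvs : v ∈ s ∧ v ∉ S := hv
  obtain ⟨c, hc⟩ := hCne
  have hcs : c ∈ s ∧ c ∉ S := hC hc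
  have hSA : S ⊆ A := hABi ▸ Finset.inter_subset_left
  have hSB : S ⊆ B := hABi ▸ Finset.inter_subset_right
  have hcA : c ∈ A := by simp [hA, hcs.1, hc]
  have hcB : c ∉ B := by simp [hB, hc]
  have hvA : v ∉ A := by simp [hA, hvs.2, hvC]
  have hvB : v ∈ B := by simp [hB, hvs.1, hvC]
  have hAcard : 4 ≤ A.card :=
    lt_of_le_of_lt hgood.1 (Finset.card_lt_card ⟨hSA, fun h => hcs.2 (h hcA)⟩)
  have hBcard : 4 ≤ B.card :=
    lt_of_le_of_lt hgood.1 (Finset.card_lt_card ⟨hSB, fun h => hvs.2 (h hvB)⟩)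
  have h1 := hIH A ⟨Finset.filter_subset _ _, fun h => hvA (h hvs.1)⟩ hAcard
  have h2 := hIH B ⟨Finset.filter_subset _ _, fun h => hcB (h hcs.1)⟩ hBcard
  obtain ⟨g1, g2⟩ := numD_numT_glue G hAB (by
    intro u hu huB w hw hwA huw
    have huC : u ∈ C := by
      by_contra h
      exact huB (Finset.mem_filter.2 ⟨(Finset.mem_filter.1 hu).1, h⟩)
    have hw' := Finset.mem_filter.1 hw
    exact hw'.2 (hcl u huC w ⟨hw'.1, fun h =>
      hwA (Finset.mem_filter.2 ⟨hw'.1, Or.inl h⟩)⟩ huw))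
  rw [hABi] at g1 g2
  have hcard : s.card + S.card = A.card + B.card := by
    have := Finset.card_union_add_card_inter A B
    rwa [← hAB, hABi] at this
  have hcard' : (s.card : ℤ) + S.card = A.card + B.card := by exact_mod_cast hcard
  have := hgood.2
  linarith

/-- A set of `n ≥ 4` vertices with neither a `K₅` nor a `K₃,₃` minor spanning `m` edges and `t`
triangles satisfies `2 m + 8 ≤ 4 n + t`. -/
theorem numD_le_of_planarIn : ∀ (n : ℕ) (G : SimpleGraph V) (s : Finset V), s.card = n → 4 ≤ n →
    PlanarIn G (s : Set V) → 6 * numD G s + 48 ≤ 24 * (s.card : ℤ) + numT G s := by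
  intro n
  induction n using Nat.strong_induction_on with
  | _ n ih =>
  intro G s hn h4 hP
  rcases h4.eq_or_lt with h4 | h5
  · exact numD_le_of_card_four G (by omega)
  by_contra hbad
  push Not at hbad
  have hns : ShortNonSep G (s : Set V) := by
    refine shortNonSep_of_minimal (fun s' hs' h4' => ?_) hbad
    exact ih s'.card (hn ▸ Finset.card_lt_card hs') G s' rfl h4'
      (hP.mono (Finset.coe_subset.2 hs'.1))
  obtain ⟨x, hxs, y, hys, hxy⟩ : ∃ x ∈ s, ∃ y ∈ s, G.Adj x y := by
    by_contra hcon
    push Not at hcon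
    have h0 : numD G s = 0 := by
      unfold numD
      rw [Finset.filter_false_of_mem]
      · simp
      · rintro ⟨u, v⟩ huv
        rw [Finset.mem_product] at huv
        exact hcon u huv.1 v huv.2
    have hT : 0 ≤ numT G s := by unfold numT; positivity
    have : (5 : ℤ) ≤ s.card := by exact_mod_cast (by omega : 5 ≤ s.card)
    linarith
  set R : Finset V := (s.erase x).erase y with hR
  have hxR : x ∉ R := by simp [hR]
  have hyR : y ∉ R := by simp [hR]
  have hyx : y ∈ s.erase x := Finset.mem_erase.2 ⟨hxy.ne', hys⟩
  have hsR : s = insert x (insert y R) := by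
    rw [hR, Finset.insert_erase hyx, Finset.insert_erase hxs]
  have hRs : R ⊆ s := (Finset.erase_subset _ _).trans (Finset.erase_subset _ _)
  have hRcard : (insert x R).card + 1 = n := by
    rw [← hn, hsR, Finset.card_insert_of_notMem hxR,
      Finset.card_insert_of_notMem (by simp [hxy.ne, hxR]), Finset.card_insert_of_notMem hyR]
  have hP' : PlanarIn (contractEdge G x y) ((insert x R : Finset V) : Set V) := by
    have hmem : ∀ p ∈ ((insert x R : Finset V) : Set V), p ∈ s ∧ p ≠ y := by
      intro p hp
      rcases Finset.mem_insert.1 hp with rfl | hp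
      exacts [⟨hxs, hxy.ne⟩, ⟨hRs hp, fun h => hyR (h ▸ hp)⟩]
    refine hP.of_contraction (fun p => if p = x then {x, y} else {p}) ?_ ?_ ?_
    · intro p hp
      by_cases hpx : p = x
      · rw [if_pos hpx]
        exact ⟨Set.pair_subset hxs hys, Conn.pair (Or.inr hxy)⟩
      · rw [if_neg hpx]
        exact ⟨Set.singleton_subset_iff.2 (hmem p hp).1, Conn.singleton _⟩
    · intro p hp q hq hpq
      have h1 := (hmem p hp).2
      have h2 := (hmem q hq).2
      rw [Set.disjoint_left]
      by_cases hpx : p = x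
      · have hqx : q ≠ x := fun h => hpq (hpx.trans h.symm)
        rw [if_pos hpx, if_neg hqx]
        rintro u (rfl | rfl) h
        exacts [hqx h.symm, h2 h.symm]
      · rw [if_neg hpx]
        rintro u rfl h
        by_cases hqx : q = x
        · rw [if_pos hqx] at h
          rcases h with h | h
          exacts [hpx h, h1 h]
        · rw [if_neg hqx] at h
          exact hpq h
    · rintro p hp q hq ⟨hpq, h⟩
      have hself : ∀ p : V, p ∈ (if p = x then {x, y} else {p} : Set V) := by
        intro p
        split_ifs with h
        exacts [Or.inl h, rfl]
      have hyB : y ∈ (if x = x then {x, y} else {x} : Set V) := by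
        rw [if_pos rfl]; exact Or.inr rfl
      rcases h with h | ⟨rfl, h⟩ | ⟨rfl, h⟩
      exacts [⟨p, hself p, q, hself q, h⟩, ⟨y, hyB, q, hself q, h⟩, ⟨p, hself p, y, hyB, h⟩]
  have h1 := ih (insert x R).card (by omega) (contractEdge G x y) (insert x R) rfl (by omega) hP'
  have h2 := numD_numT_contract G hxy hxR hyR
  rw [← hsR] at h2
  have h3 : 2 < (pages G R x y).card := by
    have e : ((insert x R).card : ℤ) + 1 = s.card := by exact_mod_cast hRcard.trans hn.symm
    have : (2 : ℤ) < (pages G R x y).card := by linarith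
    exact_mod_cast this
  obtain ⟨p, hp, q, hq, r, hr, hpq, hpr, hqr⟩ := Finset.two_lt_card.1 h3
  have hRs' : (R : Set V) ⊆ (s : Set V) := Finset.coe_subset.2 hRs
  let P : Fin 3 → V × V := ![p, q, r]
  have hPm : ∀ i, P i ∈ pages G R x y := by
    intro i; fin_cases i
    exacts [hp, hq, hr]
  have hPd : ∀ i j k, i ≠ j → i ≠ k → j ≠ k → (P i).1 ≠ (P j).1 ∧ (P i).2 ≠ (P j).2 := by
    have hPi : ∀ i j, i ≠ j → P i ≠ P j := by
      intro i j hij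
      fin_cases i <;> fin_cases j <;> first
        | exact absurd rfl hij
        | exact hpq | exact hpr | exact hqr | exact hpq.symm | exact hpr.symm | exact hqr.symm
    intro i j k hij hik hjk
    refine ⟨hns.pages_fst_ne hP hRs' hxs hys hxR hyR hxy (hPm i) (hPm j) (hPm k) (hPi _ _ hij)
      (hPi _ _ hik) (hPi _ _ hjk), ?_⟩
    have hsw : ∀ i j, i ≠ j → (P i).swap ≠ (P j).swap := fun i j hij h =>
      hPi i j hij (Prod.swap_injective h)
    exact hns.pages_fst_ne hP hRs' hys hxs hyR hxR hxy.symm (swap_mem_pages (hPm i))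
      (swap_mem_pages (hPm j)) (swap_mem_pages (hPm k)) (hsw _ _ hij) (hsw _ _ hik) (hsw _ _ hjk)
  have hPd' : ∀ i j, i ≠ j → (P i).1 ≠ (P j).1 ∧ (P i).2 ≠ (P j).2 := by
    intro i j hij
    obtain ⟨k, hk1, hk2⟩ : ∃ k : Fin 3, i ≠ k ∧ j ≠ k := by
      revert i j; decide
    exact hPd i j k hij hk1 hk2
  have hm := fun i => mem_pages.1 (hPm i)
  refine hns.not_three_pages hP (fun i => (P i).1) (fun i => (P i).2) hxs hys
    (fun i => hRs (hm i).1.1) (fun i => hRs (hm i).1.2) (fun i h => hyR (h ▸ (hm i).1.1))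
    (fun i h => hxR (h ▸ (hm i).1.2)) hxy (fun i => (hm i).2.1) (fun i => (hm i).2.2.1)
    (fun i => (hm i).2.2.2.imp id And.left) (fun i j hij => (hPd' i j hij).1)
    (fun i j hij => (hPd' i j hij).2) ?_
  -- a vertex shared by two pages is adjacent to both `x` and `y`, so both pages are that vertex
  intro i j hij h
  have g1 : (P i).1 = (P i).2 := by
    rcases (hm i).2.2.2 with g | g
    · exact g
    · exact absurd (h ▸ (hm j).2.2.1) g.2.1
  exact (hPd' i j hij).2 (g1.symm.trans h)

end EdgeBoundInduction

/-! ### Planar graphs of girth at least seven -/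

section Girth

open scoped Classical

variable {V : Type*} {G : SimpleGraph V}

lemma no_c3 (hg : 7 ≤ G.girth) {a b c : V} (h1 : G.Adj a b) (h2 : G.Adj b c) (h3 : G.Adj c a) :
    False := by
  have hc : (Walk.cons h3 (.cons h1 (.cons h2 .nil))).IsCycle := by
    rw [Walk.cons_isCycle_iff]
    simp [Walk.cons_isPath_iff, h1.ne, h2.ne, h3.ne, h3.ne', h2.ne']
  have := girth_le_length hc
  simp at this
  omega

lemma no_c4 (hg : 7 ≤ G.girth) {a b c d : V} (hn : [a, b, c, d].Nodup) (h1 : G.Adj a b)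
    (h2 : G.Adj b c) (h3 : G.Adj c d) (h4 : G.Adj d a) : False := by
  simp at hn
  have hc : (Walk.cons h4 (.cons h1 (.cons h2 (.cons h3 .nil)))).IsCycle := by
    rw [Walk.cons_isCycle_iff]
    simp [Walk.cons_isPath_iff, hn]
    grind
  have := girth_le_length hc
  simp at this
  omega

lemma no_c5 (hg : 7 ≤ G.girth) {a b c d e : V} (hn : [a, b, c, d, e].Nodup) (h1 : G.Adj a b)
    (h2 : G.Adj b c) (h3 : G.Adj c d) (h4 : G.Adj d e) (h5 : G.Adj e a) : False := by
  simp at hn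
  have hc : (Walk.cons h5 (.cons h1 (.cons h2 (.cons h3 (.cons h4 .nil))))).IsCycle := by
    rw [Walk.cons_isCycle_iff]
    simp [Walk.cons_isPath_iff, hn]
    grind
  have := girth_le_length hc
  simp at this
  omega

lemma no_c6 (hg : 7 ≤ G.girth) {a b c d e f : V} (hn : [a, b, c, d, e, f].Nodup) (h1 : G.Adj a b)
    (h2 : G.Adj b c) (h3 : G.Adj c d) (h4 : G.Adj d e) (h5 : G.Adj e f) (h6 : G.Adj f a) :
    False := by
  simp at hn
  have hc : (Walk.cons h6 (.cons h1 (.cons h2 (.cons h3 (.cons h4 (.cons h5 .nil)))))).IsCycle := by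
    rw [Walk.cons_isCycle_iff]
    simp [Walk.cons_isPath_iff, hn]
    grind
  have := girth_le_length hc
  simp at this
  omega

/-- The graph on the vertex classes of `π` (named by their images) in which two classes are
adjacent if an edge of `H` joins them. -/
def contractMap (H : SimpleGraph V) (π : V → V) : SimpleGraph V where
  Adj p q := p ≠ q ∧ ∃ u v, π u = p ∧ π v = q ∧ H.Adj u v
  symm := ⟨fun _ _ ⟨h1, u, v, h2, h3, h4⟩ => ⟨h1.symm, v, u, h3, h2, h4.symm⟩⟩
  loopless := ⟨fun _ h => h.1 rfl⟩

/-- A planar graph of girth at least seven has no nonempty subgraph `H` in which every vertex of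
degree at most three is adjacent only to vertices of degree at least four (the set `B`), and is
not of degree one. Such a low vertex is absorbed into one of its neighbors, which yields a
triangle-free minor on `B` of minimum degree at least four. -/
lemma not_planar_of_heavy [Fintype V] {H : SimpleGraph V} (hHG : H ≤ G) (hP : Planar G)
    (hg : 7 ≤ G.girth) (B : Finset V)
    (hB : ∀ p ∈ B, 4 ≤ (Finset.univ.filter (H.Adj p)).card)
    (hlow : ∀ u v, H.Adj u v → u ∉ B → v ∈ B)
    (hdeg : ∀ u v, H.Adj u v → u ∉ B → ∃ w, H.Adj u w ∧ w ≠ v) (hBne : B.Nonempty) : False := by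
  let π : V → V := fun u => if h : u ∉ B ∧ ∃ v, H.Adj u v then h.2.choose else u
  have hπB : ∀ u ∈ B, π u = u := fun u hu => dif_neg fun h => h.1 hu
  have hπA : ∀ u v, u ∉ B → H.Adj u v → H.Adj u (π u) ∧ π u ∈ B := by
    intro u v hu huv
    have h : u ∉ B ∧ ∃ v, H.Adj u v := ⟨hu, v, huv⟩
    have e : π u = h.2.choose := dif_pos h
    rw [e]
    exact ⟨h.2.choose_spec, hlow _ _ h.2.choose_spec hu⟩
  have hπI : ∀ u, u ∉ B → (∀ v, ¬ H.Adj u v) → π u = u := fun u hu hn =>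
    dif_neg fun h => hn _ h.2.choose_spec
  set H' := contractMap H π with hH'
  have hfib : ∀ u, π u ∈ B → u = π u ∨ H.Adj u (π u) := by
    intro u hu
    by_cases huB : u ∈ B
    · exact Or.inl (hπB u huB).symm
    · by_cases h : ∃ v, H.Adj u v
      · exact Or.inr (hπA u _ huB h.choose_spec).1
      · push Not at h
        exact Or.inl (hπI u huB h).symm
  have hP' : PlanarIn H' (B : Set V) := by
    have hPG : PlanarIn G Set.univ := ⟨fun h => hP.1 h.hasMinor, fun h => hP.2 h.hasMinor⟩
    refine hPG.of_contraction (fun p => {u | π u = p}) ?_ ?_ ?_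
    · intro p hp
      refine ⟨Set.subset_univ _, ⟨p, hπB p hp⟩, ?_⟩
      rintro C hC ⟨c, hc⟩ hcl u hu
      have hstar : ∀ w, π w = p → w = p ∨ H.Adj w p := by
        rintro w rfl
        exact hfib w hp
      have hpC : p ∈ C := by
        rcases hstar c (hC hc) with rfl | h
        exacts [hc, hcl c hc p (hπB p hp) (hHG h)]
      rcases hstar u hu with rfl | h
      exacts [hpC, hcl p hpC u hu (hHG h.symm)]
    · intro p _ q _ hpq
      exact Set.disjoint_left.2 fun u (hu : π u = p) (hu' : π u = q) => hpq (hu.symm.trans hu')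
    · rintro p - q - ⟨-, u, v, hu, hv, huv⟩
      exact ⟨u, hu, v, hv, hHG huv⟩
  -- an edge of the minor comes from an edge of `H` or from a path through a low vertex
  have hedge : ∀ p ∈ B, ∀ q ∈ B, H'.Adj p q → H.Adj p q ∨
      ∃ m, m ∉ B ∧ H.Adj p m ∧ H.Adj m q ∧ (π m = p ∨ π m = q) := by
    rintro p hp q hq ⟨hpq, u, v, hu, hv, huv⟩
    by_cases huB : u ∈ B
    · have e : u = p := (hπB u huB).symm.trans hu
      subst e
      by_cases hvB : v ∈ B
      · have e : v = q := (hπB v hvB).symm.trans hv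
        subst e
        exact Or.inl huv
      · have := (hπA v u hvB huv.symm).1
        rw [hv] at this
        exact Or.inr ⟨v, hvB, huv, this, Or.inr hv⟩
    · have hvB := hlow u v huv huB
      have e : v = q := (hπB v hvB).symm.trans hv
      subst e
      have := (hπA u v huB huv).1
      rw [hu] at this
      exact Or.inr ⟨u, huB, this.symm, huv, Or.inl hu⟩
  have hne : ∀ p ∈ B, ∀ m, m ∉ B → p ≠ m := fun p hp m hm h => hm (h ▸ hp)
  have hcommon : ∀ p ∈ B, ∀ q ∈ B, H'.Adj p q → ∀ m, m ∉ B → H.Adj p m → H.Adj m q →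
      π m = p ∨ π m = q := by
    intro p hp q hq hpq m hm h1 h2
    rcases hedge p hp q hq hpq with h | ⟨m', hm', h3, h4, h5⟩
    · exact (no_c3 hg (hHG h1) (hHG h2) (hHG h.symm)).elim
    · by_cases hmm : m = m'
      · exact hmm ▸ h5
      · refine (no_c4 hg (a := p) (b := m) (c := q) (d := m') ?_ (hHG h1) (hHG h2) (hHG h4.symm)
          (hHG h3.symm)).elim
        simp [hpq.ne, hmm, hne p hp m hm, hne p hp m' hm', (hne q hq m hm).symm, hne q hq m' hm']
  have htri : ∀ p ∈ B, ∀ q ∈ B, ∀ r ∈ B, H'.Adj p q → H'.Adj q r → H'.Adj r p → False := by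
    intro p hp q hq r hr hpq hqr hrp
    have h3 : ∀ m, m ∉ B → H.Adj p m → H.Adj q m → H.Adj r m → False := by
      intro m hm h1 h2 h3
      have n1 := hpq.ne
      have n2 := hqr.ne
      have n3 := hrp.ne
      rcases hcommon p hp q hq hpq m hm h1 h2.symm with e | e <;>
      rcases hcommon q hq r hr hqr m hm h2 h3.symm with e' | e' <;>
      rcases hcommon r hr p hp hrp m hm h3 h1.symm with e'' | e'' <;>
      rw [e] at e' e'' <;> first | exact n1 e' | exact n2 e' | exact n3 e'.symm | exact n1 e''.symm | exact n2 e''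
    have hx := fun v hv m hm => hne v hv m hm
    rcases hedge p hp q hq hpq with a | ⟨m1, hm1, a1, a2, -⟩ <;>
    rcases hedge q hq r hr hqr with b | ⟨m2, hm2, b1, b2, -⟩ <;>
    rcases hedge r hr p hp hrp with c | ⟨m3, hm3, c1, c2, -⟩
    · exact no_c3 hg (hHG a) (hHG b) (hHG c)
    · refine no_c4 hg ?_ (hHG a) (hHG b) (hHG c1) (hHG c2)
      simp [hpq.ne, hqr.ne, hrp.ne', hne _ hp _ hm3, hne _ hq _ hm3, hne _ hr _ hm3]
    · refine no_c4 hg ?_ (hHG a) (hHG b1) (hHG b2) (hHG c)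
      simp [hpq.ne, hqr.ne, hrp.ne', hne _ hp _ hm2, hne _ hq _ hm2, (hne _ hr _ hm2).symm]
    · have n23 : m2 ≠ m3 := fun h => h3 m2 hm2 (h ▸ c2.symm) b1 b2.symm
      refine no_c5 hg ?_ (hHG a) (hHG b1) (hHG b2) (hHG c1) (hHG c2)
      simp [hpq.ne, hqr.ne, hrp.ne', hne _ hp _ hm2, hne _ hq _ hm2, (hne _ hr _ hm2).symm,
        hne _ hp _ hm3, hne _ hq _ hm3, hne _ hr _ hm3, n23]
    · refine no_c4 hg ?_ (hHG a1) (hHG a2) (hHG b) (hHG c)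
      simp [hpq.ne, hqr.ne, hrp.ne', hne _ hp _ hm1, (hne _ hq _ hm1).symm, (hne _ hr _ hm1).symm]
    · have n13 : m1 ≠ m3 := fun h => h3 m1 hm1 a1 a2.symm (h ▸ c1)
      refine no_c5 hg ?_ (hHG a1) (hHG a2) (hHG b) (hHG c1) (hHG c2)
      simp [hpq.ne, hqr.ne, hrp.ne', hne _ hp _ hm1, (hne _ hq _ hm1).symm, (hne _ hr _ hm1).symm,
        hne _ hp _ hm3, hne _ hq _ hm3, hne _ hr _ hm3, n13]
    · have n12 : m1 ≠ m2 := fun h => h3 m1 hm1 a1 a2.symm (h ▸ b2.symm)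
      refine no_c5 hg ?_ (hHG a1) (hHG a2) (hHG b1) (hHG b2) (hHG c)
      simp [hpq.ne, hqr.ne, hrp.ne', hne _ hp _ hm1, (hne _ hq _ hm1).symm, (hne _ hr _ hm1).symm,
        hne _ hp _ hm2, hne _ hq _ hm2, (hne _ hr _ hm2).symm, n12]
    · have n12 : m1 ≠ m2 := fun h => h3 m1 hm1 a1 a2.symm (h ▸ b2.symm)
      have n13 : m1 ≠ m3 := fun h => h3 m1 hm1 a1 a2.symm (h ▸ c1)
      have n23 : m2 ≠ m3 := fun h => h3 m2 hm2 (h ▸ c2.symm) b1 b2.symm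
      refine no_c6 hg ?_ (hHG a1) (hHG a2) (hHG b1) (hHG b2) (hHG c1) (hHG c2)
      simp [hpq.ne, hqr.ne, hrp.ne', hne _ hp _ hm1, (hne _ hq _ hm1).symm, (hne _ hr _ hm1).symm,
        hne _ hp _ hm2, hne _ hq _ hm2, (hne _ hr _ hm2).symm,
        hne _ hp _ hm3, hne _ hq _ hm3, hne _ hr _ hm3, n12, n13, n23]
  -- every neighbor `u` of `p` leads to a neighbor of `p` in the minor
  have hmin : ∀ p ∈ B, 4 ≤ (B.filter (H'.Adj p)).card := by
    intro p hp
    have hφ : ∀ u, H.Adj p u → ∃ w ∈ B, H'.Adj p w ∧ (u = w ∨ H.Adj u w) := by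
      intro u hpu
      by_cases huB : u ∈ B
      · exact ⟨u, huB, ⟨hpu.ne, p, u, hπB p hp, hπB u huB, hpu⟩, Or.inl rfl⟩
      · by_cases hup : π u = p
        · obtain ⟨w, huw, hwp⟩ := hdeg u p hpu.symm huB
          have hwB := hlow u w huw huB
          exact ⟨w, hwB, ⟨hwp.symm, u, w, hup, hπB w hwB, huw⟩, Or.inr huw⟩
        · obtain ⟨g1, g2⟩ := hπA u p huB hpu.symm
          exact ⟨π u, g2, ⟨fun h => hup h.symm, p, u, hπB p hp, rfl, hpu⟩, Or.inr g1⟩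
    choose! φ hφ1 hφ2 hφ3 using hφ
    refine (hB p hp).trans ?_
    refine Finset.card_le_card_of_injOn φ ?_ ?_
    · intro u hu
      have hu' : H.Adj p u := by simpa using hu
      simp [hφ1 u hu', hφ2 u hu']
    · intro u hu u' hu' heq
      have h1 : H.Adj p u := by simpa using hu
      have h2 : H.Adj p u' := by simpa using hu'
      have g1 := hφ3 u h1
      have g2 := hφ3 u' h2
      have g3 := (hφ2 u h1).ne
      rw [← heq] at g2
      by_contra hne'
      rcases g1 with g1 | g1 <;> rcases g2 with g2 | g2
      · exact hne' (g1.trans g2.symm)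
      · rw [← g1] at g2
        exact no_c3 hg (hHG h1) (hHG g2.symm) (hHG h2.symm)
      · rw [← g2] at g1
        exact no_c3 hg (hHG h1) (hHG g1) (hHG h2.symm)
      · refine no_c4 hg ?_ (hHG h1) (hHG g1) (hHG g2.symm) (hHG h2.symm)
        simp [h1.ne, g3, h2.ne, g1.ne, hne', g2.ne']
  obtain ⟨p, hp⟩ := hBne
  have hB4 : 4 ≤ B.card := (hmin p hp).trans (Finset.card_filter_le _ _)
  have hΩ := numD_le_of_planarIn B.card H' B rfl hB4 hP'
  have hT : numT H' B = 0 := by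
    unfold numT
    rw [Finset.filter_false_of_mem]
    · simp
    · rintro ⟨u, v, w⟩ huv ⟨h1, h2, h3⟩
      simp only [Finset.mem_product] at huv
      exact htri u huv.1 v huv.2.1 w huv.2.2 h1 h2 h3
  have hD : 4 * (B.card : ℤ) ≤ numD H' B := by
    rw [numD_eq_sum]
    have : ∀ u ∈ B, (4 : ℤ) ≤ ∑ v ∈ B, adjI H' u v := by
      intro u hu
      unfold adjI
      rw [← Finset.sum_filter, Finset.sum_const, nsmul_one]
      exact_mod_cast hmin u hu
    have := Finset.card_nsmul_le_sum B _ _ this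
    simpa [mul_comm] using this
  linarith

lemma conflicts_card {ι α : Type*} {ends : ι → Sym2 α} {E : Finset ι} {e : ι} (he : e ∈ E)
    {a b : α} (hab : ends e = s(a, b)) :
    (E.filter (fun e' => e' ≠ e ∧ Meet ends e' e)).card + 2 ≤
      (E.filter (fun e' => a ∈ ends e')).card + (E.filter (fun e' => b ∈ ends e')).card := by
  have h1 := (Finset.card_le_card (conflicts_subset (E := E) hab)).trans
    (Finset.card_union_le _ _)
  have h2 := Finset.card_erase_add_one
    (Finset.mem_filter.2 ⟨he, by simp [hab]⟩ : e ∈ E.filter (fun e' => a ∈ ends e'))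
  have h3 := Finset.card_erase_add_one
    (Finset.mem_filter.2 ⟨he, by simp [hab]⟩ : e ∈ E.filter (fun e' => b ∈ ends e'))
  omega

/-- Every nonempty, properly `t`-colorable set of edges of a planar graph of girth at least seven
contains an edge with fewer than `t` conflicts. -/
lemma exists_few_conflicts [Fintype V] (hP : Planar G) (hg : 7 ≤ G.girth) {t : ℕ} (ht : 5 ≤ t)
    {F : Finset (Sym2 V)} (hF : ∀ e ∈ F, e ∈ G.edgeSet) (hne : F.Nonempty) {f : Sym2 V → ℕ}
    (hf : ProperOn (fun e : Sym2 V => e) F t f) :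
    ∃ e ∈ F, (F.filter (fun e' => e' ≠ e ∧ Meet (fun e : Sym2 V => e) e' e)).card < t := by
  by_contra hcon
  push Not at hcon
  set d : V → ℕ := fun x => (F.filter (fun e => x ∈ e)).card with hd
  have hdt : ∀ x, d x ≤ t := hf.deg_le
  have hsum : ∀ a b, s(a, b) ∈ F → t + 2 ≤ d a + d b := by
    intro a b he
    have h1 := conflicts_card (ends := fun e : Sym2 V => e) he (a := a) (b := b) rfl
    refine (Nat.add_le_add_right (hcon _ he) 2).trans ((le_of_eq ?_).trans (h1.trans (le_of_eq ?_)))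
    · congr!
    · simp only [hd]
  let H : SimpleGraph V :=
    { Adj := fun a b => s(a, b) ∈ F
      symm := ⟨fun a b h => by rwa [Sym2.eq_swap]⟩
      loopless := ⟨fun a h => (G.mem_edgeSet.1 (hF _ h)).ne rfl⟩ }
  have hHd : ∀ x, d x = (Finset.univ.filter (H.Adj x)).card := by
    intro x
    symm
    refine Finset.card_bij (fun y _ => s(x, y)) ?_ ?_ ?_
    · intro y hy
      have hy' : s(x, y) ∈ F := (Finset.mem_filter.1 hy).2
      exact Finset.mem_filter.2 ⟨hy', by simp⟩
    · intro y _ z _ h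
      exact Sym2.congr_right.1 h
    · intro e he
      obtain ⟨h1, h2⟩ := Finset.mem_filter.1 he
      obtain ⟨y, rfl⟩ := Sym2.mem_iff_exists.1 h2
      exact ⟨y, Finset.mem_filter.2 ⟨Finset.mem_univ _, h1⟩, rfl⟩
  obtain ⟨a, b, hab⟩ : ∃ a b, s(a, b) ∈ F := by
    obtain ⟨e, he⟩ := hne
    induction e with
    | _ a b => exact ⟨a, b, he⟩
  refine not_planar_of_heavy (H := H) (fun a b h => hF _ h) hP hg
    (Finset.univ.filter (fun x => 4 ≤ d x)) ?_ ?_ ?_ ?_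
  · intro p hp
    have h1 := (Finset.mem_filter.1 hp).2
    rw [hHd] at h1
    convert h1
  · intro u v huv hu
    have hu' : ¬ 4 ≤ d u := fun h => hu (Finset.mem_filter.2 ⟨Finset.mem_univ _, h⟩)
    have := hsum u v huv
    exact Finset.mem_filter.2 ⟨Finset.mem_univ _, by omega⟩
  · intro u v huv _
    have h1 := hsum u v huv
    have h2 := hdt v
    have h3 : 1 < (Finset.univ.filter (H.Adj u)).card := by
      have := hHd u
      omega
    obtain ⟨w, hw, hwv⟩ := Finset.exists_mem_ne h3 v
    exact ⟨w, (Finset.mem_filter.1 hw).2, hwv⟩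
  · have := hsum a b hab
    by_cases h : 4 ≤ d a
    · exact ⟨a, Finset.mem_filter.2 ⟨Finset.mem_univ _, h⟩⟩
    · exact ⟨b, Finset.mem_filter.2 ⟨Finset.mem_univ _, by omega⟩⟩

end Girth

/-! ### From recoloring steps to equivalent colorings -/

section Assemble

open scoped Classical

variable {G : SimpleGraph V}

lemma properOn_iff [Fintype V] {t : ℕ} {f : Sym2 V → ℕ} :
    ProperOn (fun e : Sym2 V => e) G.edgeFinset t f ↔ IsProperEdgeColoring G t f := by
  simp only [ProperOn, IsProperEdgeColoring, Meet, SimpleGraph.mem_edgeFinset]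

lemma differAtMost_of_step [Fintype V] {t : ℕ} {f g : Sym2 V → ℕ}
    (h : Step (fun e : Sym2 V => e) G.edgeFinset t f g) : DifferAtMost G 4 f g := by
  obtain ⟨T, -, hT, -, -, h⟩ := h
  have hsub : {j : ℕ | colorClass G f j ≠ colorClass G g j} ⊆ (T : Set ℕ) := by
    intro j hj
    by_contra hjT
    refine hj (Set.ext fun e => and_congr_right fun he => ?_)
    rcases h e (SimpleGraph.mem_edgeFinset.2 he) with h | ⟨h1, h2⟩
    · rw [h]
    · exact ⟨fun h => (hjT (h ▸ h1)).elim, fun h => (hjT (h ▸ h2)).elim⟩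
  calc _ ≤ (T : Set ℕ).ncard := Set.ncard_le_ncard hsub T.finite_toSet
    _ ≤ 4 := by rwa [Set.ncard_coe_finset]

lemma NEquiv.of_eqv [Fintype V] {t : ℕ} {f g : Sym2 V → ℕ} (hf : IsProperEdgeColoring G t f)
    (h : Eqv (fun e : Sym2 V => e) G.edgeFinset t f g) : NEquiv G t 4 f g := by
  induction h with
  | refl => exact ⟨1, fun _ => f, le_rfl, rfl, rfl, fun _ _ => hf, fun _ _ => by
      simp [DifferAtMost]⟩
  | @tail g h _ hs ih =>
    obtain ⟨k, F, hk, h0, hFk, hp, hd⟩ := ih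
    have hh : IsProperEdgeColoring G t h := by
      obtain ⟨_, _, _, _, h2, _⟩ := hs
      exact properOn_iff.1 h2
    refine ⟨k + 1, fun i => if i ≤ k then F i else h, by omega, by simpa using h0, by simp, ?_, ?_⟩
    · intro i _
      by_cases hi : i ≤ k
      · simpa [hi] using hp i hi
      · simpa [hi] using hh
    · intro i hi
      rcases (Nat.lt_succ_iff_lt_or_eq.1 hi) with hi | rfl
      · simpa [hi.le, Nat.succ_le_of_lt hi] using hd i hi
      · simpa [hFk] using differAtMost_of_step hs

/-- Deleting an edge with fewer than `t` conflicts reduces the number of edges, so the colorings of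
a planar graph of girth at least seven are handled by induction on the set of edges. -/
lemma eqv_of_planar [Fintype V] (hP : Planar G) (hg : 7 ≤ G.girth) {t : ℕ} (ht : 5 ≤ t) :
    ∀ (F : Finset (Sym2 V)), (∀ e ∈ F, e ∈ G.edgeSet) → ∀ f g,
      ProperOn (fun e : Sym2 V => e) F t f → ProperOn (fun e : Sym2 V => e) F t g →
      Eqv (fun e : Sym2 V => e) F t f g := by
  intro F
  induction F using Finset.strongInduction with
  | H F ih =>
    intro hF f g hf hg'
    rcases F.eq_empty_or_nonempty with rfl | hne
    · exact Step.eqv ⟨∅, by simp, by simp, hf, hg', by simp⟩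
    · obtain ⟨e, he, hc⟩ := exists_few_conflicts hP hg ht hF hne hf
      refine eqv_of_few_conflicts (lt_of_eq_of_lt (by congr!) hc) (fun f g => ih _ (@Finset.erase_ssubset _ (_) _ _ he)
        (fun e' he' => hF e' (@Finset.mem_of_mem_erase _ (_) _ _ _ he')) f g) he hf hg'

lemma nEquiv_four [Fintype V]
    (hG : SeriesParallel G ∨ Chordless G ∨ (Planar G ∧ (7 : ℕ∞) ≤ G.girth)) (t : ℕ)
    (f g : Sym2 V → ℕ) (hf : IsProperEdgeColoring G t f) (hg : IsProperEdgeColoring G t g) :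
    NEquiv G t 4 f g := by
  refine NEquiv.of_eqv hf ?_
  have hf' := properOn_iff.2 hf
  have hg' := properOn_iff.2 hg
  by_cases ht : t ≤ 4
  · exact eqv_of_le_four ht hf' hg'
  have ht' : 5 ≤ t := by omega
  have htwo : SeriesParallel G ∨ Chordless G →
      Eqv (fun e : Sym2 V => e) G.edgeFinset t f g := by
    intro h
    have h2 := twoDeg_of_seriesParallel_or_chordless h
    refine eqv_of_twoDeg ht' _ _ _ rfl ?_ f g hf' hg'
    convert h2
  rcases hG with h | h | ⟨h1, h2⟩
  · exact htwo (Or.inl h)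
  · exact htwo (Or.inr h)
  · exact eqv_of_planar h1 (by exact_mod_cast h2) ht' _
      (fun e he => SimpleGraph.mem_edgeFinset.1 he) f g hf' hg'

end Assemble

/-- If `G` is series-parallel, chordless, or planar of girth at least 7,
then `χ'_trans(G) ≤ 4`. -/
theorem edge_chromatic_transformation_index_le_four
    {V : Type*} [Fintype V] (G : SimpleGraph V)
    (hG : SeriesParallel G ∨ Chordless G ∨ (Planar G ∧ (7 : ℕ∞) ≤ G.girth)) :
    transIdx G ≤ 4 ∧
    ∀ f g, IsProperEdgeColoring G (chromIdx G) f → IsProperEdgeColoring G (chromIdx G) g →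
      NEquiv G (chromIdx G) 4 f g :=
  ⟨Nat.sInf_le ⟨by norm_num, nEquiv_four hG _⟩, nEquiv_four hG _⟩

end EdgeTrans
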